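/- arXiv:1010.0382 — 2 statements merged into one kernel-verified Lean document; each statement's English description precedes it below -/
import Mathlib

section
/- (Chiodo) The embedding search problem is algorithmically unsolvable: there is no computable function F : (ℕ × List (List (ℕ × Bool))) × (ℕ × List (List (ℕ × Bool))) → List (List (ℕ × Bool)) such that for every pair of encoded finite presentations (P₁, P₂) for which there exists an injective group homomorphism G_{P₁} →* G_{P₂}, there exists an injective homomorphism φ : G_{P₁} →* G_{P₂} satisfying φ (π_{P₁} (FreeGroup.of i)) = π_{P₂} (FreeGroup.mk ((F (P₁, P₂)).getD i [])) for every i : ℕ. (That is, no algorithm can output words that describe an explicit embedding on the generators, even given the promise that an embedding exists.) -/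
/-- The set of relators of the finite presentation encoded by
`P = (n, L) : ℕ × List (List (ℕ × Bool))`: the words in `L`, together with all
generators `FreeGroup.of i` for `i ≥ n`. -/
def presRels (P : ℕ × List (List (ℕ × Bool))) : Set (FreeGroup ℕ) :=
  {r | ∃ w ∈ P.2, r = FreeGroup.mk w} ∪ {r | ∃ i : ℕ, P.1 ≤ i ∧ r = FreeGroup.of i}

/-- The group presented by an encoded finite presentation. -/
def presGroup (P : ℕ × List (List (ℕ × Bool))) : Type :=
  PresentedGroup (presRels P)

instance (P : ℕ × List (List (ℕ × Bool))) : Group (presGroup P) :=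
  inferInstanceAs (Group (PresentedGroup (presRels P)))

/-- The canonical projection from the free group to the presented group. -/
def presProj (P : ℕ × List (List (ℕ × Bool))) : FreeGroup ℕ →* presGroup P :=
  PresentedGroup.mk (presRels P)

/-!
Fix a partial recursive `f` that meets every computable function. For `e : ℕ` and `b : Bool` we
construct, computably in `e`, a finitely presented group `U e b` that is free if `f e = b`, while
for every `e` one of `U e false` and `U e true` contains an involution. The group of order two
hence embeds in the free product `U e false * U e true`, and an algorithm solving the embedding
search problem outputs a word for an involution of it. Torsion elements of a free product are
conjugate into a factor, so exactly one of the two retractions kills this involution. Triviality of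
a word is semidecidable, so we can compute the factor `d e` whose retraction does not kill it. If
`f e = b`, then `U e b` is torsion-free and `d e ≠ b`, so `d` never meets `f`: a contradiction.

For `U e b`, a stack machine computing `f` is simulated by an affine system on `ℤ ^ ι`, the stacks
being coded as numerals. The moves of the system become relations `r t_a r⁻¹ = t_c` between the
conjugates `t_a = x ^ a * t * x ^ (-a)` of a letter `t`, where each `r` commutes with a letter `k`.
If `k` is also made to commute with `t_a` for the starting point `a`, then `w = ⁅k, t_p⁆` is
trivial when the system leads from `a` to `p`; otherwise a model by permutations, in which the
generators may be taken to be products of four conjugates of an involution, has `w ≠ 1`.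
Adding `w ^ 2 = 1` and replacing each generator by a product of four conjugates of `w` by new
letters gives a group that is free on the new letters in the first case and contains the involution
`w` in the second.
-/

namespace EmbeddingSearch

open Monoid
open scoped commutatorElement

section Torsion

variable {ι : Type*} {G : ι → Type*} [∀ i, Group (G i)]

/-- The element of the free product spelled by a list of letters that need not be reduced. -/
def letterProd (l : List (Σ i, G i)) : CoprodI G :=
  (l.map fun s => CoprodI.of s.2).prod

theorem letterProd_cons (s : Σ i, G i) (l : List (Σ i, G i)) :
    letterProd (s :: l) = CoprodI.of s.2 * letterProd l := by
  simp [letterProd]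

theorem letterProd_append (l l' : List (Σ i, G i)) :
    letterProd (l ++ l') = letterProd l * letterProd l' := by
  simp [letterProd]

theorem letterProd_flatten_replicate (n : ℕ) (l : List (Σ i, G i)) :
    letterProd (List.replicate n l).flatten = letterProd l ^ n := by
  induction n with
  | zero => simp [letterProd]
  | succ n ih =>
    rw [List.replicate_succ, List.flatten_cons, letterProd_append, ih, pow_succ']

theorem letterProd_surjective : Function.Surjective (letterProd (G := G)) := fun g => by
  classical
  exact ⟨(CoprodI.Word.equiv g).toList, CoprodI.Word.equiv.symm_apply_apply g⟩

/-- A spelling is cyclically minimal if no shorter one spells a conjugate of the same element.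
The property passes to cyclic rotations, and it makes the spelling cyclically reduced. -/
def IsCyclicallyMinimal (l : List (Σ i, G i)) : Prop :=
  ∀ l' : List (Σ i, G i), IsConj (letterProd l) (letterProd l') → l.length ≤ l'.length

theorem exists_isCyclicallyMinimal_isConj (g : CoprodI G) :
    ∃ l, IsCyclicallyMinimal l ∧ IsConj g (letterProd l) := by
  obtain ⟨l₀, rfl⟩ := letterProd_surjective g
  obtain ⟨l, hl, hmin⟩ := WellFounded.has_min (measure List.length).wf
    {l | IsConj (letterProd l₀) (letterProd l)} ⟨l₀, IsConj.refl _⟩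
  exact ⟨l, fun l' hl' => not_lt.1 (hmin l' (hl.trans hl')), hl⟩

theorem isConj_letterProd_append_comm (l l' : List (Σ i, G i)) :
    IsConj (letterProd (l ++ l')) (letterProd (l' ++ l)) :=
  isConj_iff.2 ⟨(letterProd l)⁻¹, by rw [letterProd_append, letterProd_append]; group⟩

namespace IsCyclicallyMinimal

variable {l l' : List (Σ i, G i)} {s s' : Σ i, G i}

theorem append_comm (h : IsCyclicallyMinimal (l ++ l')) : IsCyclicallyMinimal (l' ++ l) :=
  fun k hk => by
    simpa [add_comm] using h k ((isConj_letterProd_append_comm l l').trans hk)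

theorem snd_ne_one (h : IsCyclicallyMinimal (s :: l)) : s.2 ≠ 1 := fun hs => by
  have hdrop : letterProd (s :: l) = letterProd l := by
    rw [letterProd_cons, hs, map_one, one_mul]
  simpa using h l (hdrop ▸ IsConj.refl _)

theorem fst_ne (h : IsCyclicallyMinimal (s :: s' :: l)) : s.1 ≠ s'.1 := fun hs => by
  obtain ⟨i, x⟩ := s
  obtain ⟨_, y⟩ := s'
  subst hs
  have hmerge : letterProd (⟨i, x⟩ :: ⟨i, y⟩ :: l) = letterProd (⟨i, x * y⟩ :: l) := by
    simp only [letterProd_cons, map_mul, mul_assoc]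
  simpa using h (⟨i, x * y⟩ :: l) (hmerge ▸ IsConj.refl _)

theorem snd_ne_one_of_mem (h : IsCyclicallyMinimal l) (hs : s ∈ l) : s.2 ≠ 1 := by
  obtain ⟨l₁, l₂, rfl⟩ := List.append_of_mem hs
  exact h.append_comm.snd_ne_one

theorem isChain (h : IsCyclicallyMinimal l) : l.IsChain fun s s' => s.1 ≠ s'.1 := by
  refine List.isChain_iff_forall_rel_of_append_cons_cons.2 fun s s' l₁ l₂ hl => ?_
  subst hl
  exact h.append_comm.fst_ne

theorem fst_getLast_ne_fst_head (h : IsCyclicallyMinimal l) (hlen : 2 ≤ l.length)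
    (hs : s ∈ l.getLast?) (hs' : s' ∈ l.head?) : s.1 ≠ s'.1 := by
  obtain ⟨l, rfl⟩ := List.getLast?_eq_some_iff.1 hs
  match l, hlen with
  | a :: l, _ =>
    obtain rfl : a = s' := by simpa using hs'
    exact IsCyclicallyMinimal.fst_ne (h.append_comm (l := a :: l))

theorem isChain_flatten_replicate (h : IsCyclicallyMinimal l) (hlen : 2 ≤ l.length) (n : ℕ) :
    (List.replicate n l).flatten.IsChain fun s s' => s.1 ≠ s'.1 := by
  have hne : [] ∉ List.replicate n l := fun hmem => by
    simp [← List.eq_of_mem_replicate hmem] at hlen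
  refine (List.isChain_flatten hne).2
    ⟨fun k hk => (List.eq_of_mem_replicate hk) ▸ h.isChain, ?_⟩
  exact List.isChain_replicate_of_rel n fun s hs s' hs' => h.fst_getLast_ne_fst_head hlen hs hs'

theorem not_isOfFinOrder (h : IsCyclicallyMinimal l) (hlen : 2 ≤ l.length) :
    ¬ IsOfFinOrder (letterProd l) := by
  classical
  rw [isOfFinOrder_iff_pow_eq_one]
  rintro ⟨n, hn, hpow⟩
  let w : CoprodI.Word G :=
    { toList := (List.replicate n l).flatten
      ne_one := fun s hs => by
        obtain ⟨k, hk, hsk⟩ := List.mem_flatten.1 hs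
        exact h.snd_ne_one_of_mem (List.eq_of_mem_replicate hk ▸ hsk)
      chain_ne := h.isChain_flatten_replicate hlen n }
  have hw : w = CoprodI.Word.empty := CoprodI.Word.equiv.symm.injective <|
    (letterProd_flatten_replicate n l).trans hpow
  have hlength := congrArg (fun v => v.toList.length) hw
  simp only [w, List.length_flatten, List.map_replicate, List.sum_replicate, smul_eq_mul,
    CoprodI.Word.empty_toList, List.length_nil, mul_eq_zero] at hlength
  lia

end IsCyclicallyMinimal

theorem exists_isConj_of_of_isOfFinOrder {g : CoprodI G} (hg : IsOfFinOrder g) (hne : g ≠ 1) :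
    ∃ (i : ι) (m : G i), IsConj g (CoprodI.of m) := by
  obtain ⟨l, hl, hgl⟩ := exists_isCyclicallyMinimal_isConj g
  match l with
  | [] => exact absurd (isConj_one_left.1 hgl) hne
  | [s] => exact ⟨s.1, s.2, by simpa [letterProd] using hgl⟩
  | s :: s' :: l =>
    obtain ⟨c, hc⟩ := isConj_iff.1 hgl
    exact absurd (hc ▸ (MulAut.conj c).toMonoidHom.isOfFinOrder hg)
      (hl.not_isOfFinOrder (by simp))

/-- The retraction of a free product onto one of its factors, killing all the others. -/
def retraction [DecidableEq ι] (i : ι) : CoprodI G →* G i :=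
  CoprodI.lift (Pi.mulSingle i (MonoidHom.id (G i)))

variable [DecidableEq ι]

theorem retraction_of_self {i : ι} (m : G i) : retraction i (CoprodI.of m) = m :=
  CoprodI.of_leftInverse i m

theorem retraction_of_ne {i j : ι} (hij : i ≠ j) (m : G i) :
    retraction j (CoprodI.of m) = 1 := by
  simp [retraction, Pi.mulSingle_eq_of_ne hij]

theorem exists_retraction_ne_one_of_isOfFinOrder {g : CoprodI G} (hg : IsOfFinOrder g)
    (hne : g ≠ 1) : ∃ i, retraction i g ≠ 1 ∧ ∀ j ≠ i, retraction j g = 1 := by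
  obtain ⟨i, m, hconj⟩ := exists_isConj_of_of_isOfFinOrder hg hne
  refine ⟨i, fun h => hne ?_, fun j hj => ?_⟩
  · have hm : IsConj (retraction i g) m := retraction_of_self m ▸ (retraction i).map_isConj hconj
    obtain rfl : m = 1 := isConj_one_left.1 (h ▸ hm.symm)
    exact isConj_one_left.1 (map_one (CoprodI.of (M := G)) ▸ hconj)
  · have hm := (retraction j).map_isConj hconj
    exact isConj_one_left.1 (retraction_of_ne hj.symm m ▸ hm)

end Torsion

section Presentations

/-- A word in the free group on `ℕ`; the letter `(i, true)` stands for the `i`-th generator and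
`(i, false)` for its inverse. -/
abbrev Word := List (ℕ × Bool)

/-- A code of a finite presentation: a number of generators and a list of relators. -/
abbrev FinPres := ℕ × List Word

variable {H : Type*} [Group H] {P : FinPres}

theorem presProj_surjective (P : FinPres) : Function.Surjective (presProj P) :=
  PresentedGroup.mk_surjective _

theorem presProj_mk_eq_one_of_mem {w : Word} (hw : w ∈ P.2) : presProj P (FreeGroup.mk w) = 1 :=
  PresentedGroup.one_of_mem (Or.inl ⟨w, hw, rfl⟩)

theorem presProj_of_eq_one_of_le {i : ℕ} (hi : P.1 ≤ i) : presProj P (FreeGroup.of i) = 1 :=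
  PresentedGroup.one_of_mem (Or.inr ⟨i, hi, rfl⟩)

theorem presGroup_hom_ext {f g : presGroup P →* H}
    (h : ∀ i, f (presProj P (FreeGroup.of i)) = g (presProj P (FreeGroup.of i))) : f = g :=
  PresentedGroup.ext h

/-- The homomorphism out of a presented group with prescribed values on the generators. -/
def presLift (f : ℕ → H) (hrel : ∀ w ∈ P.2, FreeGroup.lift f (FreeGroup.mk w) = 1)
    (hgen : ∀ i, P.1 ≤ i → f i = 1) : presGroup P →* H :=
  PresentedGroup.toGroup (rels := presRels P) (f := f) <| by
    rintro r (⟨w, hw, rfl⟩ | ⟨i, hi, rfl⟩)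
    · exact hrel w hw
    · simpa using hgen i hi

theorem presLift_presProj (f : ℕ → H) (hrel : ∀ w ∈ P.2, FreeGroup.lift f (FreeGroup.mk w) = 1)
    (hgen : ∀ i, P.1 ≤ i → f i = 1) (x : FreeGroup ℕ) :
    presLift f hrel hgen (presProj P x) = FreeGroup.lift f x :=
  rfl

end Presentations

section WordProblem

/-- The word `z t z⁻¹`. -/
def conjWord (z t : Word) : Word :=
  z ++ t ++ FreeGroup.invRev z

theorem mk_conjWord (z t : Word) :
    FreeGroup.mk (conjWord z t) = FreeGroup.mk z * FreeGroup.mk t * (FreeGroup.mk z)⁻¹ := by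
  rw [FreeGroup.inv_mk, FreeGroup.mul_mk, FreeGroup.mul_mk, conjWord]

/-- An enumeration of the relators of a finite presentation, the listed words coming first. -/
def relatorAt (P : FinPres) (j : ℕ) : Word :=
  if j < P.2.length then P.2.getD j [] else [(P.1 + (j - P.2.length), true)]

theorem presRels_eq_range (P : FinPres) :
    presRels P = Set.range fun j => FreeGroup.mk (relatorAt P j) := by
  ext r
  constructor
  · rintro (⟨w, hw, rfl⟩ | ⟨i, hi, rfl⟩)
    · obtain ⟨j, hj, rfl⟩ := List.getElem_of_mem hw
      exact ⟨j, by simp [relatorAt, hj]⟩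
    · exact ⟨P.2.length + (i - P.1), by simp [relatorAt, FreeGroup.of, Nat.add_sub_cancel' hi]⟩
  · rintro ⟨j, rfl⟩
    by_cases hj : j < P.2.length
    · exact Or.inl ⟨P.2[j], List.getElem_mem hj, by simp [relatorAt, hj]⟩
    · exact Or.inr ⟨P.1 + (j - P.2.length), by lia, by simp [relatorAt, hj, FreeGroup.of]⟩

/-- The relator of index `j`, or its inverse, according to a sign. -/
def signedRelatorAt (P : FinPres) (s : ℕ × Bool) : Word :=
  bif s.2 then relatorAt P s.1 else FreeGroup.invRev (relatorAt P s.1)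

theorem mk_signedRelatorAt_mem (P : FinPres) (s : ℕ × Bool) :
    FreeGroup.mk (signedRelatorAt P s) ∈ Subgroup.normalClosure (presRels P) := by
  have hmem : FreeGroup.mk (relatorAt P s.1) ∈ Subgroup.normalClosure (presRels P) :=
    Subgroup.subset_normalClosure (presRels_eq_range P ▸ Set.mem_range_self s.1)
  obtain ⟨j, _ | _⟩ := s
  · exact FreeGroup.inv_mk (L := relatorAt P j) ▸ inv_mem hmem
  · exact hmem

/-- The product of conjugates of signed relators described by a list of pairs
(conjugator, signed relator). -/
def certifiedWord (P : FinPres) (c : List (Word × ℕ × Bool)) : Word :=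
  c.flatMap fun x => conjWord x.1 (signedRelatorAt P x.2)

theorem mk_certifiedWord_cons (P : FinPres) (z : Word) (s : ℕ × Bool)
    (c : List (Word × ℕ × Bool)) :
    FreeGroup.mk (certifiedWord P ((z, s) :: c)) = FreeGroup.mk z *
      FreeGroup.mk (signedRelatorAt P s) * (FreeGroup.mk z)⁻¹ *
        FreeGroup.mk (certifiedWord P c) := by
  rw [← mk_conjWord, FreeGroup.mul_mk, certifiedWord, certifiedWord, List.flatMap_cons]

theorem mem_normalClosure_presRels_iff (P : FinPres) (x : FreeGroup ℕ) :
    x ∈ Subgroup.normalClosure (presRels P) ↔ ∃ c, FreeGroup.mk (certifiedWord P c) = x := by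
  constructor
  · intro hx
    have hconj : ∀ y ∈ Group.conjugatesOfSet (presRels P), ∃ z j,
        FreeGroup.mk z * FreeGroup.mk (relatorAt P j) * (FreeGroup.mk z)⁻¹ = y := fun y hy => by
      obtain ⟨r, hr, hry⟩ := Group.mem_conjugatesOfSet_iff.1 hy
      obtain ⟨j, rfl⟩ := presRels_eq_range P ▸ hr
      obtain ⟨g, rfl⟩ := isConj_iff.1 hry
      exact ⟨g.toWord, j, by rw [FreeGroup.mk_toWord]⟩
    induction hx using Subgroup.closure_induction_left with
    | one => exact ⟨[], rfl⟩
    | mul_left y hy x _ ih =>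
      obtain ⟨c, rfl⟩ := ih
      obtain ⟨z, j, rfl⟩ := hconj y hy
      exact ⟨(z, j, true) :: c, by rw [mk_certifiedWord_cons, signedRelatorAt, cond_true]⟩
    | inv_mul_cancel y hy x _ ih =>
      obtain ⟨c, rfl⟩ := ih
      obtain ⟨z, j, rfl⟩ := hconj y hy
      refine ⟨(z, j, false) :: c, ?_⟩
      rw [mk_certifiedWord_cons, signedRelatorAt, cond_false, ← FreeGroup.inv_mk]
      group
  · rintro ⟨c, rfl⟩
    induction c with
    | nil => exact one_mem _
    | cons x c ih =>
      rw [mk_certifiedWord_cons]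
      exact mul_mem
        (Subgroup.normalClosure_normal.conj_mem _ (mk_signedRelatorAt_mem P x.2) _) ih

theorem presProj_mk_eq_one_iff (P : FinPres) (w : Word) : presProj P (FreeGroup.mk w) = 1 ↔
    ∃ c, FreeGroup.reduce (certifiedWord P c) = FreeGroup.reduce w := by
  refine PresentedGroup.mk_eq_one_iff.trans ((mem_normalClosure_presRels_iff P _).trans ?_)
  exact exists_congr fun c => ⟨FreeGroup.reduce.sound, FreeGroup.reduce.exact⟩

theorem primrec_invRev : Primrec (FreeGroup.invRev : Word → Word) :=
  Primrec.list_reverse.comp <| Primrec.list_map Primrec.id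
    ((Primrec.fst.pair (Primrec.not.comp Primrec.snd)).comp Primrec.snd).to₂

theorem primrec_conjWord : Primrec₂ conjWord :=
  Primrec.list_append.comp Primrec.list_append (primrec_invRev.comp Primrec.fst)

theorem primrec_relatorAt : Primrec₂ relatorAt := by
  have hlength : Primrec fun z : FinPres × ℕ => z.1.2.length :=
    Primrec.list_length.comp (Primrec.snd.comp Primrec.fst)
  refine Primrec.ite (Primrec.nat_lt.comp Primrec.snd hlength)
    ((Primrec.list_getD []).comp (Primrec.snd.comp Primrec.fst) Primrec.snd) ?_
  exact Primrec.list_cons.comp (Primrec.pair (Primrec.nat_add.comp (Primrec.fst.comp Primrec.fst)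
    (Primrec.nat_sub.comp Primrec.snd hlength)) (Primrec.const true)) (Primrec.const [])

theorem primrec_signedRelatorAt : Primrec₂ signedRelatorAt := by
  have hrel : Primrec fun z : FinPres × ℕ × Bool => relatorAt z.1 z.2.1 :=
    primrec_relatorAt.comp Primrec.fst (Primrec.fst.comp Primrec.snd)
  exact Primrec.cond (Primrec.snd.comp Primrec.snd) hrel (primrec_invRev.comp hrel)

theorem primrec_certifiedWord : Primrec₂ certifiedWord :=
  Primrec.list_flatMap Primrec.snd <| (primrec_conjWord.comp (Primrec.fst.comp Primrec.snd)
    (primrec_signedRelatorAt.comp (Primrec.fst.comp Primrec.fst)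
      (Primrec.snd.comp Primrec.snd))).to₂

theorem reduce_eq_foldr (w : Word) : FreeGroup.reduce w = w.foldr (fun x v =>
    List.casesOn v [x] fun y u => if x.1 = y.1 ∧ x.2 = !y.2 then u else x :: y :: u) [] := by
  induction w with
  | nil => rfl
  | cons x w ih => rw [FreeGroup.reduce.cons, List.foldr_cons, ih]

theorem primrec_reduce : Primrec (FreeGroup.reduce : Word → Word) := by
  refine (Primrec.list_foldr Primrec.id (Primrec.const []) (h := fun _ p => List.casesOn p.2 [p.1]
    fun y u => if p.1.1 = y.1 ∧ p.1.2 = !y.2 then u else p.1 :: y :: u) ?_).of_eq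
      fun w => (reduce_eq_foldr w).symm
  have hx : Primrec fun z : (Word × (ℕ × Bool) × Word) × (ℕ × Bool) × Word => z.1.2.1 :=
    Primrec.fst.comp (Primrec.snd.comp Primrec.fst)
  have hy : Primrec fun z : (Word × (ℕ × Bool) × Word) × (ℕ × Bool) × Word => z.2.1 :=
    Primrec.fst.comp Primrec.snd
  have hu : Primrec fun z : (Word × (ℕ × Bool) × Word) × (ℕ × Bool) × Word => z.2.2 :=
    Primrec.snd.comp Primrec.snd
  have hcancel : PrimrecPred fun z : (Word × (ℕ × Bool) × Word) × (ℕ × Bool) × Word =>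
      z.1.2.1.1 = z.2.1.1 ∧ z.1.2.1.2 = !z.2.1.2 :=
    (Primrec.eq.comp (Primrec.fst.comp hx) (Primrec.fst.comp hy)).and
      (Primrec.eq.comp (Primrec.snd.comp hx) (Primrec.not.comp (Primrec.snd.comp hy)))
  exact Primrec.list_casesOn (Primrec.snd.comp Primrec.snd)
    (Primrec.list_cons.comp (Primrec.fst.comp Primrec.snd) (Primrec.const []))
    (Primrec.ite hcancel hu (Primrec.list_cons.comp hx (Primrec.list_cons.comp hy hu))).to₂

theorem rePred_comp {α β : Type*} [Primcodable α] [Primcodable β] {p : β → Prop} (hp : REPred p)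
    {f : α → β} (hf : Computable f) : REPred fun a => p (f a) :=
  Partrec.comp hp hf

theorem rePred_exists {α β : Type*} [Primcodable α] [Primcodable β] {p : α × β → Prop}
    (hp : ComputablePred p) : REPred fun a => ∃ b, p (a, b) := by
  obtain ⟨_, hdec⟩ := hp
  let search : α → ℕ → Option Unit := fun a n =>
    (Encodable.decode (α := β) n).bind fun b => bif decide (p (a, b)) then some () else none
  have hsearch : Computable₂ search :=
    (Computable.decode.comp Computable.snd).option_bind <| Computable.to₂ <|
      Computable.cond (hdec.comp ((Computable.fst.comp Computable.fst).pair Computable.snd))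
        (Computable.const _) (Computable.const _)
  refine (Partrec.rfindOpt hsearch).dom_re.of_eq fun a => Nat.rfindOpt_dom.trans ?_
  constructor
  · rintro ⟨n, _, hn⟩
    obtain ⟨b, -, hb⟩ := Option.bind_eq_some_iff.1 hn
    exact ⟨b, by_contra fun hpb => by simp [hpb] at hb⟩
  · rintro ⟨b, hb⟩
    exact ⟨Encodable.encode b, (), by simp [search, hb]⟩

theorem rePred_presProj_mk_eq_one :
    REPred fun z : FinPres × Word => presProj z.1 (FreeGroup.mk z.2) = 1 := by
  refine (rePred_exists (p := fun z : (FinPres × Word) × List (Word × ℕ × Bool) =>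
    FreeGroup.reduce (certifiedWord z.1.1 z.2) = FreeGroup.reduce z.1.2) ?_).of_eq
      fun z => (presProj_mk_eq_one_iff z.1 z.2).symm
  have hcert : Primrec fun z : (FinPres × Word) × List (Word × ℕ × Bool) =>
      FreeGroup.reduce (certifiedWord z.1.1 z.2) :=
    primrec_reduce.comp (primrec_certifiedWord.comp (Primrec.fst.comp Primrec.fst) Primrec.snd)
  exact PrimrecPred.computablePred
    (Primrec.eq.comp hcert (primrec_reduce.comp (Primrec.snd.comp Primrec.fst)))

end WordProblem

section Involutions

open Cardinal Function

universe u

variable {Ω Ω' : Type u} {f' : Ω' → Ω'} {f : Ω → Ω}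

/-- An involution of a linearly ordered type, in normal form: the fixed points together with the
two-element orbits, each of which is represented by its smaller element. -/
def involutionNormalForm [LinearOrder Ω] (hf : Involutive f) :
    fixedPoints f ⊕ {x // x < f x} × Bool ≃ Ω where
  toFun := Sum.elim (fun x => x) fun z => bif z.2 then f z.1 else z.1
  invFun x :=
    if hx : f x = x then Sum.inl ⟨x, hx⟩
    else if hlt : x < f x then Sum.inr (⟨x, hlt⟩, false)
    else Sum.inr (⟨f x, by rw [hf]; exact lt_of_le_of_ne (not_lt.1 hlt) hx⟩, true)
  left_inv := by
    rintro (⟨x, hx⟩ | ⟨⟨x, hx⟩, _ | _⟩)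
    · simp [mem_fixedPoints_iff.1 hx]
    · simp [hx, hx.ne']
    · simp [hf x, hx.ne, hx.not_gt]
  right_inv x := by
    dsimp only
    split_ifs <;> simp [hf x]

theorem involutionNormalForm_map_not [LinearOrder Ω] (hf : Involutive f)
    (z : fixedPoints f ⊕ {x // x < f x} × Bool) :
    involutionNormalForm hf (Sum.map id (Prod.map id not) z) = f (involutionNormalForm hf z) := by
  obtain ⟨x, hx⟩ | ⟨x, _ | _⟩ := z
  · exact (mem_fixedPoints_iff.1 hx).symm
  · rfl
  · exact (hf _).symm

theorem mk_lt_apply_eq_mk_compl_fixedPoints [LinearOrder Ω] (hf : Involutive f)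
    [Infinite ↥(fixedPoints f)ᶜ] : #{x // x < f x} = #↥(fixedPoints f)ᶜ := by
  refine le_antisymm (mk_subtype_mono fun x hx => hx.ne') ?_
  have hle : #↥(fixedPoints f)ᶜ ≤ #({x // x < f x} × Bool) := by
    refine mk_le_of_injective (f := fun x : ↥(fixedPoints f)ᶜ => if hlt : x.1 < f x then
      (⟨x, hlt⟩, false) else (⟨f x, by rw [hf]; exact lt_of_le_of_ne (not_lt.1 hlt) x.2⟩, true)) ?_
    intro x y hxy
    grind [hf.injective.eq_iff]
  have hinf : Infinite ({x // x < f x} × Bool) :=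
    aleph0_le_mk_iff.1 ((aleph0_le_mk _).trans hle)
  have : Infinite {x // x < f x} := by
    by_contra hfin
    have := not_infinite_iff_finite.1 hfin
    exact not_finite ({x // x < f x} × Bool)
  calc #↥(fixedPoints f)ᶜ ≤ #({x // x < f x} × Bool) := hle
    _ = #{x // x < f x} := by
      rw [mk_prod, lift_uzero, mk_bool, lift_ofNat]
      exact mul_eq_left (aleph0_le_mk _) (ofNat_lt_aleph0.le.trans (aleph0_le_mk _)) two_ne_zero

theorem exists_equiv_semiconj_of_involutive (hf : Involutive f) (hf' : Involutive f')
    (hfixed : #(fixedPoints f) = #(fixedPoints f')) [Infinite ↥(fixedPoints f)ᶜ]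
    (hmoved : #↥(fixedPoints f)ᶜ = #↥(fixedPoints f')ᶜ) :
    ∃ e : Ω ≃ Ω', Semiconj e f f' := by
  let _ : LinearOrder Ω := IsWellOrder.linearOrder (WellOrderingRel (α := Ω))
  let _ : LinearOrder Ω' := IsWellOrder.linearOrder (WellOrderingRel (α := Ω'))
  have : Infinite ↥(fixedPoints f')ᶜ := aleph0_le_mk_iff.1 (hmoved ▸ aleph0_le_mk _)
  obtain ⟨eFixed⟩ := Cardinal.eq.1 hfixed
  obtain ⟨eHalf⟩ := Cardinal.eq.1 ((mk_lt_apply_eq_mk_compl_fixedPoints hf).trans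
    (hmoved.trans (mk_lt_apply_eq_mk_compl_fixedPoints hf').symm))
  let e := eFixed.sumCongr (eHalf.prodCongr (Equiv.refl Bool))
  refine ⟨(involutionNormalForm hf).symm.trans (e.trans (involutionNormalForm hf')), fun x => ?_⟩
  obtain ⟨z, rfl⟩ := (involutionNormalForm hf).surjective x
  have he : e (Sum.map id (Prod.map id not) z) = Sum.map id (Prod.map id not) (e z) := by
    obtain x | ⟨x, b⟩ := z <;> rfl
  simp only [Equiv.trans_apply, Equiv.symm_apply_apply, ← involutionNormalForm_map_not, he]

variable {S : Type} {X : Type u}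

theorem mk_eq_of_slice_subset [Countable S] [Infinite X] {A : Set (S × X)} {s : S}
    (hs : ∀ x, (s, x) ∈ A) : #A = #X := by
  have : Nonempty S := ⟨s⟩
  refine le_antisymm ?_ (mk_le_of_injective (f := fun x => (⟨(s, x), hs x⟩ : A)) fun x y h => by
    simpa using h)
  calc #A ≤ #(S × X) := mk_set_le A
    _ = #X := by
      rw [mk_prod, lift_uzero]
      exact mul_eq_right (aleph0_le_mk X)
        (by simpa using (lift_le_aleph0.2 (mk_le_aleph0 (α := S))).trans (aleph0_le_mk X))
        (by simp)

theorem isConj_of_involutive_of_slices [Countable S] [Infinite X] {f g : Equiv.Perm (S × X)}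
    (hf : Involutive f) (hg : Involutive g) {s t s' t' : S} (hs : ∀ x, f (s, x) = (s, x))
    (ht : ∀ x, f (t, x) ≠ (t, x)) (hs' : ∀ x, g (s', x) = (s', x))
    (ht' : ∀ x, g (t', x) ≠ (t', x)) : IsConj f g := by
  have hmoved : #↥(fixedPoints f)ᶜ = #X := mk_eq_of_slice_subset ht
  have : Infinite ↥(fixedPoints f)ᶜ := aleph0_le_mk_iff.1 (hmoved ▸ aleph0_le_mk X)
  obtain ⟨e, he⟩ := exists_equiv_semiconj_of_involutive hf hg
    ((mk_eq_of_slice_subset hs).trans (mk_eq_of_slice_subset hs').symm)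
    (hmoved.trans (mk_eq_of_slice_subset ht').symm)
  exact ⟨toUnits e, Equiv.ext he⟩

end Involutions

section ConjProd

variable {G H : Type*} [Group G] [Group H] {n : ℕ}

/-- The product of the conjugates of `w` by the entries of `h`. -/
def conjProd (w : G) (h : Fin n → G) : G :=
  (List.ofFn fun i => h i * w * (h i)⁻¹).prod

theorem map_conjProd (f : G →* H) (w : G) (h : Fin n → G) :
    f (conjProd w h) = conjProd (f w) fun i => f (h i) := by
  simp [conjProd, map_list_prod, List.map_ofFn, Function.comp_def]

theorem conjProd_one (h : Fin n → G) : conjProd 1 h = 1 := by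
  simp [conjProd]

end ConjProd

section ColumnPermutations

variable {S X : Type*}

/-- A family of permutations of `X` acting column by column on `S × X`. -/
def columnHom : (S → Equiv.Perm X) →* Equiv.Perm (S × X) where
  toFun := Equiv.prodCongrRight
  map_one' := rfl
  map_mul' _ _ := rfl

theorem columnHom_apply (σ : S → Equiv.Perm X) (z : S × X) : columnHom σ z = (z.1, σ z.1 z.2) :=
  rfl

/-- A permutation of the columns of `S × X`. -/
def rowHom : Equiv.Perm S →* Equiv.Perm (S × X) where
  toFun p := p.prodCongr (Equiv.refl X)
  map_one' := rfl
  map_mul' _ _ := rfl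

theorem rowHom_apply (p : Equiv.Perm S) (z : S × X) : rowHom p z = (p z.1, z.2) :=
  rfl

theorem rowHom_mul_columnHom_mul_inv (p : Equiv.Perm S) (σ : S → Equiv.Perm X) :
    rowHom p * columnHom σ * (rowHom p)⁻¹ = columnHom (σ ∘ ⇑p⁻¹) := by
  rw [mul_inv_eq_iff_eq_mul]
  ext z <;> simp [rowHom_apply, columnHom_apply]

/-- The reflection `n ↦ c - n` of the integers, with a further point that is fixed. -/
def reflection (c : ℤ) : Equiv.Perm (Option ℤ) :=
  Equiv.optionCongr (Equiv.subLeft c)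

theorem reflection_involutive (c : ℤ) : Function.Involutive (reflection c) := by
  rintro (_ | n) <;> simp [reflection]

-- The product of the two reflections is the shift by one; the commutator with it of a permutation
-- repeated in all the columns `n ≥ 0` telescopes to a single column.
theorem columnHom_mulSingle_eq (σ : Equiv.Perm X) :
    ∃ y : Equiv.Perm (Option ℤ × X), columnHom (Pi.mulSingle (some 0) σ) =
      y * rowHom (reflection 1) * y⁻¹ * (y * rowHom (reflection 0) * y⁻¹) *
        (rowHom (reflection 0) * rowHom (reflection 1)) := by
  let y : Option ℤ → Equiv.Perm X := fun s => s.elim 1 fun n => if 0 ≤ n then σ else 1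
  let shift : Equiv.Perm (Option ℤ) := reflection 1 * reflection 0
  have hshift : shift⁻¹ = reflection 0 * reflection 1 := by
    have hinv (c : ℤ) : (reflection c)⁻¹ = reflection c :=
      (reflection_involutive c).symm_eq_self_of_involutive
    rw [mul_inv_rev, hinv, hinv]
  have htelescope : Pi.mulSingle (some 0) σ = y * (y⁻¹ ∘ ⇑shift⁻¹) := by
    funext s
    obtain _ | n := s
    · simp [y, hshift, reflection]
    · rcases lt_trichotomy n 0 with hn | rfl | hn
      · simp [y, hshift, reflection, hn.ne, hn.not_ge, (by lia : ¬ 1 ≤ n)]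
      · simp [y, hshift, reflection]
      · simp [y, hshift, reflection, hn.ne', hn.le, (by lia : 1 ≤ n)]
  refine ⟨columnHom y, ?_⟩
  calc columnHom (Pi.mulSingle (some 0) σ)
    _ = columnHom y * (rowHom shift * (columnHom y)⁻¹ * (rowHom shift)⁻¹) := by
      rw [htelescope, map_mul, ← rowHom_mul_columnHom_mul_inv, map_inv]
    _ = _ := by
      rw [← map_inv rowHom, hshift, map_mul, map_mul]
      group

theorem isConj_columnHom_mulSingle_rowHom_reflection [Infinite X] {σ : Equiv.Perm X}
    (hσ : Function.Involutive σ) (hmoves : ∀ x, σ x ≠ x) (c : ℤ) :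
    IsConj (columnHom (Pi.mulSingle (some 0) σ)) (rowHom (X := X) (reflection c)) := by
  refine isConj_of_involutive_of_slices (s := none) (t := some 0) (s' := none)
    (t' := some (|c| + 1)) ?_ (fun z => Prod.ext (reflection_involutive c z.1) rfl)
    (fun x => ?_) (fun x => ?_) (fun x => ?_) fun x => ?_
  · rintro ⟨s, x⟩
    by_cases hs : s = some 0
    · simp [columnHom_apply, hs, hσ x]
    · simp [columnHom_apply, hs]
  · simp [columnHom_apply]
  · simp [columnHom_apply, hmoves]
  · simp [rowHom_apply, reflection]
  · have := le_abs_self c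
    have := abs_nonneg c
    simp only [rowHom_apply, reflection, Equiv.optionCongr_apply, Option.map_some,
      Equiv.subLeft_apply, ne_eq, Prod.mk.injEq, Option.some.injEq, and_true]
    lia

variable {G : Type*} [Group G]

/-- The regular representation repeated in infinitely many columns. -/
def regularHom : G →* Equiv.Perm (ℕ × G) :=
  columnHom.comp (MonoidHom.pi fun _ => MulAction.toPermHom G G)

theorem regularHom_apply (g : G) (z : ℕ × G) : regularHom g z = (z.1, g * z.2) :=
  rfl

theorem exists_injective_forall_eq_conjProd {w : G} (hw : w * w = 1) (hne : w ≠ 1) :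
    ∃ φ : G →* Equiv.Perm (Option ℤ × ℕ × G), Function.Injective φ ∧
      ∀ g, ∃ h : Fin 4 → Equiv.Perm (Option ℤ × ℕ × G), φ g = conjProd (φ w) h := by
  let φ : G →* Equiv.Perm (Option ℤ × ℕ × G) :=
    (columnHom.comp (MonoidHom.mulSingle _ (some 0))).comp regularHom
  have hreflection (c : ℤ) : ∃ d, d * φ w * d⁻¹ = rowHom (reflection c) :=
    isConj_iff.1 <| isConj_columnHom_mulSingle_rowHom_reflection
      (fun z => by simp [regularHom_apply, ← mul_assoc, hw])
      (fun z => by simp [regularHom_apply, Prod.ext_iff, hne]) c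
  refine ⟨φ, (injective_iff_map_eq_one φ).2 fun g hg => ?_, fun g => ?_⟩
  · simpa [φ, columnHom_apply, regularHom_apply] using DFunLike.congr_fun hg (some 0, 0, 1)
  · obtain ⟨d₀, hd₀⟩ := hreflection 0
    obtain ⟨d₁, hd₁⟩ := hreflection 1
    obtain ⟨y, hy⟩ := columnHom_mulSingle_eq (regularHom g)
    refine ⟨![y * d₁, y * d₀, d₀, d₁], hy.trans ?_⟩
    simp only [← hd₀, ← hd₁, conjProd, List.ofFn_succ, List.ofFn_zero, List.prod_cons,
      List.prod_nil, Matrix.cons_val_zero, Matrix.cons_val_succ, mul_inv_rev]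
    group

end ColumnPermutations

section Model

open Cardinal Function

universe u

theorem exists_equiv_apply_eq_of_mk_fiber_eq {O O' : Type u} {P : Type*} {p : O → P} {p' : O' → P}
    (hfiber : ∀ c, #{o // p o = c} = #{o // p' o = c}) {o₀ : O} {o₀' : O'} (h₀ : p o₀ = p' o₀') :
    ∃ E : O ≃ O', (∀ o, p' (E o) = p o) ∧ E o₀ = o₀' := by
  classical
  have F (c : P) := (Cardinal.eq.1 (hfiber c)).some
  let E : O ≃ O' := (Equiv.sigmaFiberEquiv p).symm.trans
    ((Equiv.sigmaCongrRight F).trans (Equiv.sigmaFiberEquiv p'))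
  have hE (o : O) : p' (E o) = p o := (F (p o) ⟨o, rfl⟩).2
  refine ⟨E.trans (Equiv.swap (E o₀) o₀'), fun o => ?_, by simp⟩
  simp only [Equiv.trans_apply, Equiv.swap_apply_def]
  split_ifs with h h'
  · rw [← h₀, E.injective h]
  · rw [hE, h₀, ← h', hE]
  · exact hE o

/-- The set on which the permutation model acts: infinitely many copies of all the pairs consisting
of a two-colouring of `Λ` and a position in `Λ`. -/
abbrev ModelPoint (Λ : Type*) :=
  (ℕ × (Λ → Bool)) × (Λ → Bool) × Λ

/-- The colour of the current position. -/
def colour {Λ : Type*} (q : ModelPoint Λ) : Bool :=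
  q.2.1 q.2.2

variable {Λ : Type u} [AddCommGroup Λ]

/-- The action of `Λ` on `ModelPoint Λ` by moving the position. -/
def translation : Multiplicative Λ →* Equiv.Perm (ModelPoint Λ) where
  toFun v := (Equiv.refl _).prodCongr ((Equiv.refl _).prodCongr (Equiv.addRight v.toAdd))
  map_one' := by ext q <;> simp
  map_mul' v v' := by ext q <;> simp [add_comm v.toAdd, add_assoc]

theorem translation_apply (v : Λ) (q : ModelPoint Λ) :
    translation (.ofAdd v) q = (q.1, q.2.1, q.2.2 + v) :=
  rfl

variable {N : Type*} [AddCommGroup N] {α β : N →+ Λ}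

theorem exists_transversal (hα : Injective α) (a : Λ) :
    ∃ (S : Set Λ) (e : S × N ≃ Λ), a ∈ S ∧ ∀ s u, e (s, u) = s + α u := by
  obtain ⟨S, hS, haS⟩ := AddSubgroup.exists_isComplement_left α.range a
  let e : S × N ≃ Λ := ((Equiv.refl S).prodCongr (AddMonoidHom.ofInjective hα).toEquiv).trans
    (Equiv.ofBijective _ hS)
  exact ⟨S, e, haS, fun _ _ => rfl⟩

theorem mk_colourProfile_fiber {S : Set Λ} (e : S × N ≃ Λ) {a : Λ} (haS : a ∈ S)
    (he : ∀ s u, e (s, u) = s + α u) (profile : N → Bool) :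
    #{o : (ℕ × (Λ → Bool)) × (Λ → Bool) × S // (fun u => o.2.1 (o.2.2 + α u)) = profile} =
      #(ℕ × (Λ → Bool)) := by
  refine le_antisymm ((mk_subtype_le _).trans ?_) ?_
  · have hinf : ℵ₀ ≤ #(ℕ × (Λ → Bool)) := aleph0_le_mk _
    have hcolourings : #(Λ → Bool) ≤ #(ℕ × (Λ → Bool)) :=
      mk_le_of_injective (Prod.mk_right_injective 0)
    have hS : #S ≤ #(ℕ × (Λ → Bool)) := by
      refine (mk_set_le S).trans (le_trans ?_ hcolourings)
      simpa using (cantor #Λ).le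
    calc #((ℕ × (Λ → Bool)) × (Λ → Bool) × S)
      _ = #(ℕ × (Λ → Bool)) * (#(Λ → Bool) * #S) := by rw [← mul_def, ← mul_def]
      _ ≤ #(ℕ × (Λ → Bool)) * (#(ℕ × (Λ → Bool)) * #(ℕ × (Λ → Bool))) := by gcongr
      _ = #(ℕ × (Λ → Bool)) := by rw [mul_eq_self hinf, mul_eq_self hinf]
  · refine mk_le_of_injective (f := fun i => ⟨(i, fun v => profile (e.symm v).2, ⟨a, haS⟩), ?_⟩)
      fun i j h => by simpa using h
    funext u
    simp [← he ⟨a, haS⟩ u]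

/-- The coordinates on `ModelPoint Λ` given by a transversal of the orbits of a subgroup of `Λ`. -/
def orbitCoordinates {S : Set Λ} (e : S × N ≃ Λ) :
    ((ℕ × (Λ → Bool)) × (Λ → Bool) × S) × N ≃ ModelPoint Λ where
  toFun z := (z.1.1, z.1.2.1, e (z.1.2.2, z.2))
  invFun q := ((q.1, q.2.1, (e.symm q.2.2).1), (e.symm q.2.2).2)
  left_inv z := by simp
  right_inv q := by simp

-- Every colouring of an orbit occurs equally often among the orbits of `α` and those of `β`, so the
-- two families of orbits can be matched.
theorem exists_perm_semiconj_translation (hα : Injective α) (hβ : Injective β)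
    (i₀ : ℕ × (Λ → Bool)) {χ : Λ → Bool} {a c : Λ} (hχ : ∀ u, χ (a + α u) = χ (c + β u)) :
    ∃ r : Equiv.Perm (ModelPoint Λ),
      (∀ u, r * translation (.ofAdd (α u)) * r⁻¹ = translation (.ofAdd (β u))) ∧
      (∀ q, colour (r q) = colour q) ∧ r (i₀, χ, a) = (i₀, χ, c) := by
  obtain ⟨S, e, haS, he⟩ := exists_transversal hα a
  obtain ⟨S', e', hcS', he'⟩ := exists_transversal hβ c
  obtain ⟨E, hE, hE₀⟩ := exists_equiv_apply_eq_of_mk_fiber_eq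
    (fun profile => (mk_colourProfile_fiber e haS he profile).trans
      (mk_colourProfile_fiber e' hcS' he' profile).symm)
    (o₀ := (i₀, χ, ⟨a, haS⟩)) (o₀' := (i₀, χ, ⟨c, hcS'⟩)) (funext hχ)
  let r := (orbitCoordinates e).symm.trans
    ((E.prodCongr (Equiv.refl N)).trans (orbitCoordinates e'))
  have hr (o u) : r (orbitCoordinates e (o, u)) = orbitCoordinates e' (E o, u) := by simp [r]
  refine ⟨r, fun u => ?_, fun q => ?_, ?_⟩
  · rw [mul_inv_eq_iff_eq_mul]
    ext1 q
    obtain ⟨⟨o, u'⟩, rfl⟩ := (orbitCoordinates e).surjective q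
    have htranslation : translation (.ofAdd (α u)) (orbitCoordinates e (o, u')) =
        orbitCoordinates e (o, u' + u) := by
      simp [translation_apply, orbitCoordinates, he, add_assoc]
    simp only [Equiv.Perm.mul_apply, htranslation, hr]
    simp [translation_apply, orbitCoordinates, he', add_assoc]
  · obtain ⟨⟨o, u⟩, rfl⟩ := (orbitCoordinates e).surjective q
    rw [hr]
    simpa [colour, orbitCoordinates, he, he'] using congrFun (hE o) u
  · have h₀ : orbitCoordinates e ((i₀, χ, ⟨a, haS⟩), 0) = (i₀, χ, a) := by
      simp [orbitCoordinates, he]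
    rw [← h₀, hr, hE₀]
    simp [orbitCoordinates, he']

end Model

section AffineSystem

theorem eq_of_eqvGen_of_terminal {α : Type*} {r : α → α → Prop}
    (hdet : ∀ a b c, r a b → r a c → b = c) {p p' : α} (hp : ∀ a, ¬ r p a) (hp' : ∀ a, ¬ r p' a)
    (h : Relation.EqvGen r p p') : p = p' := by
  have hequiv : Equivalence (Relation.Join (Relation.ReflTransGen r)) :=
    Relation.equivalence_join_reflTransGen fun a b c hab hac =>
      ⟨c, hdet a b c hab hac ▸ .refl, .refl⟩
  have hle : r ≤ Relation.Join (Relation.ReflTransGen r) := fun a b hab => ⟨b, .single hab, .refl⟩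
  obtain ⟨d, hleft, hright⟩ := hequiv.eqvGen_iff.1 (Relation.EqvGen.mono hle _ _ h)
  exact ((Relation.reflTransGen_iff_eq hp).1 hleft).symm.trans
    ((Relation.reflTransGen_iff_eq hp').1 hright)

/-- A rewriting system on an abelian group whose rules are partial affine maps: the rule `i` takes
`src i + srcHom i u` to `tgt i + tgtHom i u`. -/
structure AffineSystem (Λ R : Type*) [AddCommGroup Λ] where
  src : R → Λ
  tgt : R → Λ
  srcHom : R → Λ →+ Λ
  tgtHom : R → Λ →+ Λ
  srcHom_injective (i : R) : Function.Injective (srcHom i)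
  tgtHom_injective (i : R) : Function.Injective (tgtHom i)

namespace AffineSystem

variable {Λ R : Type*} [AddCommGroup Λ] (A : AffineSystem Λ R)

/-- One step of the rewriting system. -/
def Step (v v' : Λ) : Prop :=
  ∃ i u, v = A.src i + A.srcHom i u ∧ v' = A.tgt i + A.tgtHom i u

variable {A}

variable {G : Type*} [Group G]

/-- The conjugate of `t` by the image of `v`, which encodes the vector `v`. -/
def tokenAt (X : Multiplicative Λ →* G) (t : G) (v : Λ) : G :=
  X (.ofAdd v) * t * (X (.ofAdd v))⁻¹

/-- The relations that let `r i` perform the rule `i` on tokens, and let `k` commute with all the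
rules and with the token at `v₀`. -/
structure IsRealization (A : AffineSystem Λ R) (v₀ : Λ) (X : Multiplicative Λ →* G) (t k : G)
    (r : R → G) : Prop where
  conj_hom (i : R) (u : Λ) :
    r i * X (.ofAdd (A.srcHom i u)) * (r i)⁻¹ = X (.ofAdd (A.tgtHom i u))
  conj_token (i : R) : r i * tokenAt X t (A.src i) * (r i)⁻¹ = tokenAt X t (A.tgt i)
  commute_rule (i : R) : Commute k (r i)
  commute_token : Commute k (tokenAt X t v₀)

variable {v₀ p : Λ} {X : Multiplicative Λ →* G} {t k : G} {r : R → G}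

theorem tokenAt_add (u v : Λ) :
    tokenAt X t (v + u) = X (.ofAdd u) * tokenAt X t v * (X (.ofAdd u))⁻¹ := by
  rw [add_comm, tokenAt, tokenAt, ofAdd_add, map_mul]
  group

theorem IsRealization.commute_token_iff (h : A.IsRealization v₀ X t k r) {v v' : Λ}
    (hstep : A.Step v v') : Commute k (tokenAt X t v) ↔ Commute k (tokenAt X t v') := by
  obtain ⟨i, u, rfl, rfl⟩ := hstep
  have hconj : r i * tokenAt X t (A.src i + A.srcHom i u) * (r i)⁻¹ =
      tokenAt X t (A.tgt i + A.tgtHom i u) := by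
    rw [tokenAt_add, tokenAt_add, ← h.conj_token, ← h.conj_hom]
    group
  have hk : r i * k * (r i)⁻¹ = k := by rw [← (h.commute_rule i).eq, mul_inv_cancel_right]
  calc Commute k (tokenAt X t (A.src i + A.srcHom i u))
    _ ↔ Commute (r i * k * (r i)⁻¹) (r i * tokenAt X t (A.src i + A.srcHom i u) * (r i)⁻¹) :=
      (Commute.conj_iff (r i)).symm
    _ ↔ Commute k (tokenAt X t (A.tgt i + A.tgtHom i u)) := by rw [hk, hconj]

theorem IsRealization.commutator_eq_one (h : A.IsRealization v₀ X t k r)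
    (hp : Relation.EqvGen A.Step v₀ p) : ⁅k, tokenAt X t p⁆ = 1 := by
  have hiff {v v' : Λ} (hvv' : Relation.EqvGen A.Step v v') :
      Commute k (tokenAt X t v) ↔ Commute k (tokenAt X t v') := by
    induction hvv' with
    | rel v v' hstep => exact h.commute_token_iff hstep
    | refl v => rfl
    | symm v v' _ ih => exact ih.symm
    | trans v v' v'' _ _ ih ih' => exact ih.trans ih'
  exact commutatorElement_eq_one_iff_commute.2 ((hiff hp).1 h.commute_token)

end AffineSystem

end AffineSystem

section Realization

universe u

/-- The flip of the second bit. -/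
def flipPerm : Equiv.Perm (Bool × Bool) :=
  (Equiv.refl Bool).prodCongr Equiv.boolNot

/-- The addition of the second bit to the first. -/
def addPerm : Equiv.Perm (Bool × Bool) where
  toFun z := (xor z.1 z.2, z.2)
  invFun z := (xor z.1 z.2, z.2)
  left_inv := by decide
  right_inv := by decide

theorem commutator_flipPerm_addPerm_mul_self :
    ⁅flipPerm, addPerm⁆ * ⁅flipPerm, addPerm⁆ = 1 := by
  decide

theorem commutator_flipPerm_addPerm_ne_one : ⁅flipPerm, addPerm⁆ ≠ 1 := by
  decide

theorem rowHom_mul_columnHom_mulSingle_mul_inv {S Y : Type*} [DecidableEq S] (f : Equiv.Perm S)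
    (s : S) (σ : Equiv.Perm Y) :
    rowHom f * columnHom (Pi.mulSingle s σ) * (rowHom f)⁻¹ =
      columnHom (Pi.mulSingle (f s) σ) := by
  rw [rowHom_mul_columnHom_mul_inv]
  congr 1
  funext s'
  simp [Pi.mulSingle_apply, Equiv.symm_apply_eq]

theorem commutator_columnHom_mulSingle {S Y : Type*} [DecidableEq S] (σ : S → Equiv.Perm Y) (s : S)
    (τ : Equiv.Perm Y) : ⁅columnHom σ, columnHom (Pi.mulSingle s τ)⁆ =
      columnHom (Pi.mulSingle s ⁅σ s, τ⁆) := by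
  rw [← map_commutatorElement]
  congr 1
  funext s'
  obtain rfl | hs := eq_or_ne s' s
  · simp [commutatorElement_def]
  · simp [commutatorElement_def, hs]

theorem columnHom_injective {S Y : Type*} :
    Function.Injective (columnHom : (S → Equiv.Perm Y) →* Equiv.Perm (S × Y)) := by
  intro σ τ h
  ext s y
  simpa [columnHom_apply] using DFunLike.congr_fun h (s, y)

variable {Λ : Type u} {R : Type*} [AddCommGroup Λ] (A : AffineSystem Λ R) {v₀ p : Λ}

-- The vectors equivalent to `p` are coloured. The token at `v` acts only over the position `v`, and
-- `k` acts only over coloured positions, so they commute unless `v` is equivalent to `p`.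
open AffineSystem in
theorem exists_isRealization_commutator_ne_one (hp : ¬ Relation.EqvGen A.Step v₀ p) :
    ∃ (G : Type u) (_ : Group G) (X : Multiplicative Λ →* G) (t k : G) (r : R → G),
      A.IsRealization v₀ X t k r ∧ ⁅k, tokenAt X t p⁆ * ⁅k, tokenAt X t p⁆ = 1 ∧
        ⁅k, tokenAt X t p⁆ ≠ 1 := by
  classical
  let χ : Λ → Bool := fun v => Relation.EqvGen A.Step v p
  have hχ (i : R) (u : Λ) : χ (A.src i + A.srcHom i u) = χ (A.tgt i + A.tgtHom i u) := by
    have hstep := Relation.EqvGen.rel _ _ ⟨i, u, rfl, rfl⟩ (r := A.Step)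
    exact decide_eq_decide.2 ⟨hstep.symm.trans _ _ _, hstep.trans _ _ _⟩
  let i₀ : ℕ × (Λ → Bool) := (0, χ)
  choose ρ hρX hρcolour hρ using fun i => exists_perm_semiconj_translation
    (A.srcHom_injective i) (A.tgtHom_injective i) i₀ (hχ i)
  let X : Multiplicative Λ →* Equiv.Perm (ModelPoint Λ × Bool × Bool) := rowHom.comp translation
  let t : Equiv.Perm (ModelPoint Λ × Bool × Bool) :=
    columnHom (Pi.mulSingle (i₀, χ, 0) addPerm)
  let k : Equiv.Perm (ModelPoint Λ × Bool × Bool) :=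
    columnHom fun q => if colour q then flipPerm else 1
  have htoken (v : Λ) : tokenAt X t v = columnHom (Pi.mulSingle (i₀, χ, v) addPerm) := by
    simp only [tokenAt, X, t, MonoidHom.comp_apply, rowHom_mul_columnHom_mulSingle_mul_inv,
      translation_apply, zero_add]
  have hcomm (v : Λ) : ⁅k, tokenAt X t v⁆ =
      columnHom (Pi.mulSingle (i₀, χ, v) ⁅if χ v then flipPerm else 1, addPerm⁆) := by
    rw [htoken, commutator_columnHom_mulSingle]
    rfl
  have hcommp : ⁅k, tokenAt X t p⁆ =
      columnHom (Pi.mulSingle (i₀, χ, p) ⁅flipPerm, addPerm⁆) := by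
    rw [hcomm, if_pos (decide_eq_true (Relation.EqvGen.refl p))]
  refine ⟨_, inferInstance, X, t, k, fun i => rowHom (ρ i), ⟨fun i u => ?_, fun i => ?_,
    fun i => ?_, ?_⟩, ?_, ?_⟩
  · simp only [X, MonoidHom.comp_apply, ← map_mul, ← map_inv, hρX]
  · simp only [htoken, rowHom_mul_columnHom_mulSingle_mul_inv, hρ]
  · rw [commute_iff_eq, eq_comm, ← mul_inv_eq_iff_eq_mul, rowHom_mul_columnHom_mul_inv]
    congr 1
    funext q
    simp [← hρcolour i ((ρ i).symm q)]
  · rw [← commutatorElement_eq_one_iff_commute, hcomm, if_neg (by simpa [χ] using hp)]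
    simp
  · rw [hcommp, ← map_mul, ← Pi.mulSingle_mul, commutator_flipPerm_addPerm_mul_self,
      Pi.mulSingle_one, map_one]
  · rw [hcommp, ne_eq, map_eq_one_iff _ columnHom_injective, Pi.mulSingle_eq_one_iff]
    exact commutator_flipPerm_addPerm_ne_one

end Realization

section StackMachine

/-- A machine with stacks indexed by `K` over the alphabet `Γ`. In the state `q` it removes the top
symbol, if there is one, from the stack `(M q).1`; the second component gives, in terms of this
symbol, the next state (`none` if the machine halts) and the word to be put on the same stack. -/
abbrev StackMachine (Q K Γ : Type*) :=
  Q → K × (Option Γ → Option Q × List Γ)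

namespace StackMachine

variable {Q K Γ : Type*} [DecidableEq K] (M : StackMachine Q K Γ)

/-- The configuration that follows the state `q` and the stacks `S`. -/
def next (q : Q) (S : K → List Γ) : Option Q × (K → List Γ) :=
  (((M q).2 (S (M q).1).head?).1,
    Function.update S (M q).1 (((M q).2 (S (M q).1).head?).2 ++ (S (M q).1).tail))

/-- One step of the machine. -/
def Step (c c' : Option Q × (K → List Γ)) : Prop :=
  ∃ q, c.1 = some q ∧ c' = M.next q c.2

/-- Injective numberings of the symbols and of the states in `T` (together with the halting state
`none`). The absence of a symbol is the digit `0`, so that a stack can be read as the number whose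
digits, starting with the least significant one, are its symbols. -/
structure Numbering (Γ : Type*) (T : Finset Q) where
  base : ℕ
  digit : Option Γ → Fin base
  digit_injective : Function.Injective digit
  digit_none : (digit none : ℕ) = 0
  bound : ℕ
  code : Option Q → Fin bound
  code_injOn : Set.InjOn code {q | ∀ a ∈ q, a ∈ T}

variable {T : Finset Q} (E : Numbering Γ T)

/-- The number with the given digits, the least significant one first. -/
def Numbering.stackCode (L : List Γ) : ℕ :=
  L.foldr (fun s n => E.digit (some s) + E.base * n) 0

/-- The vector consisting of the code of the state and the codes of the stacks. -/
def Numbering.configCode (c : Option Q × (K → List Γ)) : Option K → ℤ :=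
  fun κ => κ.elim (E.code c.1 : ℤ) fun j => E.stackCode (c.2 j)

theorem Numbering.stackCode_cons (s : Γ) (L : List Γ) :
    E.stackCode (s :: L) = E.digit (some s) + E.base * E.stackCode L :=
  rfl

theorem Numbering.stackCode_append (L L' : List Γ) :
    E.stackCode (L ++ L') = E.stackCode L + E.base ^ L.length * E.stackCode L' := by
  induction L with
  | nil => simp [stackCode]
  | cons s L ih =>
    rw [List.cons_append, stackCode_cons, ih, stackCode_cons, List.length_cons]
    ring

theorem Numbering.stackCode_eq_head_add_tail (L : List Γ) :
    E.stackCode L = E.digit L.head? + E.base * E.stackCode L.tail := by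
  cases L with
  | nil => simp [stackCode, E.digit_none]
  | cons s L => rfl

theorem eq_of_add_mul_eq_add_mul {b : ℕ} {d d' : Fin b} {u u' : ℤ}
    (h : (d : ℤ) + b * u = (d' : ℤ) + b * u') : d = d' := by
  have hmod := congrArg (· % (b : ℤ)) h
  simp only [Int.add_mul_emod_self_left] at hmod
  rw [Int.emod_eq_of_lt (by positivity) (by exact_mod_cast d.2),
    Int.emod_eq_of_lt (by positivity) (by exact_mod_cast d'.2)] at hmod
  exact Fin.ext (by exact_mod_cast hmod)

theorem mulLeft_injective_of_forall_ne_zero {ι : Type*} {m : ι → ℤ} (hm : ∀ κ, m κ ≠ 0) :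
    Function.Injective (AddMonoidHom.mulLeft m) := fun _ _ h =>
  funext fun κ => mul_left_cancel₀ (hm κ) (congrFun h κ)

theorem Numbering.base_ne_zero : (E.base : ℤ) ≠ 0 := by
  exact_mod_cast (Fin.pos (E.digit none)).ne'

theorem Numbering.bound_ne_zero : (E.bound : ℤ) ≠ 0 := by
  exact_mod_cast (Fin.pos (E.code none)).ne'

theorem elim_update_ne_zero {m n : ℤ} (hm : m ≠ 0) (hn : n ≠ 0) (j : K) (κ : Option K) :
    κ.elim m (Function.update 1 j n) ≠ 0 := by
  obtain _ | i := κ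
  · exact hm
  · obtain rfl | hi := eq_or_ne i j <;> simp [*]

/-- The affine system that simulates a stack machine: there is one rule for every state in `T` and
every symbol that can be read. -/
def affineSystem : AffineSystem (Option K → ℤ) (T × Option Γ) where
  src i κ := κ.elim (E.code (some i.1) : ℤ) (Pi.single (M i.1).1 (E.digit i.2 : ℤ))
  tgt i κ := κ.elim (E.code ((M i.1).2 i.2).1 : ℤ)
    (Pi.single (M i.1).1 (E.stackCode ((M i.1).2 i.2).2 : ℤ))
  srcHom i := AddMonoidHom.mulLeft fun κ =>
    κ.elim (E.bound : ℤ) (Function.update 1 (M i.1).1 (E.base : ℤ))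
  tgtHom i := AddMonoidHom.mulLeft fun κ => κ.elim (E.bound : ℤ)
    (Function.update 1 (M i.1).1 ((E.base : ℤ) ^ ((M i.1).2 i.2).2.length))
  srcHom_injective _ := mulLeft_injective_of_forall_ne_zero
    (elim_update_ne_zero E.bound_ne_zero E.base_ne_zero _)
  tgtHom_injective _ := mulLeft_injective_of_forall_ne_zero
    (elim_update_ne_zero E.bound_ne_zero (pow_ne_zero _ E.base_ne_zero) _)

theorem affineSystem_step_configCode_next {q : Q} (hq : q ∈ T) (S : K → List Γ) :
    (M.affineSystem E).Step (E.configCode (some q, S)) (E.configCode (M.next q S)) := by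
  refine ⟨(⟨q, hq⟩, (S (M q).1).head?), fun κ => κ.elim 0 fun j =>
    Function.update (fun j => (E.stackCode (S j) : ℤ)) (M q).1 (E.stackCode (S (M q).1).tail) j,
    ?_, ?_⟩ <;> funext κ <;> obtain _ | j := κ
  · simp [Numbering.configCode, affineSystem]
  · obtain rfl | hj := eq_or_ne j (M q).1
    · simp [Numbering.configCode, affineSystem, E.stackCode_eq_head_add_tail (S (M q).1)]
    · simp [Numbering.configCode, affineSystem, hj]
  · simp [Numbering.configCode, affineSystem, next]
  · obtain rfl | hj := eq_or_ne j (M q).1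
    · simp [Numbering.configCode, affineSystem, next, E.stackCode_append]
    · simp [Numbering.configCode, affineSystem, next, hj]

variable {M E}

theorem reflTransGen_affineSystem_step
    (hT : ∀ q ∈ T, ∀ o, ∀ q' ∈ ((M q).2 o).1, q' ∈ T) {c c' : Option Q × (K → List Γ)}
    (hc : ∀ q ∈ c.1, q ∈ T) (h : Relation.ReflTransGen M.Step c c') :
    Relation.ReflTransGen (M.affineSystem E).Step (E.configCode c) (E.configCode c') := by
  induction h using Relation.ReflTransGen.head_induction_on with
  | refl => exact .refl
  | @head c d hcd _ ih =>
    obtain ⟨q, hq, rfl⟩ := hcd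
    obtain ⟨_, S⟩ := c
    obtain rfl := hq
    have hqT : q ∈ T := hc q rfl
    exact .head (M.affineSystem_step_configCode_next E hqT S) (ih (hT q hqT _))

theorem affineSystem_step_deterministic (v v' v'' : Option K → ℤ)
    (h' : (M.affineSystem E).Step v v') (h'' : (M.affineSystem E).Step v v'') : v' = v'' := by
  obtain ⟨⟨⟨q, hq⟩, o⟩, u, rfl, rfl⟩ := h'
  obtain ⟨⟨⟨q', hq'⟩, o'⟩, u', heq, rfl⟩ := h''
  have hqq : q = q' := by
    have hcode : E.code (some q) = E.code (some q') := eq_of_add_mul_eq_add_mul (congrFun heq none)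
    simpa using E.code_injOn (by simpa using hq) (by simpa using hq') hcode
  subst hqq
  have hoo : o = o' := by
    have hstack := congrFun heq (some (M q).1)
    simp only [affineSystem, AddMonoidHom.coe_mulLeft, Pi.add_apply, Option.elim_some,
      Pi.single_eq_same, Pi.mul_apply, Function.update_self] at hstack
    exact E.digit_injective (eq_of_add_mul_eq_add_mul hstack)
  subst hoo
  rw [(M.affineSystem E).srcHom_injective _ (add_left_cancel heq)]

theorem not_affineSystem_step_configCode_none (S : K → List Γ) (v : Option K → ℤ) :
    ¬ (M.affineSystem E).Step (E.configCode (none, S)) v := by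
  rintro ⟨⟨⟨q, hq⟩, o⟩, u, heq, -⟩
  have hcode : E.code none = E.code (some q) := by
    refine eq_of_add_mul_eq_add_mul (u := 0) (u' := u none) ?_
    simpa [Numbering.configCode, affineSystem] using congrFun heq none
  simpa using E.code_injOn (by simp) (by simpa using hq) hcode

end StackMachine

end StackMachine

section TM2

open Turing

variable {K Γ Λ σ : Type*}

/-- The stack machine that executes the programs `tr l` statement by statement. Its states consist
of the remaining statements and the contents of the internal memory. -/
def tm2StackMachine [Inhabited K] (tr : Λ → TM2.Stmt (fun _ : K => Γ) Λ σ) :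
    StackMachine (TM2.Stmt (fun _ : K => Γ) Λ σ × σ) K Γ
  | (.push k f q, v) => (k, fun o => (some (q, v), f v :: o.toList))
  | (.peek k f q, v) => (k, fun o => (some (q, f v o), o.toList))
  | (.pop k f q, v) => (k, fun o => (some (q, f v o), []))
  | (.load f q, v) => (default, fun o => (some (q, f v), o.toList))
  | (.branch f q q', v) => (default, fun o => (some (cond (f v) q q', v), o.toList))
  | (.goto f, v) => (default, fun o => (some (tr (f v), v), o.toList))
  | (.halt, _) => (default, fun o => (none, o.toList))

/-- The configuration of `tm2StackMachine tr` that corresponds to a configuration of `tr`. -/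
def tm2Config (tr : Λ → TM2.Stmt (fun _ : K => Γ) Λ σ) (c : TM2.Cfg (fun _ : K => Γ) Λ σ) :
    Option (TM2.Stmt (fun _ : K => Γ) Λ σ × σ) × (K → List Γ) :=
  (c.l.map fun l => (tr l, c.var), c.stk)

variable {tr : Λ → TM2.Stmt (fun _ : K => Γ) Λ σ}

theorem head?_toList_append_tail (L : List Γ) : L.head?.toList ++ L.tail = L := by
  cases L <;> rfl

theorem reflTransGen_tm2Config_stepAux [DecidableEq K] [Inhabited K]
    (q : TM2.Stmt (fun _ : K => Γ) Λ σ) (v : σ) (S : K → List Γ) :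
    Relation.ReflTransGen (tm2StackMachine tr).Step (some (q, v), S)
      (tm2Config tr (TM2.stepAux q v S)) := by
  induction q generalizing v S with
  | push k f q ih =>
    refine .head ⟨_, rfl, ?_⟩ (ih v (Function.update S k (f v :: S k)))
    simp [StackMachine.next, tm2StackMachine, head?_toList_append_tail]
  | peek k f q ih =>
    refine .head ⟨_, rfl, ?_⟩ (ih (f v (S k).head?) S)
    simp [StackMachine.next, tm2StackMachine, head?_toList_append_tail]
  | pop k f q ih =>
    refine .head ⟨_, rfl, ?_⟩ (ih (f v (S k).head?) (Function.update S k (S k).tail))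
    simp [StackMachine.next, tm2StackMachine]
  | load f q ih =>
    refine .head ⟨_, rfl, ?_⟩ (ih (f v) S)
    simp [StackMachine.next, tm2StackMachine, head?_toList_append_tail]
  | branch f q q' ih ih' =>
    refine .head (b := (some (cond (f v) q q', v), S)) ⟨_, rfl, ?_⟩ ?_
    · simp [StackMachine.next, tm2StackMachine, head?_toList_append_tail]
    · rw [TM2.stepAux]
      cases f v
      · exact ih' v S
      · exact ih v S
  | goto f | halt =>
    refine .single ⟨_, rfl, ?_⟩
    simp [StackMachine.next, tm2StackMachine, head?_toList_append_tail, tm2Config, TM2.stepAux]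

theorem reflTransGen_tm2Config_of_reaches [DecidableEq K] [Inhabited K]
    {c c' : TM2.Cfg (fun _ : K => Γ) Λ σ} (h : StateTransition.Reaches (TM2.step tr) c c') :
    Relation.ReflTransGen (tm2StackMachine tr).Step (tm2Config tr c) (tm2Config tr c') := by
  induction h with
  | refl => exact .refl
  | @tail d d' _ hd ih =>
    obtain ⟨_ | l, v, S⟩ := d
    · simp [TM2.step] at hd
    · obtain rfl : TM2.stepAux (tr l) v S = d' := by simpa [TM2.step] using hd
      exact ih.trans (reflTransGen_tm2Config_stepAux _ _ _)

open scoped Classical in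
/-- The states of `tm2StackMachine tr` that can occur in computations using only labels in `S`. -/
noncomputable def tm2States [Fintype σ] (tr : Λ → TM2.Stmt (fun _ : K => Γ) Λ σ) (S : Finset Λ) :
    Finset (TM2.Stmt (fun _ : K => Γ) Λ σ × σ) :=
  (S.biUnion fun l => TM2.stmts₁ (tr l)) ×ˢ Finset.univ

theorem mem_tm2States [Fintype σ] {S : Finset Λ} {q : TM2.Stmt (fun _ : K => Γ) Λ σ} {v : σ} :
    (q, v) ∈ tm2States tr S ↔ ∃ l ∈ S, q ∈ TM2.stmts₁ (tr l) := by
  simp [tm2States]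

theorem tm2States_closed [Inhabited K] [Fintype σ] {S : Finset Λ}
    (hS : ∀ l ∈ S, TM2.SupportsStmt S (tr l)) :
    ∀ q ∈ tm2States tr S, ∀ o, ∀ q' ∈ ((tm2StackMachine tr q).2 o).1, q' ∈ tm2States tr S := by
  rintro ⟨q, v⟩ hq o ⟨q', v'⟩ hq'
  obtain ⟨l, hl, hql⟩ := mem_tm2States.1 hq
  have hsub (h : q' ∈ TM2.stmts₁ q) : (q', v') ∈ tm2States tr S :=
    mem_tm2States.2 ⟨l, hl, TM2.stmts₁_trans hql h⟩
  cases q with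
  | push | peek | pop | load =>
    obtain ⟨rfl, -⟩ := by simpa [tm2StackMachine] using hq'
    exact hsub (by simp [TM2.stmts₁, TM2.stmts₁_self])
  | branch f q₁ q₂ =>
    obtain ⟨rfl, -⟩ := by simpa [tm2StackMachine] using hq'
    exact hsub (by cases f v <;> simp [TM2.stmts₁, TM2.stmts₁_self])
  | goto f =>
    obtain ⟨rfl, -⟩ := by simpa [tm2StackMachine] using hq'
    exact mem_tm2States.2 ⟨f v, TM2.stmts₁_supportsStmt_mono hql (hS l hl) v, TM2.stmts₁_self⟩
  | halt => simp [tm2StackMachine] at hq'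

end TM2

section Partrec

open Turing Turing.PartrecToTM2 StackMachine

/-- The position of `q` in an enumeration of `T`; `0` is reserved for the halting state. -/
noncomputable def stateCode {Q : Type*} (T : Finset Q) (q : Option Q) : Fin (T.card + 1) :=
  open scoped Classical in q.elim 0 fun a => if ha : a ∈ T then (T.equivFin ⟨a, ha⟩).succ else 0

theorem injOn_stateCode {Q : Type*} (T : Finset Q) :
    Set.InjOn (stateCode T) {q | ∀ a ∈ q, a ∈ T} := by
  rintro (_ | a) ha (_ | b) hb hab
  · rfl
  · have hb : b ∈ T := hb b rfl
    simp [stateCode, hb, (Fin.succ_ne_zero _).symm] at hab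
  · have ha : a ∈ T := ha a rfl
    simp [stateCode, ha, Fin.succ_ne_zero] at hab
  · have ha : a ∈ T := ha a rfl
    have hb : b ∈ T := hb b rfl
    simpa [stateCode, ha, hb] using hab

/-- The base `5` numbering for the machines of `Turing.PartrecToTM2`, whose stacks have four
symbols. -/
noncomputable def partrecNumbering {Q : Type*} (T : Finset Q) : Numbering Γ' T where
  base := 5
  digit o := o.elim 0 fun
    | .consₗ => 1
    | .cons => 2
    | .bit0 => 3
    | .bit1 => 4
  digit_injective := by decide
  digit_none := rfl
  bound := T.card + 1
  code := stateCode T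
  code_injOn := injOn_stateCode T

/-- The number with base `5` digits those of the list `trList [n]` by which
`Turing.PartrecToTM2` represents the input `n`. -/
def inputCode (n : ℕ) : ℕ :=
  if n = 0 then 2 else 3 + n % 2 + 5 * inputCode (n / 2)

theorem inputCode_zero : inputCode 0 = 2 := by
  rw [inputCode, if_pos rfl]

theorem inputCode_of_ne_zero {n : ℕ} (hn : n ≠ 0) :
    inputCode n = 3 + n % 2 + 5 * inputCode (n / 2) := by
  rw [inputCode, if_neg hn]

theorem inputCode_one : inputCode 1 = 14 := by
  rw [inputCode_of_ne_zero one_ne_zero, Nat.div_eq_of_lt one_lt_two, inputCode_zero]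
  rfl

theorem primrec_inputCode : Primrec inputCode := by
  let step (l : List ℕ) : ℕ :=
    if l.length = 0 then 2 else 3 + l.length % 2 + 5 * l.getD (l.length / 2) 0
  have hstep : Primrec step := by
    have hlen : Primrec fun l : List ℕ => l.length := Primrec.list_length
    exact Primrec.ite (Primrec.eq.comp hlen (.const 0)) (.const 2) <| Primrec.nat_add.comp
      (Primrec.nat_add.comp (.const 3) (Primrec.nat_mod.comp hlen (.const 2)))
      (Primrec.nat_mul.comp (.const 5)
        ((Primrec.list_getD 0).comp .id (Primrec.nat_div.comp hlen (.const 2))))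
  refine (Primrec.nat_strong_rec (fun (_ : Unit) n => inputCode n) (g := fun _ l => some (step l))
    (Primrec.option_some.comp (hstep.comp .snd)) fun _ n => ?_).comp (.const ()) .id
  obtain rfl | hn := eq_or_ne n 0
  · simp [step, inputCode_zero]
  · have hlt : n / 2 < n := by lia
    rw [inputCode_of_ne_zero hn]
    simp [step, hn, hlt]

variable {Q : Type*} (T : Finset Q)

theorem stackCode_trPosNum_append_cons (n : PosNum) :
    (partrecNumbering T).stackCode (trPosNum n ++ [.cons]) = inputCode n := by
  induction n with
  | one => simp [trPosNum, Numbering.stackCode, partrecNumbering, inputCode_one]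
  | bit1 n ih =>
    have hdiv : ((n : ℕ) + n + 1) / 2 = n := by lia
    have hmod : ((n : ℕ) + n + 1) % 2 = 1 := by lia
    rw [PosNum.cast_bit1, inputCode_of_ne_zero (by lia), hdiv, hmod, ← ih]
    rfl
  | bit0 n ih =>
    have hpos : 0 < (n : ℕ) := PosNum.cast_pos n
    have hdiv : ((n : ℕ) + n) / 2 = n := by lia
    have hmod : ((n : ℕ) + n) % 2 = 0 := by lia
    rw [PosNum.cast_bit0, inputCode_of_ne_zero (by lia), hdiv, hmod, ← ih]
    rfl

theorem stackCode_trList_singleton (n : ℕ) :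
    (partrecNumbering T).stackCode (trList [n]) = inputCode n := by
  obtain ⟨z, rfl⟩ : ∃ z : Num, (z : ℕ) = n := ⟨n, Num.to_of_nat n⟩
  rw [trList, trNat, Num.of_to_nat]
  cases z with
  | zero => simp [trNum, trList, Numbering.stackCode, partrecNumbering, inputCode_zero]
  | pos n => exact stackCode_trPosNum_append_cons T n

theorem configCode_elim_trList (q : Option Q) (n : ℕ) :
    (partrecNumbering T).configCode (q, K'.elim (trList [n]) [] [] []) =
      (partrecNumbering T).configCode (q, fun _ => []) +
        Pi.single (some K'.main) (inputCode n : ℤ) := by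
  funext κ
  obtain _ | κ := κ
  · simp [Numbering.configCode]
  · have hnil : (partrecNumbering T).stackCode [] = 0 := rfl
    cases κ <;> simp [Numbering.configCode, -trList, stackCode_trList_singleton, hnil]

theorem exists_reaches_halt {f : ℕ →. ℕ} (hf : Nat.Partrec f) :
    ∃ c : ToPartrec.Code, ∀ e n, n ∈ f e →
      StateTransition.Reaches (TM2.step tr) (PartrecToTM2.init c [e]) (PartrecToTM2.halt [n]) := by
  have hf' : Nat.Partrec' (n := 1) fun v => f v.head :=
    Nat.Partrec'.of_part ((Partrec.nat_iff.2 hf).comp Primrec.vector_head.to_comp)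
  obtain ⟨c, hc⟩ := ToPartrec.Code.exists_code hf'
  refine ⟨c, fun e n hn => (StateTransition.mem_eval.1 ?_).1⟩
  have heval : c.eval [e] = pure <$> f e := hc ⟨[e], rfl⟩
  rw [tr_eval, heval]
  exact (Part.mem_map_iff _).2 ⟨[n], (Part.mem_map_iff _).2 ⟨n, hn, rfl⟩, rfl⟩

theorem exists_affineSystem_simulating {f : ℕ →. ℕ} (hf : Nat.Partrec f) :
    ∃ (R : Type) (_ : Finite R) (A : AffineSystem (Option K' → ℤ) R) (start : Option K' → ℤ)
      (target : Bool → Option K' → ℤ),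
      (∀ e b, b.toNat ∈ f e → Relation.EqvGen A.Step
        (start + Pi.single (some K'.main) (inputCode e : ℤ)) (target b)) ∧
      ∀ v, ∃ b, ¬ Relation.EqvGen A.Step v (target b) := by
  obtain ⟨c, hc⟩ := exists_reaches_halt hf
  let T := tm2States tr (codeSupp c .halt)
  let E := partrecNumbering T
  let A := (tm2StackMachine tr).affineSystem E
  let start := E.configCode (K := K') (some (tr (trNormal c .halt), none), fun _ => [])
  let target (b : Bool) := E.configCode (tm2Config tr (PartrecToTM2.halt [b.toNat]))
  refine ⟨T × Option Γ', inferInstance, A, start, target, fun e b hb => ?_, fun v => ?_⟩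
  · have hclosed := tm2States_closed (tr := tr) (S := codeSupp c .halt) fun l hl =>
      codeSupp_supports (k := Cont'.halt) Set.Subset.rfl l hl
    have hstart : (tr (trNormal c .halt), none) ∈ T :=
      mem_tm2States.2 ⟨_, codeSupp_self _ _ (trStmts₁_self _), TM2.stmts₁_self⟩
    rw [← configCode_elim_trList]
    exact Relation.EqvGen.reflTransGen_le_eqvGen _ _ _ <| reflTransGen_affineSystem_step hclosed
      (by rintro q ⟨⟩; exact hstart) (reflTransGen_tm2Config_of_reaches (hc e _ hb))
  · by_contra! hv
    have heq : target false = target true :=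
      eq_of_eqvGen_of_terminal affineSystem_step_deterministic
        (not_affineSystem_step_configCode_none _) (not_affineSystem_step_configCode_none _)
        (.trans _ v _ (.symm _ _ (hv false)) (hv true))
    have hmain := congrFun heq (some K'.main)
    simp [target, E, Numbering.configCode, tm2Config, PartrecToTM2.halt,
      -trList, stackCode_trList_singleton, inputCode_zero, inputCode_one] at hmain

end Partrec

section Amplification

variable {α : Type*}

/-- Replaces every generator other than `none` by a product of four conjugates of `none`, the
conjugating elements being new generators. -/
def conjSubst : FreeGroup (Option α) →* FreeGroup (Option (α × Fin 4)) :=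
  FreeGroup.lift fun o => o.elim (FreeGroup.of none) fun a =>
    conjProd (FreeGroup.of none) fun j => FreeGroup.of (some (a, j))

theorem lift_conjSubst {G : Type*} [Group G] (f : Option (α × Fin 4) → G)
    (r : FreeGroup (Option α)) :
    FreeGroup.lift f (conjSubst r) =
      FreeGroup.lift (fun o => o.elim (f none) fun a => conjProd (f none) fun j => f (some (a, j)))
        r := by
  refine DFunLike.congr_fun (FreeGroup.ext_hom ((FreeGroup.lift f).comp conjSubst) _ fun o => ?_) r
  cases o <;> simp [conjSubst, map_conjProd]

variable {rels : Set (FreeGroup (Option α))}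

theorem lift_conjSubst_eq_one_of_none_eq_one {G : Type*} [Group G] {f : Option (α × Fin 4) → G}
    (hf : f none = 1) (r : FreeGroup (Option α)) : FreeGroup.lift f (conjSubst r) = 1 := by
  have hone : (fun o : Option α => o.elim (f none) fun a => conjProd (f none) fun j =>
      f (some (a, j))) = fun _ => 1 := by
    funext o
    cases o <;> simp [hf, conjProd_one]
  rw [lift_conjSubst, hone]
  exact DFunLike.congr_fun (FreeGroup.ext_hom (FreeGroup.lift fun _ => (1 : G)) 1 (by simp)) r

theorem of_none_eq_one_of_presentedGroup
    (h : (PresentedGroup.of none : PresentedGroup rels) = 1) :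
    (PresentedGroup.of none : PresentedGroup (conjSubst '' rels)) = 1 := by
  let subst : PresentedGroup rels →* PresentedGroup (conjSubst '' rels) :=
    PresentedGroup.map conjSubst (Set.mapsTo_image _ _)
  calc (PresentedGroup.of none : PresentedGroup (conjSubst '' rels))
    _ = PresentedGroup.mk _ (conjSubst (FreeGroup.of none)) := by
      simp [conjSubst, PresentedGroup.of]
    _ = subst (PresentedGroup.of none) := rfl
    _ = 1 := by rw [h, map_one]

theorem isMulTorsionFree_conjSubst (h : (PresentedGroup.of none : PresentedGroup rels) = 1) :
    IsMulTorsionFree (PresentedGroup (conjSubst '' rels)) := by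
  have hw := of_none_eq_one_of_presentedGroup h
  let f (o : Option (α × Fin 4)) : FreeGroup (α × Fin 4) := o.elim 1 FreeGroup.of
  let toFree : PresentedGroup (conjSubst '' rels) →* FreeGroup (α × Fin 4) :=
    PresentedGroup.toGroup (f := f) <| by
      rintro _ ⟨r, -, rfl⟩
      exact lift_conjSubst_eq_one_of_none_eq_one rfl r
  let ofFree : FreeGroup (α × Fin 4) →* PresentedGroup (conjSubst '' rels) :=
    FreeGroup.lift fun z => PresentedGroup.of (some z)
  have hinv : ofFree.comp toFree = MonoidHom.id _ := PresentedGroup.ext fun o => by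
    cases o <;> simp [toFree, ofFree, f, hw]
  exact Function.Injective.isMulTorsionFree toFree
    (Function.LeftInverse.injective (g := ofFree) (DFunLike.congr_fun hinv))

theorem orderOf_of_none_conjSubst (hsq : FreeGroup.of none * FreeGroup.of none ∈ rels)
    (h : (PresentedGroup.of none : PresentedGroup rels) ≠ 1) :
    orderOf (PresentedGroup.of none : PresentedGroup (conjSubst '' rels)) = 2 := by
  have hw : (PresentedGroup.of none * PresentedGroup.of none : PresentedGroup rels) = 1 :=
    PresentedGroup.one_of_mem hsq
  obtain ⟨φ, hφ, hconj⟩ := exists_injective_forall_eq_conjProd hw h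
  choose c hc using fun a : α => hconj (PresentedGroup.of (some a))
  have hrels : ∀ r ∈ conjSubst '' rels, FreeGroup.lift (fun o : Option (α × Fin 4) =>
      o.elim (φ (PresentedGroup.of none)) fun z => c z.1 z.2) r = 1 := by
    rintro _ ⟨r, hr, rfl⟩
    have hhom : FreeGroup.lift (fun o : Option α => o.elim (φ (PresentedGroup.of none)) fun a =>
        conjProd (φ (PresentedGroup.of none)) (c a)) = φ.comp (PresentedGroup.mk rels) := by
      refine FreeGroup.ext_hom _ _ fun o => ?_
      cases o with
      | none => simp [PresentedGroup.of]
      | some a => simpa [PresentedGroup.of] using (hc a).symm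
    rw [lift_conjSubst]
    refine (DFunLike.congr_fun hhom r).trans ?_
    rw [MonoidHom.comp_apply, PresentedGroup.one_of_mem hr, map_one]
  refine orderOf_eq_prime ?_ fun hone => h (hφ ?_)
  · rw [pow_two]
    exact PresentedGroup.one_of_mem ⟨_, hsq, by simp [conjSubst]⟩
  · have hnone := PresentedGroup.toGroup.of hrels (x := none)
    rw [hone, map_one] at hnone
    rw [map_one]
    exact hnone.symm

end Amplification

section VectorPow

variable {ι : Type*} [Fintype ι] {G H : Type*} [Group G] [Group H]

/-- The product of the powers `x κ ^ v κ`, in an arbitrary fixed order. -/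
noncomputable def vectorPow (x : ι → G) (v : ι → ℤ) : G :=
  (Finset.univ.toList.map fun κ => x κ ^ v κ).prod

theorem map_vectorPow (f : G →* H) (x : ι → G) (v : ι → ℤ) :
    f (vectorPow x v) = vectorPow (fun κ => f (x κ)) v := by
  simp [vectorPow, map_list_prod, Function.comp_def]

theorem prod_map_mul_of_commute {α M : Type*} [Monoid M] (l : List α) {f g : α → M}
    (h : ∀ a b, Commute (f a) (g b)) :
    (l.map fun a => f a * g a).prod = (l.map f).prod * (l.map g).prod := by
  induction l with
  | nil => simp
  | cons a l ih =>
    have hcomm : Commute (g a) (l.map f).prod := Commute.list_prod_right _ _ <| by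
      simpa using fun b _ => (h b a).symm
    rw [List.map_cons, List.prod_cons, ih, hcomm.mul_mul_mul_comm, List.map_cons, List.prod_cons,
      List.map_cons, List.prod_cons]

/-- The homomorphism from `ℤ^ι` given by commuting elements. -/
noncomputable def vectorHom (x : ι → G) (hx : ∀ κ κ', Commute (x κ) (x κ')) :
    Multiplicative (ι → ℤ) →* G where
  toFun v := vectorPow x v.toAdd
  map_one' := by simp [vectorPow]
  map_mul' u v := by
    simp only [vectorPow, toAdd_mul, Pi.add_apply, zpow_add]
    exact prod_map_mul_of_commute _ fun κ κ' => (hx κ κ').zpow_zpow _ _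

theorem vectorHom_ofAdd (x : ι → G) (hx : ∀ κ κ', Commute (x κ) (x κ')) (v : ι → ℤ) :
    vectorHom x hx (.ofAdd v) = vectorPow x v :=
  rfl

variable [DecidableEq ι]

theorem vectorPow_single (x : ι → G) (κ : ι) (n : ℤ) : vectorPow x (Pi.single κ n) = x κ ^ n := by
  have hcount : (Finset.univ : Finset ι).toList.count κ = 1 :=
    List.count_eq_one_of_mem (Finset.nodup_toList _) (by simp)
  rw [vectorPow, List.prod_map_eq_pow_single κ _ fun κ' hκ' _ => by simp [hκ'], hcount]
  simp

theorem vectorPow_map_single (X : Multiplicative (ι → ℤ) →* G) (v : ι → ℤ) :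
    vectorPow (fun κ => X (.ofAdd (Pi.single κ 1))) v = X (.ofAdd v) := by
  have hsum : (Finset.univ.toList.map fun κ => Pi.single κ (v κ)).sum = v := by
    rw [Finset.sum_map_toList, Finset.univ_sum_single]
  conv_rhs => rw [← hsum, ofAdd_list_prod, map_list_prod]
  simp only [vectorPow, List.map_map]
  congr 2
  funext κ
  simp [← map_zpow, ← ofAdd_zsmul, ← Pi.single_smul]

end VectorPow

theorem multiplicative_hom_ext {ι G : Type*} [Finite ι] [DecidableEq ι] [Group G]
    {X Y : Multiplicative (ι → ℤ) →* G}
    (h : ∀ κ, X (.ofAdd (Pi.single κ 1)) = Y (.ofAdd (Pi.single κ 1))) : X = Y := by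
  cases nonempty_fintype ι
  refine MonoidHom.ext fun v => ?_
  rw [← ofAdd_toAdd v, ← vectorPow_map_single X, ← vectorPow_map_single Y, funext h]

section Relators

open AffineSystem

/-- The generators in the presentation attached to an affine system on `ℤ^ι`: the basis vectors
`x κ`, the token `t`, the element `k` that commutes with the tokens reachable from the start, and
one element `r i` for every rule. -/
inductive Symbol (ι R : Type*)
  | x (κ : ι)
  | t
  | k
  | r (i : R)
  deriving Fintype

universe u

variable {ι : Type u} {R : Type*} [Fintype ι] {G H : Type*} [Group G] [Group H]

/-- The token at `v`, as a word in the generators. -/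
noncomputable def tokenWord (f : Option (Symbol ι R) → G) (v : ι → ℤ) : G :=
  vectorPow (fun κ => f (some (.x κ))) v * f (some .t) *
    (vectorPow (fun κ => f (some (.x κ))) v)⁻¹

theorem map_tokenWord (φ : G →* H) (f : Option (Symbol ι R) → G) (v : ι → ℤ) :
    φ (tokenWord f v) = tokenWord (φ ∘ f) v := by
  simp [tokenWord, map_vectorPow]

/-- The relators that do not depend on the starting vector. The generator `none` is the commutator
of `k` and the token at `p`. -/
noncomputable def fixedRelators [DecidableEq ι] (A : AffineSystem (ι → ℤ) R) (p : ι → ℤ) :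
    Set (FreeGroup (Option (Symbol ι R))) :=
  let gen (s : Symbol ι R) := FreeGroup.of (some s)
  let w := FreeGroup.of none
  {w * w, w⁻¹ * ⁅gen .k, tokenWord FreeGroup.of p⁆} ∪
    Set.range (fun z : ι × ι => ⁅gen (.x z.1), gen (.x z.2)⁆) ∪
    Set.range (fun z : R × ι =>
      gen (.r z.1) * vectorPow (gen <| .x ·) (A.srcHom z.1 (Pi.single z.2 1)) * (gen (.r z.1))⁻¹ *
        (vectorPow (gen <| .x ·) (A.tgtHom z.1 (Pi.single z.2 1)))⁻¹) ∪
    Set.range (fun i => gen (.r i) * tokenWord FreeGroup.of (A.src i) * (gen (.r i))⁻¹ *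
      (tokenWord FreeGroup.of (A.tgt i))⁻¹) ∪
    Set.range fun i => ⁅gen .k, gen (.r i)⁆

/-- The relator saying that `k` commutes with the token at `start + Pi.single κ n`. The vector is
split in this way because only `n` will vary. -/
noncomputable def startRelator (start : ι → ℤ) (κ : ι) (n : ℕ) :
    FreeGroup (Option (Symbol ι R)) :=
  let gen (s : Symbol ι R) := FreeGroup.of (some s)
  let v := vectorPow (gen <| .x ·) start * gen (.x κ) ^ n
  ⁅gen .k, v * gen .t * v⁻¹⁆

theorem finite_fixedRelators [DecidableEq ι] [Finite R] (A : AffineSystem (ι → ℤ) R) (p : ι → ℤ) :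
    (fixedRelators A p).Finite :=
  ((((Set.toFinite _).union (Set.finite_range _)).union (Set.finite_range _)).union
    (Set.finite_range _)).union (Set.finite_range _)

variable [DecidableEq ι] {A : AffineSystem (ι → ℤ) R} {start p : ι → ℤ} {κ₀ : ι} {n : ℕ}

theorem forall_fixedRelators_iff {f : Option (Symbol ι R) → G} :
    (∀ ρ ∈ fixedRelators A p, FreeGroup.lift f ρ = 1) ↔
      f none * f none = 1 ∧ f none = ⁅f (some .k), tokenWord f p⁆ ∧
      (∀ κ κ', Commute (f (some (.x κ))) (f (some (.x κ')))) ∧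
      (∀ i κ, f (some (.r i)) *
        vectorPow (fun κ => f (some (.x κ))) (A.srcHom i (Pi.single κ 1)) * (f (some (.r i)))⁻¹ =
          vectorPow (fun κ => f (some (.x κ))) (A.tgtHom i (Pi.single κ 1))) ∧
      (∀ i, f (some (.r i)) * tokenWord f (A.src i) * (f (some (.r i)))⁻¹ =
        tokenWord f (A.tgt i)) ∧
      ∀ i, Commute (f (some .k)) (f (some (.r i))) := by
  have hf : FreeGroup.lift f ∘ FreeGroup.of = f := funext fun o => FreeGroup.lift_apply_of
  simp only [fixedRelators, Set.mem_union, Set.mem_insert_iff, Set.mem_singleton_iff, or_imp,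
    forall_and, forall_eq, Set.forall_mem_range, Prod.forall]
  simp [map_vectorPow, map_tokenWord, hf, map_commutatorElement,
    commutatorElement_eq_one_iff_commute, mul_inv_eq_one, inv_mul_eq_one, and_assoc]

theorem lift_startRelator_eq_one_iff {f : Option (Symbol ι R) → G}
    (hx : ∀ κ κ', Commute (f (some (.x κ))) (f (some (.x κ')))) :
    FreeGroup.lift f (startRelator start κ₀ n) = 1 ↔
      Commute (f (some .k)) (tokenWord f (start + Pi.single κ₀ (n : ℤ))) := by
  have hadd : vectorPow (fun κ => f (some (.x κ))) (start + Pi.single κ₀ (n : ℤ)) =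
      vectorPow (fun κ => f (some (.x κ))) start * f (some (.x κ₀)) ^ n := by
    rw [← vectorHom_ofAdd _ hx, ofAdd_add, map_mul, vectorHom_ofAdd, vectorHom_ofAdd,
      vectorPow_single, zpow_natCast]
  simp [startRelator, map_commutatorElement, commutatorElement_eq_one_iff_commute, tokenWord, hadd,
    map_vectorPow]

theorem isRealization_vectorHom {f : Option (Symbol ι R) → G}
    (hfixed : ∀ ρ ∈ fixedRelators A p, FreeGroup.lift f ρ = 1)
    (hstart : FreeGroup.lift f (startRelator start κ₀ n) = 1) :
    A.IsRealization (start + Pi.single κ₀ (n : ℤ))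
      (vectorHom (fun κ => f (some (.x κ))) (forall_fixedRelators_iff.1 hfixed).2.2.1)
      (f (some .t)) (f (some .k)) fun i => f (some (.r i)) := by
  obtain ⟨-, -, hx, hhom, htoken, hk⟩ := forall_fixedRelators_iff.1 hfixed
  set X := vectorHom (fun κ => f (some (.x κ))) hx
  have hconj (i : R) : (MulAut.conj (f (some (.r i)))).toMonoidHom.comp
      (X.comp (AddMonoidHom.toMultiplicative (A.srcHom i))) =
        X.comp (AddMonoidHom.toMultiplicative (A.tgtHom i)) :=
    multiplicative_hom_ext fun κ => hhom i κ
  exact ⟨fun i u => DFunLike.congr_fun (hconj i) (.ofAdd u), htoken, hk,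
    (lift_startRelator_eq_one_iff hx).1 hstart⟩

theorem exists_lift_none_ne_one (hp : ¬ Relation.EqvGen A.Step (start + Pi.single κ₀ (n : ℤ)) p) :
    ∃ (G : Type u) (_ : Group G) (f : Option (Symbol ι R) → G),
      (∀ ρ ∈ fixedRelators A p, FreeGroup.lift f ρ = 1) ∧
        FreeGroup.lift f (startRelator start κ₀ n) = 1 ∧ f none ≠ 1 := by
  obtain ⟨G, _, X, t, k, r, hreal, hsq, hne⟩ := exists_isRealization_commutator_ne_one A hp
  let f : Option (Symbol ι R) → G
    | none => ⁅k, tokenAt X t p⁆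
    | some (.x κ) => X (.ofAdd (Pi.single κ 1))
    | some .t => t
    | some .k => k
    | some (.r i) => r i
  have hpow : vectorPow (fun κ => f (some (.x κ))) = fun v => X (.ofAdd v) :=
    funext (vectorPow_map_single X)
  have htoken : tokenWord f = tokenAt X t := by
    funext v
    rw [tokenWord, hpow, tokenAt]
  have hx (κ κ' : ι) : Commute (f (some (.x κ))) (f (some (.x κ'))) := (Commute.all _ _).map X
  refine ⟨G, _, f, forall_fixedRelators_iff.2 ?_, (lift_startRelator_eq_one_iff hx).2 ?_, hne⟩
  · rw [htoken, hpow]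
    exact ⟨hsq, rfl, hx, fun i κ => hreal.conj_hom i _, hreal.conj_token, hreal.commute_rule⟩
  · rw [htoken]
    exact hreal.commute_token

theorem of_none_eq_one_iff_eqvGen :
    (PresentedGroup.of none :
        PresentedGroup (insert (startRelator start κ₀ n) (fixedRelators A p))) = 1 ↔
      Relation.EqvGen A.Step (start + Pi.single κ₀ (n : ℤ)) p := by
  set rels := insert (startRelator start κ₀ n) (fixedRelators A p)
  constructor
  · contrapose!
    intro hp hnone
    obtain ⟨G, _, f, hfixed, hstart, hne⟩ := exists_lift_none_ne_one hp
    have hrels : ∀ ρ ∈ rels, FreeGroup.lift f ρ = 1 := Set.forall_mem_insert.2 ⟨hstart, hfixed⟩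
    have hlift := PresentedGroup.toGroup.of hrels (x := none)
    rw [hnone, map_one] at hlift
    exact hne hlift.symm
  · intro hp
    have hmk : FreeGroup.lift (PresentedGroup.of : _ → PresentedGroup rels) =
        PresentedGroup.mk rels := FreeGroup.ext_hom _ _ fun o => FreeGroup.lift_apply_of
    obtain ⟨hstart, hfixed⟩ : _ ∧ ∀ ρ ∈ fixedRelators A p, FreeGroup.lift PresentedGroup.of ρ = 1 :=
      Set.forall_mem_insert.1 fun ρ (hρ : ρ ∈ rels) => hmk ▸ PresentedGroup.one_of_mem hρ
    rw [(forall_fixedRelators_iff.1 hfixed).2.1]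
    exact (isRealization_vectorHom hfixed hstart).commutator_eq_one hp

end Relators

section PrimrecWords

variable {α : Type*} [Primcodable α]

/-- Primitive recursiveness of a family of elements of the free group on `ℕ`, elements being given
by their reduced words. -/
def PrimrecWord (f : α → FreeGroup ℕ) : Prop :=
  Primrec fun a => (f a).toWord

theorem PrimrecWord.const (g : FreeGroup ℕ) : PrimrecWord fun _ : α => g :=
  Primrec.const _

theorem PrimrecWord.mul {f g : α → FreeGroup ℕ} (hf : PrimrecWord f) (hg : PrimrecWord g) :
    PrimrecWord fun a => f a * g a :=
  (primrec_reduce.comp (Primrec.list_append.comp hf hg)).of_eq fun _ =>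
    (FreeGroup.toWord_mul _ _).symm

theorem PrimrecWord.inv {f : α → FreeGroup ℕ} (hf : PrimrecWord f) :
    PrimrecWord fun a => (f a)⁻¹ :=
  (primrec_invRev.comp hf).of_eq fun _ => (FreeGroup.toWord_inv _).symm

theorem PrimrecWord.pow (g : FreeGroup ℕ) : PrimrecWord fun n => g ^ n := by
  refine (Primrec.nat_rec₁ (g ^ 0).toWord (f := fun _ w => FreeGroup.reduce (w ++ g.toWord))
    (primrec_reduce.comp₂ (Primrec.list_append.comp₂ Primrec₂.right (.const _)))).of_eq fun n => ?_
  induction n with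
  | zero => rfl
  | succ n ih => simp only [pow_succ, FreeGroup.toWord_mul, ← ih]

end PrimrecWords

section Encoding

variable {α : Type*} [Fintype α]

/-- A numbering of a finite type by an initial segment of `ℕ`. -/
noncomputable def num (a : α) : ℕ :=
  Fintype.equivFin α a

theorem num_injective : Function.Injective (num : α → ℕ) :=
  Fin.val_injective.comp (Fintype.equivFin α).injective

theorem num_lt_card (a : α) : num a < Fintype.card α :=
  Fin.is_lt _

theorem exists_num_eq_of_lt {i : ℕ} (hi : i < Fintype.card α) : ∃ a : α, num a = i :=
  ⟨(Fintype.equivFin α).symm ⟨i, hi⟩, by simp [num]⟩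

/-- The code of the finite presentation with generators `α` and relators `l`. -/
noncomputable def encodePres (l : List (FreeGroup α)) : FinPres :=
  (Fintype.card α, l.map fun r => (FreeGroup.map num r).toWord)

variable (l : List (FreeGroup α))

/-- The homomorphism sending each generator to the generator with its number. -/
noncomputable def encodePresHom : PresentedGroup {r | r ∈ l} →* presGroup (encodePres l) :=
  PresentedGroup.toGroup (f := fun a => presProj _ (FreeGroup.of (num a))) <| by
    intro r hr
    have hhom : FreeGroup.lift (fun a : α => presProj (encodePres l) (FreeGroup.of (num a))) =
        (presProj (encodePres l)).comp (FreeGroup.map num) := FreeGroup.ext_hom _ _ (by simp)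
    rw [hhom, MonoidHom.comp_apply, ← FreeGroup.mk_toWord (x := FreeGroup.map num r)]
    exact presProj_mk_eq_one_of_mem (List.mem_map_of_mem hr)

/-- The homomorphism sending the generator with number `num a` to `a`. -/
noncomputable def decodePresHom : presGroup (encodePres l) →* PresentedGroup {r | r ∈ l} :=
  presLift (Function.extend num PresentedGroup.of 1) (by
    intro w hw
    obtain ⟨r, hr, rfl⟩ := List.mem_map.1 hw
    have hhom : (FreeGroup.lift (Function.extend num PresentedGroup.of 1)).comp
        (FreeGroup.map (num : α → ℕ)) = PresentedGroup.mk {r | r ∈ l} :=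
      FreeGroup.ext_hom _ _ fun a => by simp [num_injective.extend_apply, PresentedGroup.of]
    rw [FreeGroup.mk_toWord, ← MonoidHom.comp_apply, hhom]
    exact PresentedGroup.one_of_mem hr) fun i hi =>
    Function.extend_apply' _ _ _ fun ⟨a, ha⟩ => (num_lt_card a).not_ge (ha ▸ hi)

/-- A finitely presented group is isomorphic to the group presented by its code. -/
noncomputable def encodePresEquiv : PresentedGroup {r | r ∈ l} ≃* presGroup (encodePres l) :=
  MonoidHom.toMulEquiv (encodePresHom l) (decodePresHom l)
    (PresentedGroup.ext fun a => by
      simp [encodePresHom, decodePresHom, presLift_presProj, num_injective.extend_apply])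
    (presGroup_hom_ext fun i => by
      rcases lt_or_ge i (Fintype.card α) with hi | hi
      · obtain ⟨a, rfl⟩ := exists_num_eq_of_lt hi
        simp [encodePresHom, decodePresHom, presLift_presProj, num_injective.extend_apply]
      · simp [presProj_of_eq_one_of_le (P := encodePres l) hi])

end Encoding

section RelatorList

open Turing.PartrecToTM2

variable {ι R : Type*} [Fintype ι] [DecidableEq ι] [Fintype R] (A : AffineSystem (ι → ℤ) R)
  (start p : ι → ℤ) (κ₀ : ι) (n : ℕ)

/-- The relators of the group attached to the system `A`, the starting vector
`start + Pi.single κ₀ n` and the target `p`. -/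
noncomputable def relatorList : List (FreeGroup (Option (Symbol ι R × Fin 4))) :=
  (startRelator start κ₀ n :: (finite_fixedRelators A p).toFinset.toList).map conjSubst

/-- The code of the presentation with relators `relatorList A start p κ₀ n`. -/
noncomputable def systemPres : FinPres :=
  encodePres (relatorList A start p κ₀ n)

theorem primrec_systemPres : Primrec fun n => (systemPres A start p κ₀ n).2 := by
  refine Primrec.list_cons.comp ?_ (.const _)
  let φ : FreeGroup (Option (Symbol ι R)) →* FreeGroup ℕ := (FreeGroup.map num).comp conjSubst
  change PrimrecWord fun n => φ (startRelator start κ₀ n)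
  simp only [startRelator, commutatorElement_def, map_mul, map_inv, map_pow]
  have hv := (PrimrecWord.const (φ (vectorPow (fun κ => .of (some (.x κ))) start))).mul
    (.pow (φ (.of (some (.x κ₀)))))
  have ht := (hv.mul (.const (φ (.of (some .t))))).mul hv.inv
  exact (((PrimrecWord.const _).mul ht).mul (.const _)).mul ht.inv

theorem image_conjSubst_insert_eq :
    conjSubst '' insert (startRelator start κ₀ n) (fixedRelators A p) =
      {ρ | ρ ∈ relatorList A start p κ₀ n} := by
  ext ρ
  simp [relatorList, eq_comm]

/-- `systemPres` codes the presentation by `startRelator` and `fixedRelators` with the generators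
replaced according to `conjSubst`. -/
noncomputable def systemPresEquiv :
    PresentedGroup (conjSubst '' insert (startRelator start κ₀ n) (fixedRelators A p)) ≃*
      presGroup (systemPres A start p κ₀ n) :=
  (QuotientGroup.quotientMulEquivOfEq (congrArg Subgroup.normalClosure <|
    image_conjSubst_insert_eq A start p κ₀ n)).trans
    (encodePresEquiv (relatorList A start p κ₀ n))

variable {A start p κ₀ n}

theorem isMulTorsionFree_systemPres
    (h : Relation.EqvGen A.Step (start + Pi.single κ₀ (n : ℤ)) p) :
    IsMulTorsionFree (presGroup (systemPres A start p κ₀ n)) :=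
  have := isMulTorsionFree_conjSubst (of_none_eq_one_iff_eqvGen.2 h)
  Function.Injective.isMulTorsionFree (systemPresEquiv A start p κ₀ n).symm.toMonoidHom
    (systemPresEquiv A start p κ₀ n).symm.injective

theorem exists_orderOf_eq_two_systemPres
    (h : ¬ Relation.EqvGen A.Step (start + Pi.single κ₀ (n : ℤ)) p) :
    ∃ x : presGroup (systemPres A start p κ₀ n), orderOf x = 2 :=
  ⟨systemPresEquiv A start p κ₀ n (PresentedGroup.of none), by
    rw [MulEquiv.orderOf_eq]
    exact orderOf_of_none_conjSubst (by simp [fixedRelators]) (of_none_eq_one_iff_eqvGen.not.2 h)⟩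

instance : Fintype K' :=
  ⟨{.main, .rev, .aux, .stack}, by rintro (_ | _ | _ | _) <;> simp⟩

theorem exists_primrec_isMulTorsionFree_and_orderOf_eq_two {f : ℕ →. ℕ} (hf : Nat.Partrec f) :
    ∃ (N : ℕ) (L : ℕ → Bool → List Word), (∀ b, Primrec (L · b)) ∧
      (∀ e b, b.toNat ∈ f e → IsMulTorsionFree (presGroup (N, L e b))) ∧
        ∀ e, ∃ b, ∃ x : presGroup (N, L e b), orderOf x = 2 := by
  obtain ⟨R, _, A, start, target, hreach, hmiss⟩ := exists_affineSystem_simulating hf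
  cases nonempty_fintype R
  refine ⟨_, fun e b => (systemPres A start (target b) (some K'.main) (inputCode e)).2,
    fun b => (primrec_systemPres A start (target b) (some K'.main)).comp primrec_inputCode,
    fun e b hb => isMulTorsionFree_systemPres (hreach e b hb), fun e => ?_⟩
  obtain ⟨b, hb⟩ := hmiss (start + Pi.single (some K'.main) (inputCode e : ℤ))
  exact ⟨b, exists_orderOf_eq_two_systemPres hb⟩

end RelatorList

section FreeProduct

/-- The presentation of the free product of the groups presented by `(N, L false)` and
`(N, L true)`, the generator `i` of the factor `b` being renamed `Nat.bit b i`. -/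
def freeProd (N : ℕ) (L : Bool → List Word) : FinPres :=
  (2 * N, [false, true].flatMap fun b => (L b).map fun w => w.map fun z => (Nat.bit b z.1, z.2))

theorem primrec_freeProd {α : Type*} [Primcodable α] (N : ℕ) {L : α → Bool → List Word}
    (hL : ∀ b, Primrec (L · b)) : Primrec fun a => freeProd N (L a) := by
  have hbit : ∀ b, Primrec (Nat.bit b)
    | false => Primrec.nat_double
    | true => Primrec.nat_double_succ
  have hrename (b : Bool) : Primrec fun w : Word => w.map fun z => (Nat.bit b z.1, z.2) :=
    Primrec.list_map .id <| Primrec.to₂ <|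
      ((hbit b).comp (Primrec.fst.comp .snd)).pair (Primrec.snd.comp .snd)
  have hrelators (b : Bool) := Primrec.list_map (hL b) ((hrename b).comp .snd).to₂
  refine (Primrec.const (2 * N)).pair ?_
  simpa using Primrec.list_append.comp (hrelators false) (hrelators true)

variable (N : ℕ) (L : Bool → List Word)

/-- The homomorphism from a factor to the group presented by `freeProd N L`. -/
def freeProdOf (b : Bool) : presGroup (N, L b) →* presGroup (freeProd N L) :=
  presLift (fun i => presProj _ (FreeGroup.of (Nat.bit b i)))
    (fun w hw => by
      have hhom : FreeGroup.lift (fun i => presProj (freeProd N L) (FreeGroup.of (Nat.bit b i))) =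
          (presProj _).comp (FreeGroup.map (Nat.bit b)) := FreeGroup.ext_hom _ _ (by simp)
      rw [hhom, MonoidHom.comp_apply, FreeGroup.map.mk]
      refine presProj_mk_eq_one_of_mem (List.mem_flatMap.2 ⟨b, by cases b <;> simp, ?_⟩)
      exact List.mem_map_of_mem hw)
    fun i hi => presProj_of_eq_one_of_le <|
      (Nat.mul_le_mul_left 2 hi).trans (Nat.bit_val b i ▸ Nat.le_add_right _ _)

/-- The element of the free product named by the generator `i` of `freeProd N L`. -/
def coprodGen (i : ℕ) : CoprodI fun b => presGroup (N, L b) :=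
  CoprodI.of (i := i.bodd) (presProj _ (FreeGroup.of i.div2))

theorem coprodGen_bit (b : Bool) (i : ℕ) :
    coprodGen N L (Nat.bit b i) = CoprodI.of (i := b) (presProj (N, L b) (FreeGroup.of i)) := by
  rw [coprodGen, Nat.div2_bit]
  generalize hc : (Nat.bit b i).bodd = c
  rw [Nat.bodd_bit] at hc
  rw [hc]

/-- The homomorphism from the group presented by `freeProd N L` to the free product. -/
def freeProdToCoprodI : presGroup (freeProd N L) →* CoprodI fun b => presGroup (N, L b) :=
  presLift (coprodGen N L)
    (fun w hw => by
      obtain ⟨b, -, hw⟩ := List.mem_flatMap.1 hw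
      obtain ⟨u, hu, rfl⟩ := List.mem_map.1 hw
      have hhom : (FreeGroup.lift (coprodGen N L)).comp (FreeGroup.map (Nat.bit b)) =
          (CoprodI.of (M := fun b => presGroup (N, L b)) (i := b)).comp (presProj (N, L b)) :=
        FreeGroup.ext_hom _ _ fun i => by simp [coprodGen_bit]
      rw [← FreeGroup.map.mk, ← MonoidHom.comp_apply, hhom, MonoidHom.comp_apply,
        presProj_mk_eq_one_of_mem hu, map_one])
    fun i hi => by
      rw [coprodGen, presProj_of_eq_one_of_le, map_one]
      rw [Nat.div2_val]
      exact (Nat.le_div_iff_mul_le two_pos).2 (mul_comm 2 N ▸ hi)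

/-- `freeProd N L` presents the free product. -/
def freeProdEquiv : presGroup (freeProd N L) ≃* CoprodI fun b => presGroup (N, L b) :=
  MonoidHom.toMulEquiv (freeProdToCoprodI N L) (CoprodI.lift (freeProdOf N L))
    (presGroup_hom_ext fun i => by
      simp [freeProdToCoprodI, coprodGen, freeProdOf, presLift_presProj, Nat.bit_bodd_div2])
    (CoprodI.ext_hom _ _ fun b => presGroup_hom_ext fun i => by
      simp [freeProdToCoprodI, freeProdOf, presLift_presProj, coprodGen_bit])

/-- The effect on words of the retraction of the free product onto the factor `b`. -/
def retractWord (b : Bool) (w : Word) : Word :=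
  w.filterMap fun z => if z.1.bodd = b then some (z.1.div2, z.2) else none

theorem primrec_retractWord (b : Bool) : Primrec (retractWord b) := by
  have hmem : PrimrecPred fun y : Word × (ℕ × Bool) => y.2.1.bodd = b :=
    Primrec.eq.comp (Primrec.nat_bodd.comp (Primrec.fst.comp .snd)) (.const b)
  have hletter : Primrec fun y : Word × (ℕ × Bool) => some (y.2.1.div2, y.2.2) :=
    Primrec.option_some.comp <|
      (Primrec.nat_div2.comp (Primrec.fst.comp .snd)).pair (Primrec.snd.comp .snd)
  exact Primrec.listFilterMap .id (Primrec.ite hmem hletter (.const none)).to₂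

theorem retraction_coprodGen (b : Bool) (i : ℕ) : retraction b (coprodGen N L i) =
    if i.bodd = b then presProj (N, L b) (FreeGroup.of i.div2) else 1 := by
  split_ifs with h
  · subst h
    exact retraction_of_self _
  · exact retraction_of_ne h _

theorem retraction_freeProdEquiv_mk (b : Bool) (w : Word) :
    retraction b (freeProdEquiv N L (presProj _ (FreeGroup.mk w))) =
      presProj (N, L b) (FreeGroup.mk (retractWord b w)) := by
  have hproj : presProj (N, L b) = FreeGroup.lift fun i => presProj (N, L b) (FreeGroup.of i) :=
    FreeGroup.ext_hom _ _ (by simp)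
  change retraction b (FreeGroup.lift (coprodGen N L) (FreeGroup.mk w)) = _
  rw [hproj, FreeGroup.lift_mk, FreeGroup.lift_mk, map_list_prod, List.map_map]
  induction w with
  | nil => rfl
  | cons z w ih =>
    simp only [retractWord] at ih ⊢
    rcases z with ⟨i, _ | _⟩ <;> by_cases hi : i.bodd = b <;> simp [retraction_coprodGen, hi, ih]

end FreeProduct

section GroupOfOrderTwo

/-- The presentation `⟨x | x²⟩` of the group of order two. -/
def twoPres : FinPres :=
  (1, [[(0, true), (0, true)]])

theorem twoPres_gen_sq : presProj twoPres (FreeGroup.of 0) ^ 2 = 1 := by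
  rw [← map_pow]
  exact presProj_mk_eq_one_of_mem (P := twoPres) (List.mem_singleton_self _)

theorem exists_zpow_eq_twoPres (x : presGroup twoPres) :
    ∃ n : ℤ, presProj twoPres (FreeGroup.of 0) ^ n = x := by
  obtain ⟨y, rfl⟩ := presProj_surjective _ x
  let expSum : FreeGroup ℕ →* Multiplicative ℤ :=
    FreeGroup.lift fun i => if i = 0 then .ofAdd 1 else 1
  have hhom : (zpowersHom _ (presProj twoPres (FreeGroup.of 0))).comp expSum = presProj twoPres :=
    FreeGroup.ext_hom _ _ fun i => by
      rcases i with _ | i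
      · simp [expSum]
      · have hone : presProj twoPres (FreeGroup.of (i + 1)) = 1 :=
          presProj_of_eq_one_of_le (P := twoPres) (Nat.le_add_left 1 i)
        simp [expSum, hone]
  exact ⟨(expSum y).toAdd, DFunLike.congr_fun hhom y⟩

variable {H : Type*} [Group H]

theorem exists_injective_twoPres {g : H} (hg : orderOf g = 2) :
    ∃ φ : presGroup twoPres →* H, Function.Injective φ ∧ φ (presProj _ (FreeGroup.of 0)) = g := by
  let φ : presGroup twoPres →* H := presLift (fun i => if i = 0 then g else 1)
    (by simp [twoPres, FreeGroup.lift_mk, ← pow_two, ← hg, pow_orderOf_eq_one])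
    fun i hi => if_neg (Nat.one_le_iff_ne_zero.1 hi)
  have hφ : φ (presProj _ (FreeGroup.of 0)) = g :=
    (presLift_presProj ..).trans (by simp)
  refine ⟨φ, (injective_iff_map_eq_one _).2 fun x hx => ?_, hφ⟩
  obtain ⟨n, rfl⟩ := exists_zpow_eq_twoPres x
  rw [map_zpow, hφ, ← orderOf_dvd_iff_zpow_eq_one, hg] at hx
  obtain ⟨m, rfl⟩ := hx
  rw [zpow_mul, zpow_natCast, twoPres_gen_sq, one_zpow]

theorem orderOf_twoPres_gen : orderOf (presProj twoPres (FreeGroup.of 0)) = 2 := by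
  have hg : orderOf (Multiplicative.ofAdd (1 : ZMod 2)) = 2 := by
    rw [orderOf_ofAdd_eq_addOrderOf, ZMod.addOrderOf_one]
  obtain ⟨φ, hφ, hgen⟩ := exists_injective_twoPres hg
  rw [← orderOf_injective φ hφ, hgen, hg]

end GroupOfOrderTwo

section Diagonal

theorem exists_partrec_forall_computable_mem :
    ∃ f : ℕ →. ℕ, Nat.Partrec f ∧ ∀ d : ℕ → ℕ, Computable d → ∃ e, d e ∈ f e := by
  refine ⟨fun e => (Denumerable.ofNat Nat.Partrec.Code e).eval e, Partrec.nat_iff.1 <|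
    Nat.Partrec.Code.eval_part.comp (Computable.ofNat _) .id, fun d hd => ?_⟩
  obtain ⟨c, hc⟩ := Nat.Partrec.Code.exists_code.1 (Partrec.nat_iff.1 hd.partrec)
  exact ⟨Encodable.encode c, by simp [hc]⟩

theorem exists_toNat_mem_iff {f : ℕ →. ℕ} (hf : ∀ d : ℕ → ℕ, Computable d → ∃ e, d e ∈ f e)
    {p : ℕ → Prop} (hp : ComputablePred p) : ∃ e b, b.toNat ∈ f e ∧ (b = true ↔ p e) := by
  obtain ⟨d, hd, rfl⟩ := ComputablePred.computable_iff.1 hp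
  obtain ⟨e, he⟩ := hf (fun e => (d e).toNat) ((Primrec.dom_finite Bool.toNat).to_comp.comp hd)
  exact ⟨e, d e, he, Iff.rfl⟩

theorem not_forall_toNat_mem_imp {f : ℕ →. ℕ}
    (hf : ∀ d : ℕ → ℕ, Computable d → ∃ e, d e ∈ f e) {p : Bool → ℕ → Prop}
    (hp : ∀ b, REPred (p b)) (hcompl : ∀ e, p true e ↔ ¬ p false e) :
    ¬ ∀ e b, b.toNat ∈ f e → p b e := by
  intro hmem
  have hcomp : ComputablePred (p false) := ComputablePred.computable_iff_re_compl_re'.2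
    ⟨hp false, (hp true).of_eq hcompl⟩
  obtain ⟨e, b, hb, hiff⟩ := exists_toNat_mem_iff hf hcomp
  cases b with
  | false => exact absurd (hiff.2 (hmem e false hb)) Bool.false_ne_true
  | true => exact (hcompl e).1 (hmem e true hb) (hiff.1 rfl)

end Diagonal

theorem retraction_true_eq_one_iff {G : Bool → Type*} [∀ b, Group (G b)] {g : CoprodI G}
    (hg : IsOfFinOrder g) (hne : g ≠ 1) : retraction true g = 1 ↔ retraction false g ≠ 1 := by
  obtain ⟨_ | _, hi, hj⟩ := exists_retraction_ne_one_of_isOfFinOrder hg hne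
  · exact iff_of_true (hj true (by decide)) hi
  · exact iff_of_false hi (not_not.2 (hj false (by decide)))

section FreeProductInvolutions

variable {N : ℕ} {L : Bool → List Word}

theorem exists_orderOf_freeProd_eq {b : Bool} (x : presGroup (N, L b)) :
    ∃ y : presGroup (freeProd N L), orderOf y = orderOf x :=
  let inclusion := CoprodI.of (M := fun b => presGroup (N, L b)) (i := b)
  ⟨(freeProdEquiv N L).symm (inclusion x), ((freeProdEquiv N L).symm.orderOf_eq _).trans
    (orderOf_injective inclusion (CoprodI.of_injective b) x)⟩

theorem presProj_retractWord_true_eq_one_iff {w : Word}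
    (hw : orderOf (presProj (freeProd N L) (FreeGroup.mk w)) = 2) :
    presProj (N, L true) (FreeGroup.mk (retractWord true w)) = 1 ↔
      presProj (N, L false) (FreeGroup.mk (retractWord false w)) ≠ 1 := by
  rw [← MulEquiv.orderOf_eq (freeProdEquiv N L)] at hw
  rw [← retraction_freeProdEquiv_mk, ← retraction_freeProdEquiv_mk]
  refine retraction_true_eq_one_iff (orderOf_pos_iff.1 (hw ▸ two_pos)) fun hone => ?_
  rw [hone, orderOf_one] at hw
  exact absurd hw (by decide)

theorem presProj_retractWord_eq_one {w : Word} {b : Bool} [IsMulTorsionFree (presGroup (N, L b))]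
    (hw : orderOf (presProj (freeProd N L) (FreeGroup.mk w)) = 2) :
    presProj (N, L b) (FreeGroup.mk (retractWord b w)) = 1 := by
  rw [← retraction_freeProdEquiv_mk, ← isOfFinOrder_iff_eq_one]
  exact MonoidHom.isOfFinOrder _ (MonoidHom.isOfFinOrder (freeProdEquiv N L).toMonoidHom
    (orderOf_pos_iff.1 (hw ▸ two_pos)))

end FreeProductInvolutions

end EmbeddingSearch

open EmbeddingSearch

/-- (Chiodo) The embedding search problem is algorithmically unsolvable: no
algorithm can output words describing an explicit embedding on the generators,
even given the promise that an embedding exists. -/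
theorem embedding_search_problem_unsolvable :
    ¬ ∃ F : (ℕ × List (List (ℕ × Bool))) × (ℕ × List (List (ℕ × Bool))) →
        List (List (ℕ × Bool)), Computable F ∧
      ∀ P₁ P₂ : ℕ × List (List (ℕ × Bool)),
        (∃ ψ : presGroup P₁ →* presGroup P₂, Function.Injective ψ) →
          ∃ φ : presGroup P₁ →* presGroup P₂, Function.Injective φ ∧
            ∀ i : ℕ, φ (presProj P₁ (FreeGroup.of i)) =
              presProj P₂ (FreeGroup.mk ((F (P₁, P₂)).getD i [])) := by
  rintro ⟨F, hF, hembed⟩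
  obtain ⟨f, hf, hdiag⟩ := exists_partrec_forall_computable_mem
  obtain ⟨N, L, hL, htorsionFree, htorsion⟩ :=
    exists_primrec_isMulTorsionFree_and_orderOf_eq_two hf
  let word (e : ℕ) : Word := (F (twoPres, freeProd N (L e))).getD 0 []
  have hword : Computable word := (Primrec.list_getD []).to_comp.comp
    (hF.comp ((Computable.const _).pair (primrec_freeProd N hL).to_comp)) (.const 0)
  have houtput (e : ℕ) : orderOf (presProj (freeProd N (L e)) (.mk (word e))) = 2 := by
    obtain ⟨b, x, hx⟩ := htorsion e
    obtain ⟨y, hy⟩ := exists_orderOf_freeProd_eq (L := L e) x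
    obtain ⟨ψ, hψ, -⟩ := exists_injective_twoPres (hy.trans hx)
    obtain ⟨φ, hφ, hgen⟩ := hembed twoPres (freeProd N (L e)) ⟨ψ, hψ⟩
    rw [← hgen 0, orderOf_injective φ hφ, orderOf_twoPres_gen]
  refine not_forall_toNat_mem_imp hdiag
    (p := fun b e => presProj (N, L e b) (.mk (retractWord b (word e))) = 1) (fun b => ?_)
    (fun e => presProj_retractWord_true_eq_one_iff (houtput e)) fun e b hb => ?_
  · exact rePred_comp rePred_presProj_mk_eq_one
      (f := fun e => ((N, L e b), retractWord b (word e))) <|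
      ((Computable.const N).pair (hL b).to_comp).pair ((primrec_retractWord b).to_comp.comp hword)
  · have := htorsionFree e b hb
    exact presProj_retractWord_eq_one (houtput e)
end

section
/- (Whitehead) The automorphism problem in a free group of finite rank is decidable: for every r : ℕ, the predicate on pairs of words asking whether some automorphism of the free group F_r carries the first to the second is computably decidable: ComputablePred (fun p : List (Fin r × Bool) × List (Fin r × Bool) => ∃ φ : FreeGroup (Fin r) ≃* FreeGroup (Fin r), φ (FreeGroup.mk p.1) = FreeGroup.mk p.2). -/
/-!
A subset `K` of a free group which every right translation changes only by a finite set is a cut of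
the Cayley tree with finite coboundary, and the number of times the translates of a path labelled
`w` cross this cut is a submodular function of `K`. By uncrossing, if no Whitehead involution
decreases the total length of a tuple `w`, then every cut separating the two ends of the axis of a
generator `x` is crossed by `w` at least as often as the letters `x` and `x⁻¹` occur in `w`.

For an automorphism `φ`, pull back along `φ` the cones at the generators. The matrix of signed
crossing numbers of these cuts by the generators is invertible over `ℤ`, so some term of its Leibniz
expansion is nonzero, which matches the cuts bijectively with generators the ends of whose axes they
separate, up to translation. Summing the crossing estimate over the generators shows that `φ`
does not decrease the total length of `w` either.

If `φ u` is a shortest element of the orbit of `u`, apply this to the tuple consisting of many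
copies of `u` and the elements `φ⁻¹ x`: as long as one of the latter is longer than a generator,
some Whitehead involution decreases the total length, and in particular does not lengthen `u`. So
`u` is joined to a shortest element of its orbit by a fixed finite set of automorphisms without ever
becoming longer, and the orbit problem is a reachability problem in a finite graph.
-/

open Filter

namespace Whitehead

section AlmostInvariantSets

variable {G H : Type*} [Group G] [Group H] {K C P : Set G} {a : G}

/-- The elements `g` for which the pair `g`, `g * h` is separated by `K`: for a generator `h`, the
edges labelled `h` of the Cayley graph in the coboundary of `K`. -/
def crossing (K : Set G) (h : G) : Set G := {g | ¬(g ∈ K ↔ g * h ∈ K)}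

/-- The cardinality of `crossing K h`; it is `0` when that set is infinite, so it is only used for
almost invariant sets `K`. -/
noncomputable def crossingNumber (K : Set G) (h : G) : ℕ := (crossing K h).ncard

/-- Almost invariant sets in the sense of Cohen and Stallings: every right translate of `K` agrees
with `K` up to a finite set. -/
def AlmostInvariant (K : Set G) : Prop := ∀ h, (crossing K h).Finite

theorem mem_crossing {g h : G} : g ∈ crossing K h ↔ ¬(g ∈ K ↔ g * h ∈ K) := Iff.rfl

theorem crossing_one (K : Set G) : crossing K 1 = ∅ := by
  simp [crossing]

theorem crossing_mul_subset (K : Set G) (h k : G) :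
    crossing K (h * k) ⊆ crossing K h ∪ (· * h) ⁻¹' crossing K k := by
  intro g
  simp only [Set.mem_union, Set.mem_preimage, mem_crossing, mul_assoc]
  tauto

theorem crossing_inv (K : Set G) (h : G) :
    crossing K h⁻¹ = (· * h⁻¹) ⁻¹' crossing K h := by
  ext g
  simp only [Set.mem_preimage, mem_crossing, inv_mul_cancel_right]
  tauto

theorem crossing_compl (K : Set G) (h : G) : crossing Kᶜ h = crossing K h := by
  ext g
  simp only [mem_crossing, Set.mem_compl_iff, not_iff_not]

theorem crossing_union_union_crossing_inter_subset (K C : Set G) (h : G) :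
    crossing (K ∪ C) h ∪ crossing (K ∩ C) h ⊆ crossing K h ∪ crossing C h := by
  intro g
  simp only [mem_crossing, Set.mem_union, Set.mem_inter_iff]
  tauto

theorem crossing_union_inter_crossing_inter_subset (K C : Set G) (h : G) :
    crossing (K ∪ C) h ∩ crossing (K ∩ C) h ⊆ crossing K h ∩ crossing C h := by
  intro g
  simp only [mem_crossing, Set.mem_union, Set.mem_inter_iff]
  tauto

theorem crossing_preimage (f : G ≃ H) {h : G} {k : H} (hf : ∀ g, f (g * h) = f g * k)
    (K : Set H) : crossing (f ⁻¹' K) h = f ⁻¹' crossing K k := by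
  ext g
  simp only [mem_crossing, Set.mem_preimage, hf]

theorem finite_preimage_mul_right {S : Set G} (hS : S.Finite) (h : G) :
    ((· * h) ⁻¹' S).Finite :=
  hS.preimage (mul_left_injective h).injOn

namespace AlmostInvariant

theorem of_closure_eq_top {S : Set G} (hS : Subgroup.closure S = ⊤)
    (hK : ∀ s ∈ S, (crossing K s).Finite) : AlmostInvariant K := by
  intro h
  induction (hS ▸ Subgroup.mem_top h : h ∈ Subgroup.closure S) using
    Subgroup.closure_induction with
  | mem s hs => exact hK s hs
  | one => simp [crossing_one]
  | mul h k _ _ hh hk =>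
    exact (hh.union (finite_preimage_mul_right hk h)).subset (crossing_mul_subset K h k)
  | inv h _ hh => exact crossing_inv K h ▸ finite_preimage_mul_right hh h⁻¹

theorem compl (hK : AlmostInvariant K) : AlmostInvariant Kᶜ := fun h =>
  crossing_compl K h ▸ hK h

theorem union (hK : AlmostInvariant K) (hC : AlmostInvariant C) : AlmostInvariant (K ∪ C) :=
  fun h => ((hK h).union (hC h)).subset
    (Set.subset_union_left.trans (crossing_union_union_crossing_inter_subset K C h))

theorem inter (hK : AlmostInvariant K) (hC : AlmostInvariant C) : AlmostInvariant (K ∩ C) :=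
  fun h => ((hK h).union (hC h)).subset
    (Set.subset_union_right.trans (crossing_union_union_crossing_inter_subset K C h))

theorem biUnion {ι : Type*} {s : Set ι} (hs : s.Finite) {K : ι → Set G}
    (hK : ∀ i, AlmostInvariant (K i)) : AlmostInvariant (⋃ i ∈ s, K i) := fun h => by
  refine (hs.biUnion fun i _ => hK i h).subset fun g hg => ?_
  by_contra hgK
  simp only [mem_crossing, Set.mem_iUnion, not_exists, not_not] at hg hgK
  exact hg (exists_congr fun i => exists_congr fun hi => hgK i hi)

theorem preimage_mul_left (hK : AlmostInvariant K) (k : G) : AlmostInvariant ((k * ·) ⁻¹' K) :=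
  fun h => (crossing_preimage (Equiv.mulLeft k) (fun g => (mul_assoc k g h).symm) K) ▸
    (hK h).preimage (mul_right_injective k).injOn

theorem preimage_mulEquiv {K : Set H} (hK : AlmostInvariant K) (φ : G ≃* H) :
    AlmostInvariant (φ ⁻¹' K) := fun h =>
  (crossing_preimage φ.toEquiv (fun g => map_mul φ g h) K) ▸
    (hK (φ h)).preimage φ.injective.injOn

end AlmostInvariant

theorem crossingNumber_one (K : Set G) : crossingNumber K 1 = 0 := by
  rw [crossingNumber, crossing_one, Set.ncard_empty]

theorem crossingNumber_compl (K : Set G) (h : G) : crossingNumber Kᶜ h = crossingNumber K h := by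
  rw [crossingNumber, crossing_compl, crossingNumber]

theorem crossingNumber_preimage (f : G ≃ H) {h : G} {k : H} (hf : ∀ g, f (g * h) = f g * k)
    (K : Set H) : crossingNumber (f ⁻¹' K) h = crossingNumber K k := by
  rw [crossingNumber, crossing_preimage f hf,
    Set.ncard_preimage_of_injective_subset_range f.injective (by simp), crossingNumber]

theorem crossingNumber_preimage_mul_left (k : G) (K : Set G) (h : G) :
    crossingNumber ((k * ·) ⁻¹' K) h = crossingNumber K h :=
  crossingNumber_preimage (Equiv.mulLeft k) (fun g => (mul_assoc k g h).symm) K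

theorem crossingNumber_preimage_mulEquiv (φ : G ≃* H) (K : Set H) (h : G) :
    crossingNumber (φ ⁻¹' K) h = crossingNumber K (φ h) :=
  crossingNumber_preimage φ.toEquiv (fun g => map_mul φ g h) K

theorem crossingNumber_mul_le (hK : AlmostInvariant K) (h k : G) :
    crossingNumber K (h * k) ≤ crossingNumber K h + crossingNumber K k := by
  have ncard_translate : ((· * h) ⁻¹' crossing K k).ncard = crossingNumber K k :=
    Set.ncard_preimage_of_injective_subset_range (mul_left_injective h)
      (fun g _ => ⟨g * h⁻¹, inv_mul_cancel_right g h⟩)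
  calc crossingNumber K (h * k)
      ≤ (crossing K h ∪ (· * h) ⁻¹' crossing K k).ncard :=
        Set.ncard_le_ncard (crossing_mul_subset K h k)
          ((hK h).union (finite_preimage_mul_right (hK k) h))
    _ ≤ crossingNumber K h + crossingNumber K k :=
        ncard_translate ▸ Set.ncard_union_le _ _

theorem crossingNumber_union_add_inter_le (hK : AlmostInvariant K) (hC : AlmostInvariant C)
    (h : G) :
    crossingNumber (K ∪ C) h + crossingNumber (K ∩ C) h ≤
      crossingNumber K h + crossingNumber C h := by
  unfold crossingNumber
  rw [← Set.ncard_union_add_ncard_inter _ _ (hK.union hC h) (hK.inter hC h),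
    ← Set.ncard_union_add_ncard_inter _ _ (hK h) (hC h)]
  exact Nat.add_le_add
    (Set.ncard_le_ncard (crossing_union_union_crossing_inter_subset K C h) ((hK h).union (hC h)))
    (Set.ncard_le_ncard (crossing_union_inter_crossing_inter_subset K C h)
      ((hK h).inter_of_left _))

/-- The number of `g` with `g ∉ K` and `g * h ∈ K`, minus the number of those with `g ∈ K` and
`g * h ∉ K`; it is `0` when infinitely many `g` contribute. -/
noncomputable def flux (K : Set G) (h : G) : ℤ :=
  ∑ᶠ g, (K.indicator 1 (g * h) - K.indicator 1 g)

theorem support_indicator_mul_sub_subset (K : Set G) (h : G) :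
    (Function.support fun g => (K.indicator 1 (g * h) - K.indicator 1 g : ℤ)) ⊆
      crossing K h := by
  intro g hg hK
  classical simp [Set.indicator_apply, hK] at hg

theorem flux_mul (hK : AlmostInvariant K) (h k : G) : flux K (h * k) = flux K h + flux K k := by
  have flux_translate :
      flux K k = ∑ᶠ g, (K.indicator 1 (g * h * k) - K.indicator 1 (g * h)) :=
    (finsum_comp_equiv (Equiv.mulRight h)).symm
  have hh := (hK h).subset (support_indicator_mul_sub_subset K h)
  have hk : (Function.support fun g =>
      (K.indicator 1 (g * h * k) - K.indicator 1 (g * h) : ℤ)).Finite :=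
    finite_preimage_mul_right ((hK k).subset (support_indicator_mul_sub_subset K k)) h
  rw [flux_translate, flux, flux, ← finsum_add_distrib hh hk]
  exact finsum_congr fun g => by rw [mul_assoc]; ring

/-- `flux K` as a homomorphism. -/
noncomputable def fluxHom (hK : AlmostInvariant K) : G →* Multiplicative ℤ :=
  MonoidHom.mk' (fun h => Multiplicative.ofAdd (flux K h)) fun h k => by
    rw [flux_mul hK, ofAdd_add]

theorem toAdd_fluxHom (hK : AlmostInvariant K) (h : G) : (fluxHom hK h).toAdd = flux K h := rfl

theorem flux_preimage_mulEquiv (φ : G ≃* H) (K : Set H) (h : G) :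
    flux (φ ⁻¹' K) h = flux K (φ h) := by
  unfold flux
  rw [← finsum_comp_equiv φ.toEquiv]
  exact finsum_congr fun g => by
    simp only [MulEquiv.toEquiv_eq_coe, EquivLike.coe_coe, ← map_mul]
    rfl

theorem flux_eq_zero_of_finite_symmDiff (hP : ∀ g, g * a ∈ P ↔ g ∈ P)
    (hKP : (symmDiff K P).Finite) : flux K a = 0 := by
  classical
  let ψ : G → ℤ := K.indicator 1 - P.indicator 1
  have support_ψ : (Function.support ψ).Finite := hKP.subset fun g hg => by
    by_contra hKP
    simp only [Set.mem_symmDiff] at hKP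
    by_cases hgK : g ∈ K <;> simp_all [ψ]
  have translate : ∀ g, (K.indicator 1 (g * a) - K.indicator 1 g : ℤ) = ψ (g * a) - ψ g :=
    fun g => by simp [ψ, Set.indicator_apply, hP]
  have support_translate : (Function.support fun g => ψ (g * a)).Finite :=
    finite_preimage_mul_right support_ψ a
  have sum_translate : ∑ᶠ g, ψ (g * a) = ∑ᶠ g, ψ g := finsum_comp_equiv (Equiv.mulRight a)
  rw [flux, finsum_congr translate, finsum_sub_distrib support_translate support_ψ,
    sum_translate, sub_self]

/-- `K` contains the end of the axis `⟨a⟩` at `a ^ ∞` and not the one at `a ^ (-∞)`. -/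
def SeparatesEnds (K : Set G) (a : G) : Prop :=
  ∀ᶠ n : ℕ in atTop, a ^ n ∈ K ∧ a⁻¹ ^ n ∉ K

theorem SeparatesEnds.compl (h : SeparatesEnds K a) : SeparatesEnds Kᶜ a⁻¹ :=
  h.mono fun n hn => ⟨hn.2, by simpa using hn.1⟩

theorem eventually_mem_or_eventually_notMem (hK : AlmostInvariant K) (ha : ¬IsOfFinOrder a)
    (g : G) : (∀ᶠ n : ℕ in atTop, g * a ^ n ∈ K) ∨ ∀ᶠ n : ℕ in atTop, g * a ^ n ∉ K := by
  have finite_changes : {n : ℕ | g * a ^ n ∈ crossing K a}.Finite :=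
    (hK a).preimage
      ((mul_right_injective g).comp (injective_pow_iff_not_isOfFinOrder.2 ha)).injOn
  obtain ⟨N, hN⟩ := finite_changes.bddAbove
  refine eventuallyConst_pred.1 (eventuallyConst_atTop_nat.2 ⟨N + 1, fun n hn => ?_⟩)
  have not_crossing : g * a ^ n ∉ crossing K a := fun h => absurd (hN h) (by omega)
  rw [mem_crossing, not_not, mul_assoc, ← pow_succ] at not_crossing
  exact propext not_crossing.symm

-- Going forward from a point of `S` along its `a`-orbit one leaves `S` across one of the finitely
-- many crossings, and each crossing is reached from only finitely many points of `S`.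
theorem finite_of_finite_crossing {S : Set G} (hS : (crossing S a).Finite)
    (forward : ∀ g, ∃ n : ℕ, g * a ^ n ∉ S)
    (backward : ∀ g, ∀ᶠ n : ℕ in atTop, g * a⁻¹ ^ n ∉ S) : S.Finite := by
  have finite_backward : ∀ d, {n : ℕ | d * a⁻¹ ^ n ∈ S}.Finite := fun d => by
    obtain ⟨N, hN⟩ := eventually_atTop.1 (backward d)
    exact (Set.finite_lt_nat N).subset fun n hn => not_le.1 fun h => hN n h hn
  refine (hS.biUnion fun d _ => (finite_backward d).image fun n => d * a⁻¹ ^ n).subset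
    fun g hg => ?_
  classical
  obtain ⟨n, hn, hlast⟩ : ∃ n : ℕ, g * a ^ n ∈ S ∧ g * a ^ (n + 1) ∉ S := by
    by_contra! h
    obtain ⟨m, hm⟩ := forward g
    exact hm (Nat.rec (by simpa using hg) h m)
  have hback : g * a ^ n * a⁻¹ ^ n = g := by simp
  refine Set.mem_biUnion (x := g * a ^ n) ?_ ⟨n, ?_, hback⟩
  · rw [mem_crossing, mul_assoc, ← pow_succ]
    tauto
  · rwa [Set.mem_ofPred_eq, hback]

/-- The union of the left cosets of `⟨a⟩` whose end at `a ^ (-∞)` lies in `K`. -/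
def backwardLimit (K : Set G) (a : G) : Set G := {g | ∀ᶠ n : ℕ in atTop, g * a⁻¹ ^ n ∈ K}

theorem mul_mem_backwardLimit (K : Set G) (a g : G) :
    g * a ∈ backwardLimit K a ↔ g ∈ backwardLimit K a := by
  have shift : ∀ n : ℕ, g * a * a⁻¹ ^ (n + 1) = g * a⁻¹ ^ n := fun n => by
    rw [pow_succ', mul_assoc, mul_inv_cancel_left]
  simp only [backwardLimit, Set.mem_ofPred_eq]
  rw [← map_add_atTop_eq_nat 1, eventually_map]
  simp only [shift, map_add_atTop_eq_nat]

theorem mul_pow_mem_backwardLimit (K : Set G) (a g : G) (n : ℕ) :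
    g * a ^ n ∈ backwardLimit K a ↔ g ∈ backwardLimit K a := by
  induction n with
  | zero => simp
  | succ n ih => rw [pow_succ, ← mul_assoc, mul_mem_backwardLimit, ih]

theorem mul_inv_pow_mem_backwardLimit (K : Set G) (a g : G) (n : ℕ) :
    g * a⁻¹ ^ n ∈ backwardLimit K a ↔ g ∈ backwardLimit K a := by
  rw [← mul_pow_mem_backwardLimit K a _ n, mul_assoc, inv_pow, inv_mul_cancel, mul_one]

theorem exists_separatesEnds_of_flux_ne_zero (hK : AlmostInvariant K) (ha : ¬IsOfFinOrder a)
    (hflux : flux K a ≠ 0) :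
    ∃ g, SeparatesEnds ((g * ·) ⁻¹' K) a ∨ SeparatesEnds ((g * ·) ⁻¹' K) a⁻¹ := by
  contrapose! hflux
  have backward_of_notMem : ∀ g, g ∉ backwardLimit K a →
      ∀ᶠ n : ℕ in atTop, g * a⁻¹ ^ n ∉ K := fun g hg =>
    (eventually_mem_or_eventually_notMem hK (by simpa using ha) g).resolve_left hg
  have forward_of_mem : ∀ g ∈ backwardLimit K a,
      ∀ᶠ n : ℕ in atTop, g * a ^ n ∈ K := fun g hg =>
    (eventually_mem_or_eventually_notMem hK ha g).resolve_right fun h =>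
      (hflux g).2 ((Eventually.and hg h).mono fun n hn => ⟨hn.1, by simpa using hn.2⟩)
  have forward_of_notMem : ∀ g, g ∉ backwardLimit K a →
      ∀ᶠ n : ℕ in atTop, g * a ^ n ∉ K := fun g hg =>
    (eventually_mem_or_eventually_notMem hK ha g).resolve_left fun h =>
      (hflux g).1 (h.and (backward_of_notMem g hg))
  have finite_crossing : (crossing (symmDiff K (backwardLimit K a)) a).Finite :=
    (hK a).subset fun g hg hgK => hg (by simp only [Set.mem_symmDiff, hgK, mul_mem_backwardLimit])
  refine flux_eq_zero_of_finite_symmDiff (mul_mem_backwardLimit K a)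
    (finite_of_finite_crossing finite_crossing (fun g => Eventually.exists (f := atTop) ?_)
      fun g => ?_)
  all_goals
    simp only [Set.mem_symmDiff, mul_pow_mem_backwardLimit, mul_inv_pow_mem_backwardLimit]
    by_cases hg : g ∈ backwardLimit K a
  · exact (forward_of_mem g hg).mono fun n hn => by tauto
  · exact (forward_of_notMem g hg).mono fun n hn => by tauto
  · exact Eventually.mono hg fun n hn => by tauto
  · exact (backward_of_notMem g hg).mono fun n hn => by tauto

end AlmostInvariantSets

section Words

open FreeGroup (toWord mk of isReduced_toWord toWord_mul mk_toWord)

variable {α : Type*}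

/-- The formal inverse of a letter. -/
def invLetter (z : α × Bool) : α × Bool := (z.1, !z.2)

/-- The element of the free group given by a one-letter word. -/
def letter (z : α × Bool) : FreeGroup α := mk [z]

@[simp]
theorem invLetter_invLetter (z : α × Bool) : invLetter (invLetter z) = z := by
  simp [invLetter]

@[simp]
theorem invLetter_fst (z : α × Bool) : (invLetter z).1 = z.1 := rfl

theorem invLetter_ne (z : α × Bool) : invLetter z ≠ z := by
  simp [invLetter, Prod.ext_iff]

theorem eq_or_eq_invLetter {y z : α × Bool} (h : y.1 = z.1) : y = z ∨ y = invLetter z := by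
  rcases y with ⟨y, _ | _⟩ <;> rcases z with ⟨z, _ | _⟩ <;> simp_all [invLetter]

@[simp]
theorem letter_invLetter (z : α × Bool) : letter (invLetter z) = (letter z)⁻¹ := rfl

theorem letter_true (x : α) : letter (x, true) = of x := rfl

theorem mk_cons (z : α × Bool) (l : List (α × Bool)) : mk (z :: l) = letter z * mk l := rfl

theorem mk_concat (l : List (α × Bool)) (z : α × Bool) : mk (l ++ [z]) = mk l * letter z := rfl

theorem letter_ne_one (z : α × Bool) : letter z ≠ 1 := by
  classical
  exact fun h => List.cons_ne_nil z [] (congrArg toWord h)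

theorem not_isOfFinOrder_letter (z : α × Bool) : ¬IsOfFinOrder (letter z) := by
  rw [isOfFinOrder_iff_eq_one]
  exact letter_ne_one z

variable [DecidableEq α] {g h k w : FreeGroup α} {p s : List (α × Bool)} {x y z : α × Bool}

@[simp]
theorem toWord_letter (z : α × Bool) : (letter z).toWord = [z] := rfl

@[simp]
theorem norm_letter (z : α × Bool) : (letter z).norm = 1 := rfl

theorem toWord_letter_pow (z : α × Bool) (n : ℕ) :
    (letter z ^ n).toWord = List.replicate n z := by
  rw [FreeGroup.toWord_pow, toWord_letter, List.flatten_replicate_singleton,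
    FreeGroup.reduce_replicate]

theorem toWord_mk_left (h : w.toWord = p ++ s) : (mk p).toWord = p :=
  (isReduced_toWord.infix ⟨[], s, h.symm⟩ : FreeGroup.IsReduced p).reduce_eq

theorem toWord_mk_right (h : w.toWord = p ++ s) : (mk s).toWord = s :=
  (isReduced_toWord.infix ⟨p, [], by rw [List.append_nil, h]⟩ : FreeGroup.IsReduced s).reduce_eq

/-- The elements whose reduced word begins with that of `h`. -/
def cone (h : FreeGroup α) : Set (FreeGroup α) := {g | h.toWord <+: g.toWord}

theorem mem_cone : g ∈ cone h ↔ h.toWord <+: g.toWord := Iff.rfl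

theorem mem_cone_self (h : FreeGroup α) : h ∈ cone h := List.prefix_rfl

theorem cone_subset_cone (hg : g ∈ cone h) : cone g ⊆ cone h := fun _ hk => hg.trans hk

theorem mem_cone_letter_iff : g ∈ cone (letter z) ↔ g.toWord.head? = some z := by
  rw [mem_cone, toWord_letter]
  cases g.toWord <;> simp [eq_comm]

theorem letter_notMem_cone_invLetter (z : α × Bool) : letter z ∉ cone (letter (invLetter z)) := by
  simpa only [mem_cone_letter_iff, toWord_letter, List.head?_cons, Option.some.injEq] using
    (invLetter_ne z).symm

theorem letter_pow_mem_cone (z : α × Bool) {m n : ℕ} (hmn : m ≤ n) :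
    letter z ^ n ∈ cone (letter z ^ m) := by
  rw [mem_cone, toWord_letter_pow, toWord_letter_pow]
  exact List.prefix_replicate_iff.2 ⟨by simpa using hmn, by simp⟩

theorem eq_letter_pow_of_mem_cone {n : ℕ} (h_mem : letter z ^ n ∈ cone h) :
    h = letter z ^ h.norm := by
  rw [mem_cone, toWord_letter_pow, List.prefix_replicate_iff] at h_mem
  rw [← FreeGroup.toWord_inj, toWord_letter_pow]
  exact h_mem.2

theorem inv_mul_eq_mk (hg : g.toWord = h.toWord ++ s) : h⁻¹ * g = mk s := by
  rw [← mk_toWord (x := g), hg, ← FreeGroup.mul_mk, mk_toWord, inv_mul_cancel_left]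

theorem toWord_mul_of_notMem_cone (hh : h.toWord = p ++ [x])
    (hg : g ∉ cone (letter (invLetter x))) : (h * g).toWord = h.toWord ++ g.toWord := by
  rw [toWord_mul]
  refine FreeGroup.IsReduced.reduce_eq (List.isChain_append.2
    ⟨isReduced_toWord, isReduced_toWord, fun y hy z hz heq => ?_⟩)
  obtain rfl : x = y := by simpa [hh] using hy
  rcases eq_or_eq_invLetter heq with rfl | rfl
  · rfl
  · exact absurd (mem_cone_letter_iff.2 hz) (by simpa using hg)

theorem mul_mem_cone_iff (hh : h.toWord = p ++ [x]) :
    h * g ∈ cone h ↔ g ∉ cone (letter (invLetter x)) := by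
  constructor
  · rintro ⟨s, hs⟩ hg
    have reduced : FreeGroup.IsReduced (p ++ [x] ++ s) := hh ▸ hs ▸ isReduced_toWord
    have hgs : g = mk s := by rw [← inv_mul_eq_mk hs.symm, inv_mul_cancel_left]
    rw [mem_cone_letter_iff, hgs, toWord_mk_right hs.symm] at hg
    have := (List.isChain_append.1 reduced).2.2 x (by simp) (invLetter x) hg rfl
    simp [invLetter] at this
  · exact fun hg => ⟨g.toWord, (toWord_mul_of_notMem_cone hh hg).symm⟩

theorem toWord_mul_letter (g : FreeGroup α) (z : α × Bool) :
    (g * letter z).toWord = g.toWord ++ [z] ∨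
      g.toWord = (g * letter z).toWord ++ [invLetter z] := by
  rcases List.eq_nil_or_concat g.toWord with hg | ⟨p, x, hg⟩
  · rw [FreeGroup.toWord_eq_nil_iff] at hg
    simp [hg]
  by_cases hz : z = invLetter x
  · right
    have cancel : g * letter z = mk p := by
      rw [← mk_toWord (x := g), hg, List.concat_eq_append, mk_concat, hz, letter_invLetter,
        mul_inv_cancel_right]
    rw [cancel, toWord_mk_left (hg.trans List.concat_eq_append), hg, hz, invLetter_invLetter,
      List.concat_eq_append]
  · left
    refine toWord_mul_of_notMem_cone (hg.trans List.concat_eq_append) ?_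
    simpa only [mem_cone_letter_iff, toWord_letter, List.head?_cons, Option.some.injEq] using hz

theorem mem_cone_iff_of_toWord_eq (hk : k.toWord = g.toWord ++ [z]) :
    k ∈ cone h ↔ k = h ∨ g ∈ cone h := by
  rw [mem_cone, hk, List.prefix_concat_iff, ← hk, FreeGroup.toWord_inj, eq_comm, mem_cone]

theorem eq_of_mem_crossing_cone (hg : g ∈ crossing (cone h) (letter z)) :
    (g * letter z = h ∧ h.toWord = g.toWord ++ [z]) ∨
      (g = h ∧ h.toWord = (g * letter z).toWord ++ [invLetter z]) := by
  rw [mem_crossing] at hg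
  rcases toWord_mul_letter g z with hz | hz
  · rw [mem_cone_iff_of_toWord_eq hz] at hg
    obtain rfl : g * letter z = h := by tauto
    exact .inl ⟨rfl, hz⟩
  · rw [mem_cone_iff_of_toWord_eq hz] at hg
    obtain rfl : g = h := by tauto
    exact .inr ⟨rfl, hz⟩

theorem almostInvariant_cone (h : FreeGroup α) : AlmostInvariant (cone h) := by
  refine .of_closure_eq_top (FreeGroup.closure_range_of α) ?_
  rintro _ ⟨x, rfl⟩
  refine (Set.toFinite {h * (of x)⁻¹, h}).subset fun g hg => ?_
  rw [← letter_true] at hg ⊢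
  exact (eq_of_mem_crossing_cone hg).imp (eq_mul_inv_of_mul_eq ·.1) (·.1)

theorem preimage_cone (hh : h.toWord = p ++ [x]) :
    (h * ·) ⁻¹' cone h = (cone (letter (invLetter x)))ᶜ :=
  Set.ext fun _ => mul_mem_cone_iff hh

theorem eq_of_mem_crossing_cone_letter (hg : g ∈ crossing (cone (letter y)) (letter z)) :
    (g = 1 ∧ z = y) ∨ (g = letter y ∧ z = invLetter y) := by
  rcases eq_of_mem_crossing_cone hg with ⟨-, hy⟩ | ⟨rfl, hy⟩
  · obtain ⟨hg, hz⟩ := List.append_inj' (show [] ++ [y] = g.toWord ++ [z] from hy) rfl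
    exact .inl ⟨FreeGroup.toWord_eq_nil_iff.1 hg.symm, by simpa using hz.symm⟩
  · obtain ⟨-, hz⟩ := List.append_inj' (show [] ++ [y] = _ ++ [invLetter z] from hy) rfl
    obtain rfl : y = invLetter z := by simpa using hz
    exact .inr ⟨rfl, by simp⟩

theorem crossingNumber_cone_letter_letter_le (y z : α × Bool) :
    crossingNumber (cone (letter y)) (letter z) ≤ if z.1 = y.1 then 1 else 0 := by
  split_ifs with h
  · refine (Set.ncard_le_one (almostInvariant_cone _ _)).2 fun g hg k hk => ?_
    have := invLetter_ne y
    have := eq_of_mem_crossing_cone_letter hg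
    have := eq_of_mem_crossing_cone_letter hk
    grind
  · rw [nonpos_iff_eq_zero, crossingNumber, Set.ncard_eq_zero (almostInvariant_cone _ _)]
    refine Set.eq_empty_of_forall_notMem fun g hg => h ?_
    rcases eq_of_mem_crossing_cone_letter hg with ⟨-, rfl⟩ | ⟨-, rfl⟩ <;> rfl

theorem flux_cone_of (x y : α) :
    flux (cone (letter (y, true))) (of x) = if x = y then 1 else 0 := by
  rw [flux, finsum_eq_single _ 1]
  · have mem_iff : letter (x, true) ∈ cone (letter (y, true)) ↔ x = y := by
      simp [mem_cone_letter_iff]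
    have one_notMem : (1 : FreeGroup α) ∉ cone (letter (y, true)) := by
      simp [mem_cone_letter_iff]
    rw [one_mul, Set.indicator_of_notMem one_notMem, sub_zero, ← letter_true]
    split_ifs with hxy
    · rw [Set.indicator_of_mem (mem_iff.2 hxy), Pi.one_apply]
    · rw [Set.indicator_of_notMem (hxy ∘ mem_iff.1)]
  · intro g hg
    by_contra hflux
    rcases eq_of_mem_crossing_cone_letter (support_indicator_mul_sub_subset _ _ hflux) with
      ⟨rfl, -⟩ | ⟨-, hxy⟩
    · exact hg rfl
    · simp [invLetter] at hxy

/-- The number of occurrences of the generator `a`, with either sign, in the reduced word of `w`. -/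
def letterCount (a : α) (w : FreeGroup α) : ℕ := w.toWord.countP (·.1 = a)

theorem sum_letterCount [Fintype α] (w : FreeGroup α) : ∑ a, letterCount a w = w.norm := by
  unfold letterCount FreeGroup.norm
  induction w.toWord with
  | nil => simp
  | cons z l ih => simp [List.countP_cons, Finset.sum_add_distrib, ih]

theorem crossingNumber_cone_letter_le (y : α × Bool) (w : FreeGroup α) :
    crossingNumber (cone (letter y)) w ≤ letterCount y.1 w := by
  rw [letterCount]
  conv_lhs => rw [← mk_toWord (x := w)]
  induction w.toWord with
  | nil => rw [← FreeGroup.one_eq_mk, crossingNumber_one, List.countP_nil]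
  | cons z l ih =>
    simpa [mk_cons, List.countP_cons, add_comm] using
      (crossingNumber_mul_le (almostInvariant_cone _) (letter z) (mk l)).trans
        (Nat.add_le_add (crossingNumber_cone_letter_letter_le y z) ih)

/-- The vertices other than `1` at which `K` branches: `K` is not constant on their cones. -/
def splitVertices (K : Set (FreeGroup α)) : Set (FreeGroup α) :=
  {g | g ≠ 1 ∧ ∃ k ∈ cone g, ¬(k ∈ K ↔ g ∈ K)}

theorem exists_mem_crossing_of_mem_cone {K : Set (FreeGroup α)} (hk : k ∈ cone g)
    (hK : ¬(k ∈ K ↔ g ∈ K)) : ∃ z, ∃ v ∈ cone g, v ∈ crossing K (letter z) := by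
  contrapose! hK
  obtain ⟨s, hs⟩ := hk
  induction s using List.reverseRecOn generalizing k with
  | nil => rw [List.append_nil, FreeGroup.toWord_inj] at hs; rw [hs]
  | append_singleton s y ih =>
    rw [← List.append_assoc] at hs
    have hv := toWord_mk_left hs.symm
    have not_crossing := hK y _ ⟨s, hv.symm⟩
    rw [mem_crossing, not_not, ← mk_concat, hs, mk_toWord] at not_crossing
    exact not_crossing.symm.trans (ih hv.symm)

theorem finite_splitVertices [Finite α] {K : Set (FreeGroup α)} (hK : AlmostInvariant K) :
    (splitVertices K).Finite := by
  have finite_prefixes : ∀ k : FreeGroup α, {g | k ∈ cone g}.Finite := fun k =>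
    ((List.finite_toSet k.toWord.inits).preimage FreeGroup.toWord_injective.injOn).subset
      fun g hg => (List.mem_inits _ _).2 hg
  refine (Set.finite_iUnion fun z => (hK (letter z)).biUnion fun k _ => finite_prefixes k).subset ?_
  rintro g ⟨-, k, hk, hkK⟩
  obtain ⟨z, v, hv, hvK⟩ := exists_mem_crossing_of_mem_cone hk hkK
  exact Set.mem_iUnion.2 ⟨z, Set.mem_biUnion hvK hv⟩

end Words

section WhiteheadAutomorphisms

open FreeGroup (mk of mk_toWord)

variable {α : Type*} {A : Set (α × Bool)} {a z : α × Bool}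

/-- The letter `z` itself, erased if it is `a` or its inverse. -/
noncomputable def core (a z : α × Bool) : FreeGroup α :=
  {z : α × Bool | z.1 ≠ a.1}.mulIndicator letter z

theorem core_of_fst_eq (h : z.1 = a.1) : core a z = 1 :=
  Set.mulIndicator_of_notMem (not_not_intro h) _

theorem core_of_fst_ne (h : z.1 ≠ a.1) : core a z = letter z :=
  Set.mulIndicator_of_mem h _

theorem core_invLetter (a z : α × Bool) : core a (invLetter z) = (core a z)⁻¹ := by
  by_cases h : z.1 = a.1
  · rw [core_of_fst_eq h, core_of_fst_eq (by simpa using h), inv_one]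
  · rw [core_of_fst_ne h, core_of_fst_ne (by simpa using h), letter_invLetter]

variable [DecidableEq α] {g w : FreeGroup α} {p s : List (α × Bool)}

/-- The elements whose reduced word begins with a letter of `A`. -/
def cylinder (A : Set (α × Bool)) : Set (FreeGroup α) := ⋃ z ∈ A, cone (letter z)

theorem mem_cylinder_iff (hg : g.toWord.head? = some z) : g ∈ cylinder A ↔ z ∈ A := by
  simp [cylinder, mem_cone_letter_iff, hg]

theorem letter_mem_cylinder : letter z ∈ cylinder A ↔ z ∈ A := mem_cylinder_iff rfl

theorem one_notMem_cylinder (A : Set (α × Bool)) : (1 : FreeGroup α) ∉ cylinder A := by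
  simp [cylinder, mem_cone_letter_iff]

theorem almostInvariant_cylinder [Finite α] (A : Set (α × Bool)) :
    AlmostInvariant (cylinder A) :=
  .biUnion A.toFinite fun z => almostInvariant_cone (letter z)

/-- The letter `a` on `cylinder A`, and `1` elsewhere. -/
noncomputable def twist (A : Set (α × Bool)) (a : α × Bool) : FreeGroup α → FreeGroup α :=
  (cylinder A).mulIndicator fun _ => letter a

/-- The Whitehead endomorphism with multiplier `a` and cut `A`, composed with the inversion of the
generator `a`; the composition makes it an involution when `a ∈ A` and `invLetter a ∉ A`. -/
noncomputable def whiteheadHom (A : Set (α × Bool)) (a : α × Bool) :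
    FreeGroup α →* FreeGroup α :=
  FreeGroup.lift fun x => (twist A a (of x))⁻¹ * core a (x, true) * twist A a (of x)⁻¹

theorem twist_one (A : Set (α × Bool)) (a : α × Bool) : twist A a 1 = 1 :=
  Set.mulIndicator_of_notMem (one_notMem_cylinder A) _

theorem twist_eq_twist_letter (hg : g.toWord.head? = some z) :
    twist A a g = twist A a (letter z) := by
  classical
  simp only [twist, Set.mulIndicator_apply, letter_mem_cylinder, mem_cylinder_iff hg]

theorem whiteheadHom_letter (A : Set (α × Bool)) (a z : α × Bool) :
    whiteheadHom A a (letter z) =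
      (twist A a (letter z))⁻¹ * core a z * twist A a (letter z)⁻¹ := by
  have positive : ∀ x, whiteheadHom A a (letter (x, true)) = (twist A a (letter (x, true)))⁻¹ *
      core a (x, true) * twist A a (letter (x, true))⁻¹ := fun x => FreeGroup.lift_apply_of
  rcases z with ⟨x, _ | _⟩
  · rw [show (x, false) = invLetter (x, true) from rfl, letter_invLetter, map_inv, positive,
      core_invLetter, inv_inv]
    group
  · exact positive x

theorem whiteheadHom_multiplier (ha : a ∈ A) (ha' : invLetter a ∉ A) :
    whiteheadHom A a (letter a) = (letter a)⁻¹ := by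
  have htwist : twist A a (letter a) = letter a :=
    Set.mulIndicator_of_mem (letter_mem_cylinder.2 ha) _
  have htwist' : twist A a (letter a)⁻¹ = 1 :=
    Set.mulIndicator_of_notMem (mt letter_mem_cylinder.1 ha') _
  rw [whiteheadHom_letter, htwist, htwist', core_of_fst_eq rfl, mul_one, mul_one]

theorem whiteheadHom_twist (ha : a ∈ A) (ha' : invLetter a ∉ A) (g : FreeGroup α) :
    whiteheadHom A a (twist A a g) = (twist A a g)⁻¹ := by
  rcases Set.mulIndicator_eq_one_or_self (cylinder A) (fun _ => letter a) g with h | h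
  · rw [twist, h, map_one, inv_one]
  · rw [twist, h, whiteheadHom_multiplier ha ha']

theorem whiteheadHom_whiteheadHom_letter (ha : a ∈ A) (ha' : invLetter a ∉ A)
    (z : α × Bool) :
    whiteheadHom A a (whiteheadHom A a (letter z)) = letter z := by
  by_cases h : z.1 = a.1
  · have hinv := whiteheadHom_multiplier ha ha'
    rcases eq_or_eq_invLetter h with rfl | rfl <;> simp [hinv]
  · have hcore := whiteheadHom_letter A a z
    rw [core_of_fst_ne h] at hcore
    rw [hcore, map_mul, map_mul, map_inv, whiteheadHom_twist ha ha', whiteheadHom_twist ha ha',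
      hcore]
    group

theorem whiteheadHom_comp_self (ha : a ∈ A) (ha' : invLetter a ∉ A) :
    (whiteheadHom A a).comp (whiteheadHom A a) = MonoidHom.id (FreeGroup α) :=
  FreeGroup.ext_hom _ _ fun x => whiteheadHom_whiteheadHom_letter ha ha' (x, true)

/-- The involution `whiteheadHom A a` as an automorphism. -/
noncomputable def whiteheadInvolution (ha : a ∈ A) (ha' : invLetter a ∉ A) :
    FreeGroup α ≃* FreeGroup α :=
  (whiteheadHom A a).toMulEquiv (whiteheadHom A a) (whiteheadHom_comp_self ha ha')
    (whiteheadHom_comp_self ha ha')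

theorem whiteheadInvolution_apply (ha : a ∈ A) (ha' : invLetter a ∉ A) (g : FreeGroup α) :
    whiteheadInvolution ha ha' g = whiteheadHom A a g := rfl

theorem norm_twist_le (A : Set (α × Bool)) (a : α × Bool) (g : FreeGroup α) :
    (twist A a g).norm ≤ 1 := by
  rcases Set.mulIndicator_eq_one_or_self (cylinder A) (fun _ => letter a) g with h | h <;>
    simp [twist, h]

theorem norm_core (a z : α × Bool) : (core a z).norm + (if z.1 = a.1 then 1 else 0) = 1 := by
  split_ifs with h
  · simp [core_of_fst_eq h]
  · simp [core_of_fst_ne h]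

theorem norm_whiteheadHom_letter_le (A : Set (α × Bool)) (a z : α × Bool) :
    (whiteheadHom A a (letter z)).norm ≤ 3 := by
  rw [whiteheadHom_letter]
  have := FreeGroup.norm_mul_le ((twist A a (letter z))⁻¹ * core a z) (twist A a (letter z)⁻¹)
  have := FreeGroup.norm_mul_le (twist A a (letter z))⁻¹ (core a z)
  have := norm_twist_le A a (letter z)
  have := norm_twist_le A a (letter z)⁻¹
  have := norm_core a z
  rw [FreeGroup.norm_inv_eq] at *
  omega

open scoped Classical in
theorem norm_twist_mul_inv_twist_le (A : Set (α × Bool)) (a : α × Bool) (g w : FreeGroup α) :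
    (twist A a g * (twist A a (g * w))⁻¹).norm ≤ if g ∈ crossing (cylinder A) w then 1 else 0 := by
  by_cases hg : g ∈ cylinder A <;> by_cases hgw : g * w ∈ cylinder A <;>
    simp [twist, mem_crossing, hg, hgw]

open scoped Classical in
theorem ite_mem_add_ncard_longer_le {S : Set (FreeGroup α)} (hS : S.Finite) (g : FreeGroup α) :
    (if g ∈ S then 1 else 0) + {k ∈ S | g.norm + 1 ≤ k.norm}.ncard ≤
      {k ∈ S | g.norm ≤ k.norm}.ncard := by
  have longer_subset : {k ∈ S | g.norm + 1 ≤ k.norm} ⊆ {k ∈ S | g.norm ≤ k.norm} :=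
    fun k hk => ⟨hk.1, Nat.le_of_succ_le hk.2⟩
  split_ifs with hg
  · rw [add_comm, ← Set.ncard_insert_of_notMem (a := g) (by simp) (hS.sep _)]
    exact Set.ncard_le_ncard (Set.insert_subset ⟨hg, le_rfl⟩ longer_subset) (hS.sep _)
  · rw [zero_add]
    exact Set.ncard_le_ncard longer_subset (hS.sep _)

-- The prefixes of `w` have distinct lengths, so each one contributes its own crossing.
theorem norm_twist_prefix_add_ncard_le [Finite α] (A : Set (α × Bool)) (a : α × Bool)
    (hw : w.toWord = p ++ s) :
    (twist A a (mk p)⁻¹ * (twist A a (mk s))⁻¹).norm +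
        {g ∈ crossing (cylinder A) w | p.length + 1 ≤ g.norm}.ncard ≤
      {g ∈ crossing (cylinder A) w | p.length ≤ g.norm}.ncard := by
  classical
  have norm_prefix : (mk p)⁻¹.norm = p.length := by
    rw [FreeGroup.norm_inv_eq, FreeGroup.norm, toWord_mk_left hw]
  have prefix_mul : (mk p)⁻¹ * w = mk s := inv_mul_eq_mk (by rw [toWord_mk_left hw, hw])
  rw [← prefix_mul, ← norm_prefix]
  exact (Nat.add_le_add_right (norm_twist_mul_inv_twist_le A a _ w) _).trans
    (ite_mem_add_ncard_longer_le (almostInvariant_cylinder A w) _)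

theorem norm_twist_mul_whiteheadHom_add_countP_le [Finite α] (A : Set (α × Bool)) (a : α × Bool)
    (hw : w.toWord = p ++ s) :
    (twist A a (mk p)⁻¹ * whiteheadHom A a (mk s)).norm + s.countP (·.1 = a.1) ≤
      {g ∈ crossing (cylinder A) w | p.length ≤ g.norm}.ncard + s.length := by
  induction s generalizing p with
  | nil =>
    have turn := norm_twist_prefix_add_ncard_le A a hw
    rw [← FreeGroup.one_eq_mk, twist_one, inv_one, mul_one] at turn
    rw [← FreeGroup.one_eq_mk, map_one, mul_one, List.countP_nil, List.length_nil]
    omega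
  | cons x s ih =>
    have hwx : w.toWord = p ++ [x] ++ s := by simpa using hw
    have turn := norm_twist_prefix_add_ncard_le A a hw
    have tail := ih hwx
    have twist_suffix : twist A a (mk (x :: s)) = twist A a (letter x) :=
      twist_eq_twist_letter (by rw [toWord_mk_right hw, List.head?_cons])
    have twist_prefix : twist A a (mk (p ++ [x]))⁻¹ = twist A a (letter x)⁻¹ :=
      twist_eq_twist_letter (z := invLetter x) (by
        rw [FreeGroup.toWord_inv, toWord_mk_left hwx]
        simp [FreeGroup.invRev, invLetter])
    rw [twist_suffix] at turn
    rw [twist_prefix, List.length_append, List.length_singleton] at tail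
    have split : twist A a (mk p)⁻¹ * whiteheadHom A a (mk (x :: s)) =
        twist A a (mk p)⁻¹ * (twist A a (letter x))⁻¹ * core a x *
          (twist A a (letter x)⁻¹ * whiteheadHom A a (mk s)) := by
      rw [mk_cons, map_mul, whiteheadHom_letter]
      group
    have norm_le := FreeGroup.norm_mul_le (twist A a (mk p)⁻¹ * (twist A a (letter x))⁻¹ * core a x)
      (twist A a (letter x)⁻¹ * whiteheadHom A a (mk s))
    have norm_le' := FreeGroup.norm_mul_le (twist A a (mk p)⁻¹ * (twist A a (letter x))⁻¹)
      (core a x)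
    have hcore := norm_core a x
    rw [split, List.countP_cons, List.length_cons]
    simp only [decide_eq_true_eq]
    omega

theorem norm_whiteheadHom_add_letterCount_le [Finite α] (A : Set (α × Bool)) (a : α × Bool)
    (w : FreeGroup α) :
    (whiteheadHom A a w).norm + letterCount a.1 w ≤
      crossingNumber (cylinder A) w + w.norm := by
  have h := norm_twist_mul_whiteheadHom_add_countP_le A a (List.nil_append w.toWord).symm
  rw [← FreeGroup.one_eq_mk, inv_one, twist_one, one_mul, mk_toWord] at h
  simp only [List.length_nil, zero_le, and_true, Set.ofPred_mem_eq] at h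
  exact h

end WhiteheadAutomorphisms

section Uncrossing

variable {ι : Type*} [Fintype ι] {α : Type*} {a x : α × Bool}

/-- The total number of crossings of `K` by the members of the family `w`. -/
noncomputable def totalCrossing (w : ι → FreeGroup α) (K : Set (FreeGroup α)) : ℕ :=
  ∑ i, crossingNumber K (w i)

theorem totalCrossing_compl (w : ι → FreeGroup α) (K : Set (FreeGroup α)) :
    totalCrossing w Kᶜ = totalCrossing w K := by
  simp only [totalCrossing, crossingNumber_compl]

theorem totalCrossing_preimage_mul_left (w : ι → FreeGroup α) (h : FreeGroup α)
    (K : Set (FreeGroup α)) : totalCrossing w ((h * ·) ⁻¹' K) = totalCrossing w K := by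
  simp only [totalCrossing, crossingNumber_preimage_mul_left]

theorem totalCrossing_union_add_inter_le (w : ι → FreeGroup α) {K C : Set (FreeGroup α)}
    (hK : AlmostInvariant K) (hC : AlmostInvariant C) :
    totalCrossing w (K ∪ C) + totalCrossing w (K ∩ C) ≤
      totalCrossing w K + totalCrossing w C := by
  simp only [totalCrossing, ← Finset.sum_add_distrib]
  exact Finset.sum_le_sum fun i _ => crossingNumber_union_add_inter_le hK hC (w i)

variable [DecidableEq α] {w : ι → FreeGroup α} {K : Set (FreeGroup α)} {g h k : FreeGroup α}
  {p : List (α × Bool)}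

/-- The total number of occurrences of `a`, with either sign, in the reduced words of the
family `w`. -/
def totalCount (w : ι → FreeGroup α) (a : α) : ℕ := ∑ i, letterCount a (w i)

/-- In the Whitehead graph of `w`, no set of letters separating a letter from its inverse is
crossed less often than the star of that letter. -/
def StarsAreMinimalCuts (w : ι → FreeGroup α) : Prop :=
  ∀ (A : Set (α × Bool)) (a : α × Bool), a ∈ A → invLetter a ∉ A →
    totalCount w a.1 ≤ totalCrossing w (cylinder A)

theorem totalCrossing_cone_le (w : ι → FreeGroup α) (hh : h.toWord = p ++ [x]) :
    totalCrossing w (cone h) ≤ totalCount w x.1 := by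
  rw [← totalCrossing_preimage_mul_left w h, preimage_cone hh, totalCrossing_compl]
  exact Finset.sum_le_sum fun i _ => crossingNumber_cone_letter_le (invLetter x) (w i)

theorem splitVertices_compl (K : Set (FreeGroup α)) : splitVertices Kᶜ = splitVertices K := by
  simp only [splitVertices, Set.mem_compl_iff, not_iff_not]

theorem mem_iff_of_notMem_splitVertices (hg : g ∉ splitVertices K) (hg1 : g ≠ 1)
    (hk : k ∈ cone g) : k ∈ K ↔ g ∈ K :=
  not_not.1 fun hkg => hg ⟨hg1, k, hk, hkg⟩

theorem eq_cylinder_of_splitVertices_eq_empty (hK : splitVertices K = ∅) (h1 : 1 ∉ K) :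
    K = cylinder {z | letter z ∈ K} := by
  ext g
  cases hg : g.toWord.head? with
  | none =>
    rw [List.head?_eq_none_iff, FreeGroup.toWord_eq_nil_iff] at hg
    simp only [hg, h1, one_notMem_cylinder]
  | some z =>
    rw [mem_cylinder_iff hg]
    exact mem_iff_of_notMem_splitVertices (by simp [hK]) (by simp [letter_ne_one])
      (mem_cone_letter_iff.2 hg)

theorem totalCount_le_of_splitVertices_eq_empty (hw : StarsAreMinimalCuts w)
    (hK : splitVertices K = ∅) (hx : letter x ∈ K) (hx' : letter (invLetter x) ∉ K) :
    totalCount w x.1 ≤ totalCrossing w K := by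
  by_cases h1 : 1 ∈ K
  · rw [← totalCrossing_compl, eq_cylinder_of_splitVertices_eq_empty (K := Kᶜ)
      (by rwa [splitVertices_compl]) (not_not_intro h1)]
    exact hw _ (invLetter x) hx' (by simpa using hx)
  · rw [eq_cylinder_of_splitVertices_eq_empty hK h1]
    exact hw _ x hx hx'

theorem splitVertices_union_cone_subset (hh : h ∈ splitVertices K) :
    splitVertices (K ∪ cone h) ⊆ splitVertices K \ {h} := by
  rintro g ⟨hg1, k, hk, hkg⟩
  have notMem_cone : g ∉ cone h := fun hg =>
    hkg (iff_of_true (.inr (cone_subset_cone hg hk)) (.inr hg))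
  refine ⟨⟨hg1, ?_⟩, fun hgh => notMem_cone (hgh ▸ mem_cone_self g)⟩
  by_cases hgh : h ∈ cone g
  · obtain ⟨-, v, hv, hvh⟩ := hh
    by_contra! hconst
    exact hvh ((hconst v (cone_subset_cone hgh hv)).trans (hconst h hgh).symm)
  · have hkh : k ∉ cone h := fun hkh =>
      (List.prefix_or_prefix_of_prefix hkh hk).elim notMem_cone hgh
    exact ⟨k, hk, by simpa [hkh, notMem_cone] using hkg⟩

theorem mem_iff_of_norm_lt (hmax : ∀ g ∈ splitVertices K, g.norm ≤ h.norm)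
    (hg : h.norm < g.norm) (hk : k ∈ cone g) : k ∈ K ↔ g ∈ K :=
  mem_iff_of_notMem_splitVertices (fun hgK => (hmax g hgK).not_gt hg)
    (by rintro rfl; simp at hg) hk

theorem splitVertices_preimage_inter_cone (hmax : ∀ g ∈ splitVertices K, g.norm ≤ h.norm)
    (hh : h.toWord = p ++ [x]) : splitVertices ((h * ·) ⁻¹' (K ∩ cone h)) = ∅ := by
  refine Set.eq_empty_of_forall_notMem ?_
  rintro g ⟨hg1, k, hk, hkg⟩
  refine hkg ?_
  have same_head : k ∈ cone (letter (invLetter x)) ↔ g ∈ cone (letter (invLetter x)) := by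
    obtain ⟨s, hs⟩ := hk
    rw [mem_cone_letter_iff, mem_cone_letter_iff, ← hs,
      List.head?_append_of_ne_nil _ (mt FreeGroup.toWord_eq_nil_iff.1 hg1)]
  simp only [Set.mem_preimage, Set.mem_inter_iff, mul_mem_cone_iff hh, same_head]
  refine and_congr_left fun hg => mem_iff_of_norm_lt hmax ?_ ?_
  · have : g.norm ≠ 0 := mt FreeGroup.norm_eq_zero.1 hg1
    rw [FreeGroup.norm, FreeGroup.norm, toWord_mul_of_notMem_cone hh hg, List.length_append]
    exact Nat.lt_add_of_pos_right (Nat.pos_of_ne_zero this)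
  · rw [mem_cone, toWord_mul_of_notMem_cone hh hg,
      toWord_mul_of_notMem_cone hh (mt same_head.1 hg)]
    exact (List.prefix_append_right_inj _).2 hk

theorem totalCrossing_union_cone_le (hmax : ∀ g ∈ splitVertices K, g.norm ≤ h.norm)
    (hh : h.toWord = p ++ [x]) (hw : StarsAreMinimalCuts w) (hK : AlmostInvariant K)
    (hx : h * letter x ∈ K) : totalCrossing w (K ∪ cone h) ≤ totalCrossing w K := by
  have inter_ge : totalCount w x.1 ≤ totalCrossing w (K ∩ cone h) := by
    rw [← totalCrossing_preimage_mul_left w h]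
    refine totalCount_le_of_splitVertices_eq_empty hw
      (splitVertices_preimage_inter_cone hmax hh) ⟨hx, ?_⟩ fun hx' => ?_
    · exact (mul_mem_cone_iff hh).2 (letter_notMem_cone_invLetter x)
    · exact (mul_mem_cone_iff hh).1 hx'.2 (mem_cone_self _)
  have submodular := totalCrossing_union_add_inter_le w hK (almostInvariant_cone h)
  have cone_le := totalCrossing_cone_le w hh
  omega

theorem separatesEnds_union_cone (hmax : ∀ g ∈ splitVertices K, g.norm ≤ h.norm)
    (hh : h.toWord = p ++ [x]) (hx : h * letter x ∈ K) (ha : SeparatesEnds K (letter a)) :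
    SeparatesEnds (K ∪ cone h) (letter a) := by
  filter_upwards [ha, eventually_gt_atTop h.norm] with n ⟨hn, hn'⟩ hlt
  refine ⟨.inl hn, fun hmem => ?_⟩
  rw [← letter_invLetter] at hn' hmem
  have hcone := hmem.resolve_left hn'
  have hxa : x = invLetter a := by
    rw [mem_cone, toWord_letter_pow, hh] at hcone
    exact List.eq_of_mem_replicate (hcone.subset (by simp))
  have step : h * letter x = letter (invLetter a) ^ (h.norm + 1) := by
    rw [pow_succ, ← eq_letter_pow_of_mem_cone hcone, hxa]
  rw [step] at hx
  exact hn' ((mem_iff_of_norm_lt hmax (by simp [FreeGroup.norm, toWord_letter_pow])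
    (letter_pow_mem_cone _ hlt)).2 hx)

theorem exists_splitVertices_ssubset [Finite α] (hw : StarsAreMinimalCuts w)
    (hK : AlmostInvariant K) (ha : SeparatesEnds K (letter a)) (hne : (splitVertices K).Nonempty) :
    ∃ (K' : Set (FreeGroup α)) (a' : α × Bool), AlmostInvariant K' ∧
      SeparatesEnds K' (letter a') ∧ a'.1 = a.1 ∧ splitVertices K' ⊂ splitVertices K ∧
      totalCrossing w K' ≤ totalCrossing w K := by
  obtain ⟨h, hhK, hmax⟩ := Set.exists_max_image _ FreeGroup.norm (finite_splitVertices hK) hne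
  obtain ⟨p, x, hh⟩ : ∃ p x, h.toWord = p ++ [x] := by
    simpa [hhK.1] using List.eq_nil_or_concat' h.toWord
  have ssubset {L : Set (FreeGroup α)} (hL : h ∈ splitVertices L) :
      splitVertices (L ∪ cone h) ⊂ splitVertices L :=
    (splitVertices_union_cone_subset hL).trans_ssubset (Set.sdiff_singleton_ssubset.2 hL)
  by_cases hx : h * letter x ∈ K
  · exact ⟨K ∪ cone h, a, hK.union (almostInvariant_cone h),
      separatesEnds_union_cone hmax hh hx ha, rfl, ssubset hhK,
      totalCrossing_union_cone_le hmax hh hw hK hx⟩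
  · rw [← splitVertices_compl] at hmax hhK
    refine ⟨Kᶜ ∪ cone h, invLetter a, hK.compl.union (almostInvariant_cone h),
      separatesEnds_union_cone hmax hh hx ha.compl, rfl,
      splitVertices_compl K ▸ ssubset hhK, ?_⟩
    exact (totalCrossing_union_cone_le hmax hh hw hK.compl hx).trans_eq (totalCrossing_compl w K)

theorem totalCount_le_totalCrossing [Finite α] (hw : StarsAreMinimalCuts w)
    (hK : AlmostInvariant K) (ha : SeparatesEnds K (letter a)) :
    totalCount w a.1 ≤ totalCrossing w K := by
  induction hn : (splitVertices K).ncard using Nat.strong_induction_on generalizing K a with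
  | _ n ih =>
  rcases (splitVertices K).eq_empty_or_nonempty with hempty | hne
  · obtain ⟨n, ⟨hn, hn'⟩, hn1⟩ := (ha.and (eventually_ge_atTop 1)).exists
    have pow_mem_iff (z : α × Bool) : letter z ^ n ∈ K ↔ letter z ∈ K :=
      mem_iff_of_notMem_splitVertices (by simp [hempty]) (letter_ne_one z)
        (by simpa using letter_pow_mem_cone z hn1)
    rw [← letter_invLetter, pow_mem_iff] at hn'
    exact totalCount_le_of_splitVertices_eq_empty hw hempty ((pow_mem_iff a).1 hn) hn'
  · obtain ⟨K', a', hK', ha', haa', hss, hle⟩ := exists_splitVertices_ssubset hw hK ha hne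
    rw [← haa']
    exact (ih _ (hn ▸ Set.ncard_lt_ncard hss (finite_splitVertices hK)) hK' ha' rfl).trans hle

end Uncrossing

section Minimality

open FreeGroup (of)

theorem exists_perm_forall_ne_zero {n R : Type*} [Fintype n] [DecidableEq n] [CommRing R]
    {M : Matrix n n R} (hM : M.det ≠ 0) : ∃ σ : Equiv.Perm n, ∀ i, M (σ i) i ≠ 0 := by
  contrapose! hM
  rw [Matrix.det_apply]
  refine Finset.sum_eq_zero fun σ _ => ?_
  obtain ⟨i, hi⟩ := hM σ
  exact smul_eq_zero_of_right _ (Finset.prod_eq_zero (Finset.mem_univ i) hi)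

variable {ι α : Type*} [Fintype ι] [DecidableEq α]

theorem toAdd_eq_sum_mul_flux [Fintype α] (f : FreeGroup α →* Multiplicative ℤ) (g : FreeGroup α) :
    (f g).toAdd = ∑ y, (f (of y)).toAdd * flux (cone (letter (y, true))) g := by
  have hom_eq : f = ∏ y, fluxHom (almostInvariant_cone (letter (y, true))) ^ (f (of y)).toAdd := by
    refine FreeGroup.ext_hom _ _ fun x => Multiplicative.toAdd.injective ?_
    simp [MonoidHom.finsetProd_apply, toAdd_prod, toAdd_fluxHom, flux_cone_of]
  conv_lhs => rw [hom_eq]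
  simp [MonoidHom.finsetProd_apply, toAdd_prod, toAdd_fluxHom]

/-- The matrix of the automorphism of `ℤ ^ α` induced by `φ`. -/
noncomputable def fluxMatrix (φ : FreeGroup α ≃* FreeGroup α) : Matrix α α ℤ :=
  Matrix.of fun y x => flux (cone (letter (y, true))) (φ (of x))

theorem fluxMatrix_mul_symm [Fintype α] (φ : FreeGroup α ≃* FreeGroup α) :
    fluxMatrix φ * fluxMatrix φ.symm = 1 := by
  ext y x
  have expand := toAdd_eq_sum_mul_flux
    ((fluxHom (almostInvariant_cone (letter (y, true)))).comp φ.toMonoidHom) (φ.symm (of x))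
  simp only [MonoidHom.comp_apply, MulEquiv.toMonoidHom_eq_coe, MonoidHom.coe_coe,
    MulEquiv.apply_symm_apply, toAdd_fluxHom, flux_cone_of] at expand
  rw [Matrix.mul_apply, Matrix.one_apply]
  simp only [fluxMatrix, Matrix.of_apply, ← expand, eq_comm]

theorem exists_perm_flux_ne_zero [Finite α] (φ : FreeGroup α ≃* FreeGroup α) :
    ∃ σ : Equiv.Perm α, ∀ x, flux (cone (letter (σ x, true))) (φ (of x)) ≠ 0 := by
  cases nonempty_fintype α
  exact exists_perm_forall_ne_zero (M := fluxMatrix φ)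
    (Matrix.det_ne_zero_of_right_inverse (fluxMatrix_mul_symm φ))

variable {w : ι → FreeGroup α} {K : Set (FreeGroup α)} {a : α × Bool}

theorem totalCount_le_of_flux_ne_zero [Finite α] (hw : StarsAreMinimalCuts w)
    (hK : AlmostInvariant K) (ha : flux K (letter a) ≠ 0) :
    totalCount w a.1 ≤ totalCrossing w K := by
  obtain ⟨g, hg⟩ := exists_separatesEnds_of_flux_ne_zero hK (not_isOfFinOrder_letter a) ha
  rw [← totalCrossing_preimage_mul_left w g]
  rcases hg with hg | hg
  · exact totalCount_le_totalCrossing hw (hK.preimage_mul_left g) hg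
  · rw [← letter_invLetter] at hg
    exact totalCount_le_totalCrossing (a := invLetter a) hw (hK.preimage_mul_left g) hg

theorem sum_totalCount [Fintype α] (w : ι → FreeGroup α) :
    ∑ x, totalCount w x = ∑ i, (w i).norm := by
  simp only [totalCount]
  rw [Finset.sum_comm]
  simp only [sum_letterCount]

theorem sum_norm_le_of_starsAreMinimalCuts [Finite α] (hw : StarsAreMinimalCuts w)
    (φ : FreeGroup α ≃* FreeGroup α) : ∑ i, (w i).norm ≤ ∑ i, (φ (w i)).norm := by
  cases nonempty_fintype α
  obtain ⟨σ, hσ⟩ := exists_perm_flux_ne_zero φ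
  have totalCount_le (x : α) : totalCount w x ≤ totalCount (φ ∘ w) (σ x) :=
    calc totalCount w x
        ≤ totalCrossing w (φ ⁻¹' cone (letter (σ x, true))) :=
          totalCount_le_of_flux_ne_zero (a := (x, true)) hw
            ((almostInvariant_cone _).preimage_mulEquiv φ)
            (by rw [flux_preimage_mulEquiv]; exact hσ x)
      _ = totalCrossing (φ ∘ w) (cone (letter (σ x, true))) :=
          Finset.sum_congr rfl fun i _ => crossingNumber_preimage_mulEquiv φ _ (w i)
      _ ≤ totalCount (φ ∘ w) (σ x) :=
          totalCrossing_cone_le (p := []) (x := (σ x, true)) _ rfl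
  calc ∑ i, (w i).norm
      = ∑ x, totalCount w x := (sum_totalCount w).symm
    _ ≤ ∑ x, totalCount (φ ∘ w) (σ x) := Finset.sum_le_sum fun x _ => totalCount_le x
    _ = ∑ x, totalCount (φ ∘ w) x := Equiv.sum_comp σ _
    _ = ∑ i, (φ (w i)).norm := sum_totalCount _

theorem exists_whiteheadInvolution_sum_norm_lt [Finite α] {φ : FreeGroup α ≃* FreeGroup α}
    (hφ : ∑ i, (φ (w i)).norm < ∑ i, (w i).norm) :
    ∃ (A : Set (α × Bool)) (a : α × Bool) (ha : a ∈ A) (ha' : invLetter a ∉ A),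
      ∑ i, (whiteheadInvolution ha ha' (w i)).norm < ∑ i, (w i).norm := by
  contrapose! hφ
  refine sum_norm_le_of_starsAreMinimalCuts (fun A a ha ha' => ?_) φ
  have norm_le := Finset.sum_le_sum fun i (_ : i ∈ Finset.univ) =>
    norm_whiteheadHom_add_letterCount_le A a (w i)
  simp only [Finset.sum_add_distrib] at norm_le
  have := hφ A a ha ha'
  simp only [whiteheadInvolution_apply] at this
  simp only [totalCount, totalCrossing]
  omega

end Minimality

section Descent

open FreeGroup (of)
open Relation (ReflTransGen)

variable {α : Type*} [DecidableEq α] {u v : FreeGroup α} {φ : FreeGroup α ≃* FreeGroup α}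

/-- The automorphisms that send all generators to words of length at most `3`, together with their
inverses; they include the Whitehead involutions. -/
def shortAutomorphisms (α : Type*) [DecidableEq α] : Set (FreeGroup α ≃* FreeGroup α) :=
  {τ | (∀ x, (τ (of x)).norm ≤ 3) ∨ ∀ x, (τ.symm (of x)).norm ≤ 3}

theorem symm_mem_shortAutomorphisms (hφ : φ ∈ shortAutomorphisms α) :
    φ.symm ∈ shortAutomorphisms α :=
  hφ.symm

theorem whiteheadInvolution_mem_shortAutomorphisms {A : Set (α × Bool)} {a : α × Bool}
    (ha : a ∈ A) (ha' : invLetter a ∉ A) : whiteheadInvolution ha ha' ∈ shortAutomorphisms α :=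
  .inl fun x => norm_whiteheadHom_letter_le A a (x, true)

theorem finite_shortAutomorphisms [Finite α] : (shortAutomorphisms α).Finite := by
  have finite_short : {τ : FreeGroup α ≃* FreeGroup α | ∀ x, (τ (of x)).norm ≤ 3}.Finite := by
    have finite_words := Set.Finite.pi' fun _ : α => List.finite_length_le (α × Bool) 3
    refine (finite_words.preimage (f := fun (τ : FreeGroup α ≃* FreeGroup α) x =>
      (τ (of x)).toWord) fun τ _ τ' _ h => ?_).subset fun τ hτ => hτ
    exact MulEquiv.toMonoidHom_injective
      (FreeGroup.ext_hom _ _ fun x => FreeGroup.toWord_injective (congrFun h x))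
  exact finite_short.union
    (finite_short.preimage (f := MulEquiv.symm) MulEquiv.symm_bijective.injective.injOn)

theorem one_le_norm_apply_of (φ : FreeGroup α ≃* FreeGroup α) (x : α) : 1 ≤ (φ (of x)).norm := by
  rw [Nat.one_le_iff_ne_zero, Ne, FreeGroup.norm_eq_zero, EmbeddingLike.map_eq_one_iff]
  exact FreeGroup.of_ne_one x

theorem card_lt_sum_norm_of_notMem [Fintype α] (hφ : φ ∉ shortAutomorphisms α) :
    Fintype.card α < ∑ x, (φ.symm (of x)).norm := by
  obtain ⟨x, hx⟩ : ∃ x, 3 < (φ.symm (of x)).norm := by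
    by_contra! h
    exact hφ (.inr h)
  rw [Fintype.card_eq_sum_ones]
  exact Finset.sum_lt_sum (fun y _ => one_le_norm_apply_of φ.symm y)
    ⟨x, Finset.mem_univ x, by omega⟩

-- Whitehead's descent is applied to the tuple of the `φ⁻¹ x` together with so many copies of `u`
-- that the total length first compares `|u|`.
theorem exists_norm_lt_or_sum_norm_lt [Fintype α] (hφ : φ ∉ shortAutomorphisms α)
    (hu : (φ u).norm ≤ u.norm) :
    ∃ τ ∈ shortAutomorphisms α, (τ u).norm < u.norm ∨ (τ u).norm = u.norm ∧
      ∑ x, (τ (φ.symm (of x))).norm < ∑ x, (φ.symm (of x)).norm := by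
  set c := ∑ x, (φ.symm (of x)).norm
  let w : Fin (c + 1) ⊕ α → FreeGroup α := Sum.elim (fun _ => u) fun x => φ.symm (of x)
  have sum_w (τ : FreeGroup α ≃* FreeGroup α) : ∑ i, (τ (w i)).norm =
      (c + 1) * (τ u).norm + ∑ x, (τ (φ.symm (of x))).norm := by
    simp [w, Fintype.sum_sum_type]
  have sum_φ : ∑ i, (φ (w i)).norm = (c + 1) * (φ u).norm + Fintype.card α := by
    simp [sum_w]
  have sum_one : ∑ i, (w i).norm = (c + 1) * u.norm + c := sum_w (MulEquiv.refl _)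
  have sum_φ_lt : ∑ i, (φ (w i)).norm < ∑ i, (w i).norm := by
    rw [sum_φ, sum_one]
    exact add_lt_add_of_le_of_lt (Nat.mul_le_mul_left _ hu) (card_lt_sum_norm_of_notMem hφ)
  obtain ⟨A, a, ha, ha', hlt⟩ := exists_whiteheadInvolution_sum_norm_lt sum_φ_lt
  refine ⟨_, whiteheadInvolution_mem_shortAutomorphisms ha ha', ?_⟩
  rw [sum_w, sum_one] at hlt
  have norm_le : (whiteheadInvolution ha ha' u).norm ≤ u.norm :=
    Nat.le_of_lt_succ (Nat.lt_of_mul_lt_mul_left (a := c + 1) (by rw [Nat.mul_succ]; omega))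
  refine norm_le.lt_or_eq.imp_right fun heq => ⟨heq, ?_⟩
  rw [heq] at hlt
  omega

/-- `u` and `v` have length at most `N` and some short automorphism sends `u` to `v`. -/
def ShortStep (N : ℕ) (u v : FreeGroup α) : Prop :=
  u.norm ≤ N ∧ v.norm ≤ N ∧ ∃ τ ∈ shortAutomorphisms α, τ u = v

instance symm_shortStep (N : ℕ) : Std.Symm (ShortStep (α := α) N) where
  symm u _ := by
    rintro ⟨hu, hv, τ, hτ, rfl⟩
    exact ⟨hv, hu, τ.symm, symm_mem_shortAutomorphisms hτ, τ.symm_apply_apply u⟩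

theorem reflTransGen_shortStep_mono {M N : ℕ} (hMN : M ≤ N)
    (h : ReflTransGen (ShortStep M) u v) : ReflTransGen (ShortStep N) u v :=
  ReflTransGen.mono (fun _ _ h => ⟨h.1.trans hMN, h.2.1.trans hMN, h.2.2⟩) _ _ h

theorem reflTransGen_shortStep_of_minimal [Finite α]
    (hmin : ∀ ψ : FreeGroup α ≃* FreeGroup α, (φ u).norm ≤ (ψ u).norm) :
    ReflTransGen (ShortStep u.norm) u (φ u) := by
  cases nonempty_fintype α
  induction hm : toLex (u.norm, ∑ x, (φ.symm (of x)).norm) using WellFoundedLT.induction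
    generalizing u φ with
  | _ m ih =>
  subst hm
  have hu : (φ u).norm ≤ u.norm := hmin (MulEquiv.refl _)
  by_cases hφ : φ ∈ shortAutomorphisms α
  · exact .single ⟨le_rfl, hu, φ, hφ, rfl⟩
  · obtain ⟨τ, hτ, hlt⟩ := exists_norm_lt_or_sum_norm_lt hφ hu
    have norm_le : (τ u).norm ≤ u.norm := hlt.elim le_of_lt fun h => h.1.le
    have tail := ih (toLex ((τ u).norm, ∑ x, (τ (φ.symm (of x))).norm)) (Prod.Lex.lt_iff.2 hlt)
      (φ := τ.symm.trans φ) (fun ψ => by simpa using hmin (τ.trans ψ)) rfl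
    rw [MulEquiv.trans_apply, MulEquiv.symm_apply_apply] at tail
    exact .head ⟨le_rfl, norm_le, τ, hτ, rfl⟩ (reflTransGen_shortStep_mono norm_le tail)

theorem reflTransGen_shortStep_apply [Finite α] {N : ℕ} (φ : FreeGroup α ≃* FreeGroup α)
    (hu : u.norm ≤ N) (hφu : (φ u).norm ≤ N) : ReflTransGen (ShortStep N) u (φ u) := by
  obtain ⟨ψ, hψ⟩ : ∃ ψ : FreeGroup α ≃* FreeGroup α, ∀ ψ' : FreeGroup α ≃* FreeGroup α,
      (ψ u).norm ≤ (ψ' u).norm :=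
    ⟨_, fun _ => Function.argmin_le (fun ψ : FreeGroup α ≃* FreeGroup α => (ψ u).norm) _⟩
  have from_u := reflTransGen_shortStep_of_minimal hψ
  have from_φu := reflTransGen_shortStep_of_minimal (u := φ u) (φ := φ.symm.trans ψ) fun ψ' => by
    simpa using hψ (φ.trans ψ')
  rw [MulEquiv.trans_apply, MulEquiv.symm_apply_apply] at from_φu
  exact (reflTransGen_shortStep_mono hu from_u).trans
    (symm (reflTransGen_shortStep_mono hφu from_φu))

end Descent

section Computability

open Relation (ReflTransGen)

section ListClosure

variable {V : Type*} {s : V → List V} {u v : V}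

theorem reflTransGen_mem_iff_exists_iterate :
    ReflTransGen (fun x y => y ∈ s x) u v ↔ ∃ n, v ∈ (List.flatMap s)^[n] [u] := by
  constructor
  · intro h
    induction h with
    | refl => exact ⟨0, List.mem_singleton_self u⟩
    | tail _ hstep ih =>
      obtain ⟨n, hn⟩ := ih
      refine ⟨n + 1, ?_⟩
      rw [Function.iterate_succ_apply']
      exact List.mem_flatMap.2 ⟨_, hn, hstep⟩
  · rintro ⟨n, hn⟩
    induction n generalizing v with
    | zero => rw [List.mem_singleton.1 hn]
    | succ n ih =>
      rw [Function.iterate_succ_apply'] at hn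
      obtain ⟨x, hx, hxv⟩ := List.mem_flatMap.1 hn
      exact (ih hx).tail hxv

theorem not_reflTransGen_mem_iff_exists_list
    (hfin : {y | ReflTransGen (fun x y => y ∈ s x) u y}.Finite) :
    ¬ReflTransGen (fun x y => y ∈ s x) u v ↔
      ∃ L : List V, u ∈ L ∧ v ∉ L ∧ ∀ y ∈ L.flatMap s, y ∈ L := by
  constructor
  · intro hv
    have mem_iff (y : V) : y ∈ hfin.toFinset.toList ↔ ReflTransGen (fun x y => y ∈ s x) u y := by
      simp
    refine ⟨hfin.toFinset.toList, (mem_iff u).2 .refl, mt (mem_iff v).1 hv, fun y hy => ?_⟩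
    obtain ⟨x, hx, hxy⟩ := List.mem_flatMap.1 hy
    exact (mem_iff y).2 (((mem_iff x).1 hx).tail hxy)
  · rintro ⟨L, hu, hv, hL⟩ h
    suffices ∀ y, ReflTransGen (fun x y => y ∈ s x) u y → y ∈ L from hv (this v h)
    intro y hy
    induction hy with
    | refl => exact hu
    | tail _ hstep ih => exact hL _ (List.mem_flatMap.2 ⟨_, ih, hstep⟩)

end ListClosure

variable {β V : Type*} [Primcodable β] [Primcodable V]

theorem rePred_exists {q : β → V → Prop} (hq : PrimrecRel q) : REPred fun b => ∃ v, q b v := by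
  classical
  let test (b : β) (n : ℕ) : Bool := (Encodable.decode (α := V) n).casesOn false (q b ·)
  have primrec_test : Primrec₂ test :=
    Primrec.option_casesOn (Primrec.decode.comp Primrec.snd) (Primrec.const false)
      (hq.decide.comp (Primrec.fst.comp Primrec.fst) Primrec.snd)
  have partrec_search : Partrec fun b => Nat.rfind fun n => Part.some (test b n) :=
    Partrec.rfind primrec_test.to_comp.partrec
  refine partrec_search.dom_re.of_eq fun b => Nat.rfind_dom.trans ⟨?_, ?_⟩
  · rintro ⟨n, hn, -⟩
    replace hn : test b n = true := (Part.mem_some_iff.1 hn).symm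
    cases hd : Encodable.decode (α := V) n with
    | none => simp [test, hd] at hn
    | some v => exact ⟨v, by simpa [test, hd] using hn⟩
  · rintro ⟨v, hv⟩
    exact ⟨Encodable.encode v, by simp [test, hv], fun _ => trivial⟩

theorem primrecRel_list_mem : PrimrecRel fun (v : V) (L : List V) => v ∈ L := by
  have exists_eq : PrimrecRel fun (L : List V) v => ∃ a ∈ L, a = v :=
    PrimrecRel.exists_mem_list Primrec.eq
  exact (exists_eq.comp Primrec.snd Primrec.fst).of_eq fun p => by simp

theorem primrec_map_of_forall {ι W : Type*} [Primcodable W] {f : ι → V → W}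
    (hf : ∀ i, Primrec (f i)) (T : List ι) : Primrec fun v => T.map (f · v) := by
  induction T with
  | nil => exact Primrec.const []
  | cons i T ih => exact Primrec.list_cons.comp (hf i) ih

variable {s : β → V → List V}

theorem rePred_reflTransGen (hs : Primrec₂ s) :
    REPred fun p : β × V × V => ReflTransGen (fun x y => y ∈ s p.1 x) p.2.1 p.2.2 := by
  have primrec_start : Primrec fun q : (β × V × V) × ℕ => [q.1.2.1] :=
    Primrec.list_cons.comp (Primrec.fst.comp (Primrec.snd.comp Primrec.fst)) (Primrec.const [])
  have primrec_step : Primrec₂ fun (q : (β × V × V) × ℕ) (L : List V) => L.flatMap (s q.1.1) :=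
    Primrec.list_flatMap Primrec.snd
      (hs.comp (Primrec.fst.comp (Primrec.fst.comp (Primrec.fst.comp Primrec.fst))) Primrec.snd)
  have primrec_iterate : Primrec₂ fun (p : β × V × V) (n : ℕ) =>
      (List.flatMap (s p.1))^[n] [p.2.1] :=
    Primrec.nat_iterate Primrec.snd primrec_start primrec_step
  have primrecRel_mem : PrimrecRel fun (p : β × V × V) (n : ℕ) =>
      p.2.2 ∈ (List.flatMap (s p.1))^[n] [p.2.1] :=
    primrecRel_list_mem.comp (Primrec.snd.comp (Primrec.snd.comp Primrec.fst)) primrec_iterate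
  exact (rePred_exists primrecRel_mem).of_eq fun p => reflTransGen_mem_iff_exists_iterate.symm

theorem rePred_not_reflTransGen (hs : Primrec₂ s)
    (hfin : ∀ b u, {v | ReflTransGen (fun x y => y ∈ s b x) u v}.Finite) :
    REPred fun p : β × V × V => ¬ReflTransGen (fun x y => y ∈ s p.1 x) p.2.1 p.2.2 := by
  have primrecRel_closed : PrimrecRel fun (p : β × V × V) (L : List V) =>
      p.2.1 ∈ L ∧ p.2.2 ∉ L ∧ ∀ y ∈ L.flatMap (s p.1), y ∈ L := by
    refine .and ?_ (.and (.not ?_) ?_)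
    · exact primrecRel_list_mem.comp (Primrec.fst.comp (Primrec.snd.comp Primrec.fst)) Primrec.snd
    · exact primrecRel_list_mem.comp (Primrec.snd.comp (Primrec.snd.comp Primrec.fst)) Primrec.snd
    · refine primrecRel_list_mem.forall_mem_list.comp (Primrec.list_flatMap Primrec.snd ?_)
        Primrec.snd
      exact hs.comp (Primrec.fst.comp (Primrec.fst.comp Primrec.fst)) Primrec.snd
  exact (rePred_exists primrecRel_closed).of_eq fun p =>
    (not_reflTransGen_mem_iff_exists_list (hfin p.1 p.2.1)).symm

theorem computablePred_reflTransGen (hs : Primrec₂ s)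
    (hfin : ∀ b u, {v | ReflTransGen (fun x y => y ∈ s b x) u v}.Finite) :
    ComputablePred fun p : β × V × V => ReflTransGen (fun x y => y ∈ s p.1 x) p.2.1 p.2.2 :=
  ComputablePred.computable_iff_re_compl_re'.2
    ⟨rePred_reflTransGen hs, rePred_not_reflTransGen hs hfin⟩

end Computability

section WordMoves

open FreeGroup (mk reduce mk_toWord toWord_mk)
open Relation (ReflTransGen)

variable {α : Type*} [DecidableEq α]

/-- Prepending the letter `z` to a reduced word, with cancellation. -/
def consReduce (z : α × Bool) (l : List (α × Bool)) : List (α × Bool) :=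
  l.casesOn [z] fun y t => if z.1 = y.1 ∧ z.2 = !y.2 then t else z :: y :: t

theorem reduce_eq_foldr (l : List (α × Bool)) : reduce l = l.foldr consReduce [] := by
  induction l with
  | nil => rfl
  | cons z l ih => rw [List.foldr_cons, ← ih, FreeGroup.reduce.cons, consReduce]

theorem toWord_apply_mk (τ : FreeGroup α ≃* FreeGroup α) (l : List (α × Bool)) :
    (τ (mk l)).toWord = reduce (l.flatMap fun z => (τ (letter z)).toWord) := by
  rw [← toWord_mk]
  congr 1
  induction l with
  | nil => rw [← FreeGroup.one_eq_mk, map_one]; rfl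
  | cons z l ih =>
    rw [List.flatMap_cons, ← FreeGroup.mul_mk, mk_toWord, ← ih, mk_cons, map_mul]

/-- The reduced words of length at most `N` obtained from the word `l` by applying one of the
automorphisms in `T`. -/
def boundedImages (T : List (FreeGroup α ≃* FreeGroup α)) (N : ℕ) (l : List (α × Bool)) :
    List (List (α × Bool)) :=
  (T.map fun τ => (τ (mk l)).toWord).filter (·.length ≤ N)

variable {T : List (FreeGroup α ≃* FreeGroup α)} {N : ℕ} {l m : List (α × Bool)}

theorem mem_boundedImages :
    m ∈ boundedImages T N l ↔ (∃ τ ∈ T, (τ (mk l)).toWord = m) ∧ m.length ≤ N := by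
  simp [boundedImages]

theorem finite_setOf_reflTransGen_boundedImages [Finite α]
    (T : List (FreeGroup α ≃* FreeGroup α)) (N : ℕ) (l : List (α × Bool)) :
    {m | ReflTransGen (fun x y => y ∈ boundedImages T N x) l m}.Finite := by
  refine ((List.finite_length_le (α × Bool) N).insert l).subset fun m hm => ?_
  rcases ReflTransGen.cases_tail hm with rfl | ⟨k, -, hkm⟩
  · exact .inl rfl
  · exact .inr (mem_boundedImages.1 hkm).2

theorem exists_apply_eq_of_reflTransGen_boundedImages
    (h : ReflTransGen (fun x y => y ∈ boundedImages T N x) l m) :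
    ∃ φ : FreeGroup α ≃* FreeGroup α, φ (mk l) = mk m := by
  induction h with
  | refl => exact ⟨MulEquiv.refl _, rfl⟩
  | tail _ hstep ih =>
    obtain ⟨φ, hφ⟩ := ih
    obtain ⟨⟨τ, -, rfl⟩, -⟩ := mem_boundedImages.1 hstep
    exact ⟨φ.trans τ, by rw [MulEquiv.trans_apply, hφ, mk_toWord]⟩

theorem reflTransGen_boundedImages_of_shortStep (hT : ∀ τ ∈ shortAutomorphisms α, τ ∈ T)
    {u v : FreeGroup α} (h : ReflTransGen (ShortStep N) u v) :
    ReflTransGen (fun x y => y ∈ boundedImages T N x) u.toWord v.toWord := by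
  refine h.lift FreeGroup.toWord fun x y ⟨_, hy, τ, hτ, hxy⟩ => mem_boundedImages.2 ⟨?_, hy⟩
  exact ⟨τ, hT τ hτ, by rw [mk_toWord, hxy]⟩

theorem exists_apply_mk_eq_iff [Finite α] (hT : ∀ τ ∈ shortAutomorphisms α, τ ∈ T)
    (l m : List (α × Bool)) :
    (∃ φ : FreeGroup α ≃* FreeGroup α, φ (mk l) = mk m) ↔
      ReflTransGen (fun x y => y ∈ boundedImages T (l.length + m.length) x)
        (reduce l) (reduce m) := by
  constructor
  · rintro ⟨φ, hφ⟩
    have hl : (mk l).norm ≤ l.length + m.length := FreeGroup.norm_mk_le.trans (by omega)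
    have hm : (mk m).norm ≤ l.length + m.length := FreeGroup.norm_mk_le.trans (by omega)
    rw [← toWord_mk, ← toWord_mk, ← hφ]
    rw [← hφ] at hm
    exact reflTransGen_boundedImages_of_shortStep hT (reflTransGen_shortStep_apply φ hl hm)
  · intro h
    simpa only [FreeGroup.reduce.self] using exists_apply_eq_of_reflTransGen_boundedImages h

variable [Primcodable α]

theorem primrec_consReduce : Primrec₂ (consReduce : α × Bool → _ → _) := by
  have primrec_z : Primrec fun p : ((α × Bool) × List (α × Bool)) × (α × Bool) × List (α × Bool) =>
      p.1.1 := Primrec.fst.comp Primrec.fst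
  have primrec_y : Primrec fun p : ((α × Bool) × List (α × Bool)) × (α × Bool) × List (α × Bool) =>
      p.2.1 := Primrec.fst.comp Primrec.snd
  have primrec_t : Primrec fun p : ((α × Bool) × List (α × Bool)) × (α × Bool) × List (α × Bool) =>
      p.2.2 := Primrec.snd.comp Primrec.snd
  have cancels : PrimrecPred fun p : ((α × Bool) × List (α × Bool)) × (α × Bool) ×
      List (α × Bool) => p.1.1.1 = p.2.1.1 ∧ p.1.1.2 = !p.2.1.2 :=
    .and (Primrec.eq.comp (Primrec.fst.comp primrec_z) (Primrec.fst.comp primrec_y))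
      (Primrec.eq.comp (Primrec.snd.comp primrec_z) (Primrec.not.comp (Primrec.snd.comp primrec_y)))
  exact Primrec.list_casesOn Primrec.snd (Primrec.list_cons.comp Primrec.fst (Primrec.const []))
    (Primrec.ite cancels primrec_t
      (Primrec.list_cons.comp primrec_z (Primrec.list_cons.comp primrec_y primrec_t))).to₂

theorem primrec_reduce : Primrec (reduce : List (α × Bool) → List (α × Bool)) :=
  (Primrec.list_foldr Primrec.id (Primrec.const [])
    (primrec_consReduce.comp (Primrec.fst.comp Primrec.snd)
      (Primrec.snd.comp Primrec.snd)).to₂).of_eq fun l => (reduce_eq_foldr l).symm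

theorem primrec_toWord_apply_mk [Finite α] (τ : FreeGroup α ≃* FreeGroup α) :
    Primrec fun l => (τ (mk l)).toWord := by
  have primrec_letter : Primrec fun z => (τ (letter z)).toWord := Primrec.dom_finite _
  exact (primrec_reduce.comp (Primrec.list_flatMap Primrec.id
    (primrec_letter.comp₂ Primrec₂.right))).of_eq fun l => (toWord_apply_mk τ l).symm

theorem primrec_boundedImages [Finite α] (T : List (FreeGroup α ≃* FreeGroup α)) :
    Primrec₂ (boundedImages T) := by
  have primrecRel_length_le : PrimrecRel fun (l : List (α × Bool)) (N : ℕ) => l.length ≤ N :=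
    Primrec.nat_le.comp (Primrec.list_length.comp Primrec.fst) Primrec.snd
  exact primrecRel_length_le.listFilter.comp
    ((primrec_map_of_forall primrec_toWord_apply_mk T).comp Primrec.snd) Primrec.fst

end WordMoves

end Whitehead

open Whitehead in
theorem whitehead_automorphism_problem_decidable_general {α : Type*} [Finite α] [Primcodable α] :
    ComputablePred fun p : List (α × Bool) × List (α × Bool) =>
      ∃ φ : FreeGroup α ≃* FreeGroup α, φ (FreeGroup.mk p.1) = FreeGroup.mk p.2 := by
  classical
  obtain ⟨T, hT⟩ : ∃ T : List (FreeGroup α ≃* FreeGroup α), ∀ τ ∈ shortAutomorphisms α, τ ∈ T :=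
    ⟨finite_shortAutomorphisms.toFinset.toList, by simp⟩
  have reachability := computablePred_reflTransGen (primrec_boundedImages T)
    (finite_setOf_reflTransGen_boundedImages T)
  have reduction : Primrec fun p : List (α × Bool) × List (α × Bool) =>
      (p.1.length + p.2.length, FreeGroup.reduce p.1, FreeGroup.reduce p.2) :=
    .pair (Primrec.nat_add.comp (Primrec.list_length.comp Primrec.fst)
        (Primrec.list_length.comp Primrec.snd))
      (.pair (primrec_reduce.comp Primrec.fst) (primrec_reduce.comp Primrec.snd))
  exact ComputablePred.computable_of_manyOneReducible
    ⟨_, reduction.to_comp, fun p => exists_apply_mk_eq_iff hT p.1 p.2⟩ reachability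

/-- (Whitehead) The automorphism problem in a free group of finite rank is
decidable. -/
theorem whitehead_automorphism_problem_decidable (r : ℕ) :
    ComputablePred (fun p : List (Fin r × Bool) × List (Fin r × Bool) =>
      ∃ φ : FreeGroup (Fin r) ≃* FreeGroup (Fin r),
        φ (FreeGroup.mk p.1) = FreeGroup.mk p.2) :=
  whitehead_automorphism_problem_decidable_general
end
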